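/- arXiv:1608.04183 — 3 statements merged into one kernel-verified Lean document; each statement's English description precedes it below -/
import Mathlib

section
/- Fix a prime p and an integer n ≥ 1, set e_n = p^n − 1, and fix an algebraic closure Ω of ℚ_p. Let K ⊆ Ω be a finite extension of ℚ_p, let K_n = K(ζ) where ζ ∈ Ω is a primitive e_n-th root of unity, and let L_n ⊆ Ω be the field generated over K_n by all x ∈ Ω with x^{e_n} ∈ K_n. Let M ⊆ Ω be a finite Galois extension of K containing L_n such that Gal(M / L_n) is abelian of order p^n with every element of order dividing p, and such that the only subgroups of Gal(M / L_n) that are normal in Gal(M / K) are the trivial subgroup and Gal(M / L_n) itself. Then there exists a primitive extension E ⊆ Ω of K with [E : K] = p^n and E·L_n = M. -/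
/-!
Let `G = Gal(M/K)`. By Galois correspondence the field `E` is the fixed field of a complement of the
minimal normal subgroup `S = Gal(M/L_n)`; a complement of a commutative minimal normal subgroup is
automatically maximal, so `E/K` is primitive.

Kummer theory shows that `S` has index prime to `p` in `A = Gal(M/K_n)`, and `G/A` is commutative
because `K_n/K` is cyclotomic. Let `D ≥ A` be the normal subgroup for which `D/A` is the largest
subgroup of `G/A` of order prime to `p`; then `S` has index prime to `p` in `D`, while `G/D` is a
`p`-group.

By minimality `C_S(D)` is trivial or equal to `S`. If it is trivial, the complements of `S` in `D`
form a single orbit under conjugation by `S` (Schur-Zassenhaus), on which `S` acts freely, so the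
normalizer in `G` of one of them is a complement of `S`. If it is `S`, then the `p`-group `G/D` acts
on `S` with a nontrivial fixed point, so by minimality `S` is central, hence of order `p`. The index
of `A` is at most `|S| - 1 = p - 1`, so the index of `S` in `G` is prime to `p` and
Schur-Zassenhaus applies directly.
-/

section GroupTheory

open MulAction Subgroup
open scoped Pointwise IsMulCommutative

variable {G : Type*} [Group G]

theorem isCoatom_of_isComplement' {S H : Subgroup G} [S.Normal] [IsMulCommutative S]
    (hS_ne : S ≠ ⊥) (hmin : ∀ N : Subgroup G, N ≤ S → N.Normal → N = ⊥ ∨ N = S)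
    (hH : S.IsComplement' H) : IsCoatom H := by
  refine ⟨fun hH_top ↦ hS_ne (isComplement'_top_right.mp (hH_top ▸ hH)), fun J hHJ ↦ ?_⟩
  have hJ : J ≤ normalizer (S ⊓ J : Subgroup G) := le_normalizer_iff.mpr fun j hj k hk ↦
    ⟨Normal.conj_mem ‹_› k hk.1 j, J.mul_mem (J.mul_mem hj hk.2) (J.inv_mem hj)⟩
  have hS : S ≤ normalizer (S ⊓ J : Subgroup G) :=
    (le_centralizer S).trans ((centralizer_le inf_le_left).trans (centralizer_le_normalizer _))
  have hnormal : (S ⊓ J).Normal :=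
    normalizer_eq_top_iff.mp (top_le_iff.mp (hH.sup_eq_top ▸ sup_le hS (hHJ.le.trans hJ)))
  rcases hmin _ inf_le_left hnormal with h | h
  · refine absurd (fun j hj ↦ ?_) hHJ.not_ge
    obtain ⟨⟨s, x⟩, rfl⟩ := hH.surjective j
    have hsJ : (s : G) ∈ J := (mul_mem_cancel_right (hHJ.le x.2)).mp hj
    have hs : (s : G) = 1 := mem_bot.mp (h ▸ ⟨s.2, hsJ⟩)
    simp only [hs, one_mul, SetLike.coe_mem]
  · exact top_le_iff.mp (hH.sup_eq_top ▸ sup_le (inf_eq_left.mp h) hHJ.le)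

theorem mem_center_of_conj_smul_eq {S B : Subgroup G} [S.Normal] [IsMulCommutative S]
    (hB : S.IsComplement' B) {s : G} (hs : s ∈ S) (hsB : MulAut.conj s • B = B) :
    s ∈ center G := by
  have hSs : S ≤ centralizer {s} := fun t ht ↦
    mem_centralizer_singleton_iff.mpr (setLike_mul_comm ht hs)
  have hBs : B ≤ centralizer {s} := fun b hb ↦ by
    have hconj : s * b * s⁻¹ ∈ B := hsB ▸ smul_mem_pointwise_smul b (MulAut.conj s) B hb
    have hcomm : s * b * s⁻¹ * b⁻¹ ∈ S := by
      simpa only [mul_assoc] using mul_mem hs (Normal.conj_mem ‹_› s⁻¹ (inv_mem hs) b)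
    have := disjoint_def.mp hB.disjoint hcomm (mul_mem hconj (inv_mem hb))
    exact mem_centralizer_singleton_iff.mpr
      (mul_inv_eq_iff_eq_mul.mp (mul_inv_eq_one.mp this)).symm
  refine mem_center_iff.mpr fun g ↦ mem_centralizer_singleton_iff.mp ?_
  exact sup_le hSs hBs (hB.sup_eq_top ▸ mem_top g)

variable [Finite G]

theorem coprime_relIndex_of_pow_mem {S A : Subgroup G} [S.Normal] {m k : ℕ}
    (hA : ∀ a ∈ A, a ^ k ∈ S) (hmk : m.Coprime k) : m.Coprime (S.relIndex A) := by
  refine Nat.Coprime.symm (Nat.coprime_of_dvd fun q hq hqA hqm ↦ ?_)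
  have := Fact.mk hq
  obtain ⟨x, hx⟩ := exists_prime_orderOf_dvd_card' (G := A ⧸ S.subgroupOf A) q hqA
  obtain ⟨a, rfl⟩ := QuotientGroup.mk_surjective x
  have ha : (QuotientGroup.mk a : A ⧸ S.subgroupOf A) ^ k = 1 :=
    (QuotientGroup.eq_one_iff _).mpr (hA a a.2)
  exact Nat.not_coprime_of_dvd_of_dvd hq.one_lt hqm (hx ▸ orderOf_dvd_of_pow_eq_one ha) hmk

theorem exists_stabilizer_eq_of_isComplement' {S B : Subgroup G} [S.Normal] [IsMulCommutative S]
    (hco : (Nat.card S).Coprime S.index) (hB : S.IsComplement' B) :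
    ∃ α : S.QuotientDiff, stabilizer G α = B := by
  let α : S.QuotientDiff := Quotient.mk'' ⟨B, hB.symm⟩
  have hBα : B ≤ stabilizer G α := fun b hb ↦
    congrArg Quotient.mk'' <| Subtype.ext <| op_smul_coe_set (inv_mem hb)
  have hα : S.IsComplement' (stabilizer G α) := isComplement'_stabilizer_of_coprime hco
  refine ⟨α, (eq_of_le_of_card_ge hBα ?_).symm⟩
  rw [← hα.symm.index_eq_card, hB.symm.index_eq_card]

theorem exists_conj_smul_eq_of_isComplement' {S B C : Subgroup G} [S.Normal] [IsMulCommutative S]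
    (hco : (Nat.card S).Coprime S.index) (hB : S.IsComplement' B) (hC : S.IsComplement' C) :
    ∃ s : S, MulAut.conj (s : G) • B = C := by
  obtain ⟨α, rfl⟩ := exists_stabilizer_eq_of_isComplement' hco hB
  obtain ⟨β, rfl⟩ := exists_stabilizer_eq_of_isComplement' hco hC
  obtain ⟨s, rfl⟩ := exists_smul_eq hco α β
  exact ⟨s, (stabilizer_smul_eq_stabilizer_map_conj (s : G) α).symm⟩

theorem exists_isComplement'_of_inf_centralizer_eq_bot {S D : Subgroup G} [S.Normal] [D.Normal]
    [IsMulCommutative S] (hSD : S ≤ D) (hco : (Nat.card S).Coprime (S.relIndex D))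
    (hcent : S ⊓ centralizer (D : Set G) = ⊥) : ∃ H : Subgroup G, S.IsComplement' H := by
  have hcard : Nat.card (S.subgroupOf D) = Nat.card S :=
    Nat.card_congr (subgroupOfEquivOfLe hSD).toEquiv
  have hco' : (Nat.card (S.subgroupOf D)).Coprime (S.subgroupOf D).index := hcard ▸ hco
  obtain ⟨B, hB⟩ := exists_right_complement'_of_coprime hco'
  let _ : MulAction G (Subgroup D) := MulAction.compHom _ (MulAut.conjNormal (H := D))
  have hsmul (d : D) (C : Subgroup D) : (d : G) • C = MulAut.conj d • C :=
    congrArg (fun φ : MulAut D ↦ φ • C) MulAut.conjNormal_val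
  refine ⟨stabilizer G B, isComplement'_stabilizer B (fun s hs ↦ ?_) fun g ↦ ?_⟩
  · have hsD : (⟨s, hSD s.2⟩ : D) ∈ center D :=
      mem_center_of_conj_smul_eq hB (mem_subgroupOf.mpr s.2) ((hsmul _ B).symm.trans hs)
    have : (s : G) ∈ S ⊓ centralizer (D : Set G) :=
      ⟨s.2, fun d hd ↦ congrArg Subtype.val (mem_center_iff.mp hsD ⟨d, hd⟩)⟩
    simpa only [hcent, mem_bot, OneMemClass.coe_eq_one] using this
  · have hgB : Nat.card ↥(g • B) = Nat.card B :=
      (Nat.card_congr (equivSMul (MulAut.conjNormal g : MulAut D) B).toEquiv).symm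
    have hgBS : (S.subgroupOf D).IsComplement' (g • B) :=
      isComplement'_of_coprime (by rw [hgB, hB.card_mul_card])
        (by rwa [hgB, ← hB.symm.index_eq_card])
    obtain ⟨s, hs⟩ := exists_conj_smul_eq_of_isComplement' hco' hgBS hB
    exact ⟨⟨s, mem_subgroupOf.mp s.2⟩, (hsmul _ _).trans hs⟩

theorem exists_coprime_card_and_index_eq_pow (p : ℕ) [Fact p.Prime] (Q : Type*) [Group Q]
    [Finite Q] [IsMulCommutative Q] :
    ∃ N : Subgroup Q, p.Coprime (Nat.card N) ∧ ∃ k, N.index = p ^ k := by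
  have P : Sylow p Q := default
  obtain ⟨k, hk⟩ := IsPGroup.iff_card.mp P.isPGroup'
  obtain ⟨N, hN⟩ := exists_right_complement'_of_coprime P.card_coprime_index
  refine ⟨N, ?_, k, by rw [hN.index_eq_card, hk]⟩
  rw [← hN.symm.index_eq_card]
  exact (Nat.Prime.coprime_iff_not_dvd Fact.out).mpr P.not_dvd_index

theorem inf_center_ne_bot {p : ℕ} [Fact p.Prime] {S D : Subgroup G} [S.Normal]
    (hS : IsPGroup p S) (hS_ne : S ≠ ⊥) (hD : D ≤ centralizer (S : Set G)) {k : ℕ}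
    (hk : D.index = p ^ k) : S ⊓ center G ≠ ⊥ := by
  have P : Sylow p G := default
  let _ : MulAction P S := 
    MulAction.compHom S ((MulAut.conjNormal (H := S)).comp (P : Subgroup G).subtype)
  have hpS : p ∣ Nat.card S := by
    obtain ⟨n, hn⟩ := IsPGroup.iff_card.mp hS
    refine hn ▸ dvd_pow_self p fun h0 ↦ hS_ne (card_eq_one.mp ?_)
    rw [hn, h0, pow_zero]
  obtain ⟨s, hsP, hs⟩ := P.isPGroup'.exists_fixed_point_of_prime_dvd_card_of_fixed_point S hpS
    (a := 1) fun g ↦ map_one (MulAut.conjNormal (g : G))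
  have hPs : P ≤ centralizer {(s : G)} := fun g hg ↦
    mem_centralizer_singleton_iff.mpr <| mul_inv_eq_iff_eq_mul.mp <|
      congrArg Subtype.val (hsP ⟨g, hg⟩)
  have hDs : D ≤ centralizer {(s : G)} :=
    hD.trans (centralizer_le (Set.singleton_subset_iff.mpr s.2))
  have htop : centralizer {(s : G)} = ⊤ := by
    refine index_eq_one.mp (Nat.eq_one_of_dvd_coprimes ?_ (index_dvd_of_le hDs)
      (index_dvd_of_le hPs))
    rw [hk]
    exact Nat.Coprime.pow_left k ((Nat.Prime.coprime_iff_not_dvd Fact.out).mpr P.not_dvd_index)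
  have hsc : (s : G) ∈ center G := by
    rwa [centralizer_eq_top_iff_subset, Set.singleton_subset_iff] at htop
  exact fun h ↦ hs (Subtype.ext (mem_bot.mp (h ▸ ⟨s.2, hsc⟩)).symm)

theorem exists_isComplement'_of_not_le_center {Q : Type*} [Group Q] [Finite Q]
    [IsMulCommutative Q] (f : G →* Q) {p : ℕ} [Fact p.Prime] {S : Subgroup G} [S.Normal]
    [IsMulCommutative S] (hS : IsPGroup p S) (hSf : S ≤ f.ker) (hco : p.Coprime (S.relIndex f.ker))
    (hmin : ∀ H : Subgroup G, H ≤ S → H.Normal → H = ⊥ ∨ H = S) (hSc : ¬ S ≤ center G) :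
    ∃ H : Subgroup G, S.IsComplement' H := by
  obtain ⟨N, hN, k, hk⟩ := exists_coprime_card_and_index_eq_pow p Q
  have hfD : f.ker ≤ N.comap f := f.ker_le_comap N
  have hcoD : (Nat.card S).Coprime (S.relIndex (N.comap f)) := by
    obtain ⟨n, hn⟩ := IsPGroup.iff_card.mp hS
    have hker : f.ker.relIndex (N.comap f) ∣ Nat.card N := by
      rw [← MonoidHom.comap_bot, relIndex_comap, relIndex_bot_left]
      exact card_dvd_of_le (map_comap_le f N)
    rw [hn, ← relIndex_mul_relIndex _ _ _ hSf hfD]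
    exact Nat.Coprime.pow_left n (hco.mul_right (hN.coprime_dvd_right hker))
  rcases hmin (S ⊓ centralizer (N.comap f : Set G)) inf_le_left inferInstance with h | h
  · exact exists_isComplement'_of_inf_centralizer_eq_bot (hSf.trans hfD) hcoD h
  · have hindex : (N.comap f).index ∣ p ^ k := by
      rw [index_comap, ← hk]
      exact relIndex_dvd_index_of_normal N f.range
    obtain ⟨j, -, hj⟩ := (Nat.dvd_prime_pow Fact.out).mp hindex
    have hS_ne : S ≠ ⊥ := fun h ↦ hSc (h ▸ bot_le)
    have hne := inf_center_ne_bot hS hS_ne (le_centralizer_iff.mp (inf_eq_left.mp h)) hj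
    have := (hmin (S ⊓ center G) inf_le_left inferInstance).resolve_left hne
    exact absurd (inf_eq_left.mp this) hSc

theorem card_eq_prime_of_le_center {p : ℕ} [Fact p.Prime] {S : Subgroup G} (hS : p ∣ Nat.card S)
    (hmin : ∀ H : Subgroup G, H ≤ S → H.Normal → H = ⊥ ∨ H = S) (hSc : S ≤ center G) :
    Nat.card S = p := by
  obtain ⟨s, hs⟩ := exists_prime_orderOf_dvd_card' p hS
  rw [← orderOf_coe] at hs
  have hle : zpowers (s : G) ≤ S := zpowers_le.mpr s.2
  have hnormal : (zpowers (s : G)).Normal :=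
    ⟨fun x hx g ↦ by rwa [mem_center_iff.mp (hSc (hle hx)) g, mul_inv_cancel_right]⟩
  rcases hmin _ hle hnormal with h | h
  · rw [zpowers_eq_bot.mp h, orderOf_one] at hs
    exact absurd hs.symm (Fact.out : p.Prime).ne_one
  · rw [← h, Nat.card_zpowers, hs]

theorem exists_isComplement'_of_index_ker_lt_card {Q : Type*} [Group Q] [Finite Q]
    [IsMulCommutative Q] (f : G →* Q) {p : ℕ} [Fact p.Prime] {S : Subgroup G} [S.Normal]
    [IsMulCommutative S] (hS : IsPGroup p S) (hSf : S ≤ f.ker) (hco : p.Coprime (S.relIndex f.ker))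
    (hindex : f.ker.index < Nat.card S)
    (hmin : ∀ H : Subgroup G, H ≤ S → H.Normal → H = ⊥ ∨ H = S) :
    ∃ H : Subgroup G, S.IsComplement' H := by
  by_cases hSc : S ≤ center G
  · have hindex_pos : 0 < f.ker.index := Nat.pos_of_ne_zero index_ne_zero_of_finite
    have : Nontrivial S := Finite.one_lt_card_iff_nontrivial.mp (lt_of_le_of_lt hindex_pos hindex)
    obtain ⟨n, hn, hcard⟩ := hS.nontrivial_iff_card.mp this
    have hSp : Nat.card S = p := card_eq_prime_of_le_center (hcard ▸ dvd_pow_self p hn.ne') hmin hSc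
    have hcoker : p.Coprime f.ker.index :=
      (Nat.Prime.coprime_iff_not_dvd Fact.out).mpr <|
        Nat.not_dvd_of_pos_of_lt hindex_pos (hindex.trans_eq hSp)
    refine exists_right_complement'_of_coprime ?_
    rw [hSp, ← relIndex_mul_index hSf]
    exact hco.mul_right hcoker
  · exact exists_isComplement'_of_not_le_center f hS hSf hco hmin hSc

end GroupTheory

section Galois

open IntermediateField

variable {K M : Type*} [Field K] [Field M] [Algebra K M]

/-- The field `L_n` of the paper when `F = K_n`: it is generated over `F` by all `e`-th roots in `M`
of elements of `F`. As `F` itself consists of such roots, they are adjoined directly to `K`. -/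
def adjoinNthRoots (e : ℕ) (F : IntermediateField K M) : IntermediateField K M :=
  adjoin K {x | x ^ e ∈ F}

theorem le_adjoinNthRoots (e : ℕ) (F : IntermediateField K M) : F ≤ adjoinNthRoots e F :=
  fun _ hx ↦ subset_adjoin K _ (pow_mem hx e)

theorem sup_adjoin_eq_adjoinNthRoots (e : ℕ) (F : IntermediateField K M) :
    F ⊔ adjoin K {x | x ^ e ∈ F} = adjoinNthRoots e F :=
  sup_eq_right.mpr (le_adjoinNthRoots e F)

instance normal_adjoinNthRoots [Normal K M] (e : ℕ) (F : IntermediateField K M) [Normal K F] :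
    Normal K (adjoinNthRoots e F) := by
  refine normal_iff_forall_map_le'.mpr fun σ ↦ ?_
  rw [adjoinNthRoots, adjoin_map, adjoin_le_iff]
  rintro _ ⟨x, hx, rfl⟩
  refine subset_adjoin K _ ?_
  rw [Set.mem_ofPred_eq, ← map_pow]
  exact normal_iff_forall_map_le'.mp ‹_› σ ⟨_, hx, rfl⟩

theorem pow_apply_eq_self_of_pow_mem {e : ℕ} [NeZero e] {F : IntermediateField K M} {ζ : M}
    (hζ : IsPrimitiveRoot ζ e) (hζF : ζ ∈ F) {σ : Gal(M/K)} (hσ : σ ∈ F.fixingSubgroup) {x : M}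
    (hx : x ^ e ∈ F) : (σ ^ e) x = x := by
  rw [IntermediateField.mem_fixingSubgroup_iff] at hσ
  obtain rfl | hx0 := eq_or_ne x 0
  · exact map_zero _
  have hroot : (σ x / x) ^ e = 1 := by
    rw [div_pow, ← map_pow, hσ _ hx, div_self (pow_ne_zero e hx0)]
  obtain ⟨i, -, hi⟩ := hζ.eq_pow_of_pow_eq_one hroot
  have hσx : σ x = ζ ^ i * x := by rw [hi, div_mul_cancel₀ _ hx0]
  have hiter (k : ℕ) : (σ ^ k) x = (ζ ^ i) ^ k * x := by
    induction k with
    | zero => simp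
    | succ k ih =>
      rw [pow_succ', AlgEquiv.mul_apply, ih, map_mul, hσ _ (pow_mem (pow_mem hζF i) k), hσx,
        pow_succ, mul_assoc]
  rw [hiter, hi, hroot, one_mul]

theorem pow_mem_fixingSubgroup_adjoinNthRoots {e : ℕ} [NeZero e] {F : IntermediateField K M}
    {ζ : M} (hζ : IsPrimitiveRoot ζ e) (hζF : ζ ∈ F) {σ : Gal(M/K)}
    (hσ : σ ∈ F.fixingSubgroup) : σ ^ e ∈ (adjoinNthRoots e F).fixingSubgroup := by
  rw [← Subgroup.zpowers_le, ← le_iff_le, adjoinNthRoots, adjoin_le_iff]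
  intro x hx
  have hσx : σ ^ e ∈ MulAction.stabilizer Gal(M/K) x :=
    pow_apply_eq_self_of_pow_mem hζ hζF hσ hx
  exact fun ⟨_, hτ⟩ ↦ (Subgroup.zpowers_le.mpr hσx) hτ

theorem finrank_adjoin_simple_le_of_pow_eq_one {ζ : M} {e : ℕ} (he : e ≠ 0) (hζ : ζ ^ e = 1) :
    Module.finrank K K⟮ζ⟯ ≤ e := by
  have hmonic : (Polynomial.X ^ e - Polynomial.C (1 : K)).Monic :=
    Polynomial.monic_X_pow_sub_C 1 he
  have hroot : Polynomial.aeval ζ (Polynomial.X ^ e - Polynomial.C (1 : K)) = 0 := by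
    simp [hζ]
  rw [adjoin.finrank ⟨_, hmonic, hroot⟩, ← Polynomial.natDegree_X_pow_sub_C (n := e) (r := (1 : K))]
  exact Polynomial.natDegree_le_of_dvd (minpoly.dvd K ζ hroot) hmonic.ne_zero

variable [FiniteDimensional K M] [IsGalois K M] {L : IntermediateField K M} {H : Subgroup Gal(M/K)}

theorem isAtom_fixedField (hH : IsCoatom H) : IsAtom (fixedField H) :=
  (IsGalois.intermediateFieldEquivSubgroup.symm.isAtom_iff (OrderDual.toDual H)).mpr hH.dual

theorem finrank_fixedField_of_isComplement' (hH : L.fixingSubgroup.IsComplement' H) :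
    Module.finrank K (fixedField H) = Nat.card L.fixingSubgroup := by
  rw [finrank_eq_fixingSubgroup_index, fixingSubgroup_fixedField, hH.index_eq_card]

theorem fixedField_sup_eq_top_of_isComplement' (hH : L.fixingSubgroup.IsComplement' H) :
    fixedField H ⊔ L = ⊤ := by
  rw [← IsGalois.fixedField_fixingSubgroup (fixedField H ⊔ L), fixingSubgroup_sup,
    fixingSubgroup_fixedField, hH.symm.disjoint.eq_bot, fixedField_bot]

theorem exists_isAtom_sup_adjoinNthRoots_eq_top {F : IntermediateField K M} [IsAbelianGalois K F]
    {p e : ℕ} [Fact p.Prime] [NeZero e] (hpe : p.Coprime e) {ζ : M} (hζ : IsPrimitiveRoot ζ e)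
    (hζF : ζ ∈ F) [IsMulCommutative (adjoinNthRoots e F).fixingSubgroup]
    (hp : IsPGroup p (adjoinNthRoots e F).fixingSubgroup)
    (hcard : Module.finrank K F < Nat.card (adjoinNthRoots e F).fixingSubgroup)
    (hmin : ∀ H : Subgroup Gal(M/K), H ≤ (adjoinNthRoots e F).fixingSubgroup → H.Normal →
      H = ⊥ ∨ H = (adjoinNthRoots e F).fixingSubgroup) :
    ∃ E : IntermediateField K M, IsAtom E ∧
      Module.finrank K E = Nat.card (adjoinNthRoots e F).fixingSubgroup ∧
      E ⊔ adjoinNthRoots e F = ⊤ := by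
  have : IsGalois K (adjoinNthRoots e F) := {}
  have hker : (AlgEquiv.restrictNormalHom F : Gal(M/K) →* Gal(F/K)).ker = F.fixingSubgroup :=
    F.restrictNormalHom_ker
  have hco : p.Coprime ((adjoinNthRoots e F).fixingSubgroup.relIndex F.fixingSubgroup) :=
    coprime_relIndex_of_pow_mem
      (fun _ hσ ↦ pow_mem_fixingSubgroup_adjoinNthRoots hζ hζF hσ) hpe
  have hindex : F.fixingSubgroup.index < Nat.card (adjoinNthRoots e F).fixingSubgroup :=
    (finrank_eq_fixingSubgroup_index M F).symm.trans_lt hcard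
  obtain ⟨H, hH⟩ := exists_isComplement'_of_index_ker_lt_card (AlgEquiv.restrictNormalHom F) hp
    (hker ▸ fixingSubgroup_le (le_adjoinNthRoots e F)) (hker ▸ hco) (hker ▸ hindex) hmin
  have hne : (adjoinNthRoots e F).fixingSubgroup ≠ ⊥ :=
    (Subgroup.one_lt_card_iff_ne_bot _).mp (lt_of_le_of_lt Module.finrank_pos hcard)
  exact ⟨fixedField H, isAtom_fixedField (isCoatom_of_isComplement' hne hmin hH),
    finrank_fixedField_of_isComplement' hH, fixedField_sup_eq_top_of_isComplement' hH⟩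

end Galois

section Lift

open IntermediateField

variable {K Ω : Type*} [Field K] [Field Ω] [Algebra K Ω] {M : IntermediateField K Ω}

theorem isAtom_lift {E : IntermediateField K M} (hE : IsAtom E) : IsAtom (lift E) := by
  refine ⟨fun h ↦ hE.1 (lift_injective M (h.trans (lift_bot K M).symm)), fun F hF ↦ ?_⟩
  have hFM : F ≤ M := hF.le.trans (lift_le E)
  have hFE : restrict hFM ≠ E := fun h ↦ hF.ne (by rw [← h, lift_restrict])
  have hle : restrict hFM ≤ E := fun x hx ↦ (mem_lift x).mp (hF.le ((mem_restrict hFM x).mp hx))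
  rw [← lift_restrict hFM, hE.2 _ (hle.lt_of_ne hFE), lift_bot]

theorem lift_adjoinNthRoots {e : ℕ} {F : IntermediateField K M}
    (h : adjoinNthRoots e (lift F) ≤ M) :
    lift (adjoinNthRoots e F) = adjoinNthRoots e (lift F) := by
  rw [adjoinNthRoots, lift_adjoin]
  refine congrArg (adjoin K) (Set.ext fun x ↦ ⟨?_, fun hx ↦ ?_⟩)
  · rintro ⟨y, hy, rfl⟩
    exact (mem_lift (y ^ e)).mpr hy
  · have hxM : x ∈ M := h (subset_adjoin K _ hx)
    have hxe : (⟨x, hxM⟩ : M) ^ e ∈ F := (mem_lift _).mp hx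
    exact ⟨⟨x, hxM⟩, hxe, rfl⟩

end Lift

open IntermediateField in
theorem stmt_12_general {p n : ℕ} [Fact p.Prime] (hn : n ≠ 0)
    {K Ω : Type*} [Field K] [Field Ω] [Algebra K Ω]
    {ζ : Ω} (hζ : IsPrimitiveRoot ζ (p ^ n - 1))
    {Kn : IntermediateField K Ω} (hKn : Kn = K⟮ζ⟯)
    {Ln : IntermediateField K Ω} (hLn : Ln = Kn ⊔ adjoin K {x : Ω | x ^ (p ^ n - 1) ∈ Kn})
    {M : IntermediateField K Ω} (hLnM : Ln ≤ M) [FiniteDimensional K M] [IsGalois K M]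
    {S : Subgroup Gal(M/K)} (hS : S = fixingSubgroup Gal(M/K) {x : M | (x : Ω) ∈ Ln})
    (hcard : Nat.card S = p ^ n) (hab : ∀ σ ∈ S, ∀ τ ∈ S, σ * τ = τ * σ)
    (hsimple : ∀ H : Subgroup Gal(M/K), H ≤ S → H.Normal → H = ⊥ ∨ H = S) :
    ∃ E : IntermediateField K Ω, IsAtom E ∧ Module.finrank K E = p ^ n ∧ E ⊔ Ln = M := by
  have hpn : 1 < p ^ n := Nat.one_lt_pow hn (Fact.out : p.Prime).one_lt
  have : NeZero (p ^ n - 1) := ⟨(Nat.sub_pos_of_lt hpn).ne'⟩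
  have hco : p.Coprime (p ^ n - 1) := ((Nat.coprime_self_sub_right hpn.le).mpr
    (Nat.coprime_one_right _)).coprime_dvd_left (dvd_pow_self p hn)
  rw [sup_adjoin_eq_adjoinNthRoots] at hLn
  have hKnM : Kn ≤ M := (le_adjoinNthRoots _ _).trans (hLn ▸ hLnM)
  let ζM : M := ⟨ζ, hKnM (hKn ▸ mem_adjoin_simple_self K ζ)⟩
  have hζM : IsPrimitiveRoot ζM (p ^ n - 1) := .of_map_of_injective (f := M.val) hζ M.val.injective
  have := hζM.intermediateField_adjoin_isCyclotomicExtension K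
  have := IsCyclotomicExtension.isAbelianGalois {p ^ n - 1} K K⟮ζM⟯
  have hlift : lift (adjoinNthRoots (p ^ n - 1) K⟮ζM⟯) = Ln := by
    have hKn' : lift K⟮ζM⟯ = Kn := (lift_adjoin_simple K M ζM).trans hKn.symm
    rw [lift_adjoinNthRoots (by rwa [hKn', ← hLn]), hKn', hLn]
  obtain rfl : S = (adjoinNthRoots (p ^ n - 1) K⟮ζM⟯).fixingSubgroup := by
    rw [hS, ← hlift]
    exact congrArg (fixingSubgroup _) (Set.ext mem_lift)
  have : IsMulCommutative (adjoinNthRoots (p ^ n - 1) K⟮ζM⟯).fixingSubgroup :=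
    ⟨⟨fun σ τ ↦ Subtype.ext (hab σ σ.2 τ τ.2)⟩⟩
  have hdeg : Module.finrank K K⟮ζM⟯ < p ^ n :=
    (finrank_adjoin_simple_le_of_pow_eq_one (NeZero.ne _) hζM.pow_eq_one).trans_lt
      (Nat.sub_one_lt_of_lt hpn)
  obtain ⟨E, hE, hEdeg, hEsup⟩ := exists_isAtom_sup_adjoinNthRoots_eq_top hco hζM
    (mem_adjoin_simple_self K ζM) (.of_card hcard) (hdeg.trans_eq hcard.symm) hsimple
  refine ⟨lift E, isAtom_lift hE, ?_, ?_⟩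
  · rw [← (liftAlgEquiv E).toLinearEquiv.finrank_eq, hEdeg, hcard]
  · rw [← hlift, lift, lift, ← IntermediateField.map_sup, hEsup, ← lift, lift_top]

/-- Converse direction: if `M` is a finite Galois extension of `K` containing `L_n` such
that `Gal(M / L_n)` (the subgroup `S` of `Gal(M / K)` fixing `L_n` pointwise) is abelian
of order `p ^ n` with every element of order dividing `p`, and the only subgroups of
`Gal(M / L_n)` normal in `Gal(M / K)` are trivial and `Gal(M / L_n)` itself, then there is
a primitive extension `E` of `K` of degree `p ^ n` with `E ⬝ L_n = M`. -/
theorem stmt_12 (p : ℕ) [hp : Fact p.Prime] (n : ℕ) (hn : 1 ≤ n)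
    (Ω : Type) [Field Ω] [Algebra ℚ_[p] Ω] [IsAlgClosure ℚ_[p] Ω]
    (K : IntermediateField ℚ_[p] Ω) [FiniteDimensional ℚ_[p] ↥K]
    (ζ : Ω) (hζ : IsPrimitiveRoot ζ (p ^ n - 1))
    (Kn : IntermediateField ↥K Ω) (hKn : Kn = IntermediateField.adjoin ↥K {ζ})
    (Ln : IntermediateField ↥K Ω)
    (hLn : Ln = Kn ⊔ IntermediateField.adjoin ↥K {x : Ω | x ^ (p ^ n - 1) ∈ Kn})
    (M : IntermediateField ↥K Ω) (hLnM : Ln ≤ M)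
    [FiniteDimensional ↥K ↥M] [IsGalois ↥K ↥M]
    (S : Subgroup (↥M ≃ₐ[↥K] ↥M))
    (hS : S = fixingSubgroup (↥M ≃ₐ[↥K] ↥M) {x : ↥M | (x : Ω) ∈ Ln})
    (hcard : Nat.card S = p ^ n)
    (hab : ∀ σ ∈ S, ∀ τ ∈ S, σ * τ = τ * σ) (hexp : ∀ σ ∈ S, σ ^ p = 1)
    (hsimple : ∀ H : Subgroup (↥M ≃ₐ[↥K] ↥M), H ≤ S → H.Normal → H = ⊥ ∨ H = S) :
    ∃ E : IntermediateField ↥K Ω, Module.finrank ↥K ↥E = p ^ n ∧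
      (∀ F : IntermediateField ↥K Ω, F ≤ E → F = ⊥ ∨ F = E) ∧ E ⊔ Ln = M := by
  have ⟨E, hE, hdeg, hsup⟩ := stmt_12_general (Nat.one_le_iff_ne_zero.mp hn) hζ hKn hLn hLnM hS
    hcard hab hsimple
  exact ⟨E, hdeg, fun _ ↦ hE.le_iff.mp, hsup⟩
end

section
/- Fix a prime p and an integer n ≥ 1, set e_n = p^n − 1, and fix an algebraic closure Ω of ℚ_p. Let K ⊆ Ω be a finite extension of ℚ_p, let K_n = K(ζ) where ζ ∈ Ω is a primitive e_n-th root of unity, and let L_n ⊆ Ω be the field generated over K_n by all x ∈ Ω with x^{e_n} ∈ K_n. If E and E' are two primitive extensions of K inside Ω, each of degree p^n over K, satisfying E·L_n = E'·L_n, then E and E' are isomorphic as K-algebras. -/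
/-!
Let `G` be the Galois group over `K` of a large finite Galois extension, `S` and `S'` the
fixers of `E` and `E'`, `C` the fixer of `ζ`, and `V` the fixer of `L_n`, which by Kummer theory is
the subgroup generated by the commutators and the `(p ^ n - 1)`-th powers of `C`.

Modulo its core, `S` is a maximal subgroup of a primitive solvable group, so it is complemented by
an abelian minimal normal subgroup `A` of order `p ^ n`. Ramification theory applies to the
irreducible action of `G` on `A`: the wild inertia group is a normal `p`-subgroup, hence acts
trivially; Clifford decompositions of `A` show that `C` modulo `A` is abelian of exponent dividing
`p ^ n - 1`, so that `V` lies in `A` modulo the core of `S`.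

Thus `V ⊓ S` is normal, and `E ⊔ L_n = E' ⊔ L_n` means `V ⊓ S = V ⊓ S'`. Modulo this subgroup, `V`
is abelian and nontrivial, so `S` is a complement of it by maximality, and so is `S'` by counting.
Complements of `V` are conjugate since `H¹(S, V)` vanishes. Indeed `C ⊓ S` has exponent dividing
`p ^ n - 1`, hence order prime to `p`, so a cocycle of `S` may be assumed to be trivial on `C ⊓ S`.
Its values are then fixed by `C ⊓ S`, and it remains to treat the case where `C ⊓ S` acts trivially
on `V`: there the abelian group `S / (C ⊓ S)` acts irreducibly, and for any `s` that acts
nontrivially, `a ↦ s • a / a` is bijective on `V`.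
-/

open scoped IsMulCommutative commutatorElement

/-- The subgroup `X` of `A` is stable under the action of `Q` by automorphisms. -/
def IsStable (Q : Type*) {A : Type*} [Group Q] [Group A] [MulDistribMulAction Q A]
    (X : Subgroup A) : Prop :=
  ∀ q : Q, ∀ x ∈ X, q • x ∈ X

/-- The group `Q` acts irreducibly on the group `A` by automorphisms: the only `Q`-stable subgroups
are the trivial ones. With this convention the action on the trivial group is irreducible. -/
def IsIrreducibleAction (Q A : Type*) [Group Q] [Group A] [MulDistribMulAction Q A] : Prop :=
  ∀ X : Subgroup A, IsStable Q X → X = ⊥ ∨ X = ⊤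

section Cohomology

open groupCohomology

variable {Q A : Type*} [Group Q] [CommGroup A] [MulDistribMulAction Q A] {f : Q → A}

lemma isMulCocycle₁_div_smul_div (hf : IsMulCocycle₁ f) (x : A) :
    IsMulCocycle₁ fun q ↦ f q / (q • x / x) := by
  intro q r
  simp only [hf q r, mul_smul, smul_div', div_mul_div_comm]
  rw [mul_comm (q • x) x, mul_div_mul_right_eq_div]

lemma isMulCoboundary₁_of_div_smul_div {x : A}
    (h : IsMulCoboundary₁ fun q : Q ↦ f q / (q • x / x)) : IsMulCoboundary₁ f := by
  obtain ⟨y, hy⟩ := h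
  refine ⟨y * x, fun q ↦ ?_⟩
  rw [smul_mul', mul_div_mul_comm, hy q, div_mul_cancel]

-- The average of the values of a cocycle trivializes it.
lemma isMulCoboundary₁_of_coprime [Finite Q] (hcop : (Nat.card A).Coprime (Nat.card Q))
    (hf : IsMulCocycle₁ f) : IsMulCoboundary₁ f := by
  have := Fintype.ofFinite Q
  let F : A := ∏ r : Q, f r
  have hF (q : Q) : F = q • F * f q ^ Nat.card Q := by
    calc F = ∏ r : Q, f (q * r) := (Equiv.prod_comp (Equiv.mulLeft q) f).symm
      _ = ∏ r : Q, (q • f r * f q) := by simp only [hf q]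
      _ = q • F * f q ^ Nat.card Q := by
        rw [Finset.prod_mul_distrib, Finset.prod_const, Finset.card_univ,
          ← Nat.card_eq_fintype_card, Finset.smul_prod']
  obtain ⟨x, hx : x ^ Nat.card Q = F⟩ := (powCoprime hcop).surjective F
  refine ⟨x⁻¹, fun q ↦ (powCoprime hcop).injective ?_⟩
  change (q • x⁻¹ / x⁻¹) ^ Nat.card Q = f q ^ Nat.card Q
  rw [div_pow, inv_pow, ← smul_pow', inv_pow, hx, smul_inv', inv_div_inv, div_eq_iff_eq_mul']
  exact hF q

lemma smul_eq_self_of_eq_one_of_normal {C : Subgroup Q} [C.Normal] (hf : IsMulCocycle₁ f)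
    (hC : ∀ c ∈ C, f c = 1) (q : Q) {c : Q} (hc : c ∈ C) : c • f q = f q := by
  have hconj : f (q * (q⁻¹ * c * q)) = f q := by
    rw [hf, hC _ (by simpa using ‹C.Normal›.conj_mem c hc q⁻¹), smul_one, one_mul]
  calc c • f q = f (c * q) := by rw [hf, hC c hc, mul_one]
    _ = f (q * (q⁻¹ * c * q)) := by simp only [mul_assoc, mul_inv_cancel_left]
    _ = f q := hconj

/-- The endomorphism `a ↦ s • a / a` of `A`. -/
def smulDivHom (A : Type*) [CommGroup A] [MulDistribMulAction Q A] (s : Q) : A →* A :=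
  MulDistribMulAction.toMonoidHom A s / MonoidHom.id A

lemma smulDivHom_apply (s : Q) (a : A) : smulDivHom A s a = s • a / a := rfl

-- Since `Q / C` is commutative and `C` acts trivially, the fixed points of `s` are `Q`-stable.
lemma ker_smulDivHom_eq_bot {C : Subgroup Q} (hirr : IsIrreducibleAction Q A)
    (hQC : commutator Q ≤ C) (hCA : ∀ c ∈ C, ∀ a : A, c • a = a) {s : Q} {a₀ : A}
    (hs : s • a₀ ≠ a₀) : (smulDivHom A s).ker = ⊥ := by
  have mem_ker (a : A) : a ∈ (smulDivHom A s).ker ↔ s • a = a := by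
    rw [MonoidHom.mem_ker, smulDivHom_apply, div_eq_one]
  refine (hirr _ fun q a ha ↦ ?_).resolve_right fun htop ↦
    hs ((mem_ker a₀).1 (htop ▸ Subgroup.mem_top a₀))
  rw [mem_ker] at ha ⊢
  have hcomm : ⁅s, q⁆ ∈ C :=
    hQC (Subgroup.commutator_mem_commutator (Subgroup.mem_top s) (Subgroup.mem_top q))
  calc s • q • a = ⁅s, q⁆ • q • s • a := by
        simp only [commutatorElement_def, ← mul_smul, mul_assoc, inv_mul_cancel_left,
          inv_mul_cancel, mul_one]
    _ = q • a := by rw [hCA _ hcomm, ha]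

lemma eq_one_of_eq_one_of_ker_smulDivHom {C : Subgroup Q} (hQC : commutator Q ≤ C)
    (hCA : ∀ c ∈ C, ∀ a : A, c • a = a) (hf : IsMulCocycle₁ f) (hC : ∀ c ∈ C, f c = 1) {s : Q}
    (hker : (smulDivHom A s).ker = ⊥) (hs : f s = 1) (q : Q) : f q = 1 := by
  have hcomm : ⁅s, q⁆ ∈ C :=
    hQC (Subgroup.commutator_mem_commutator (Subgroup.mem_top s) (Subgroup.mem_top q))
  have hfix : s • f q = f q := by
    calc s • f q = f (s * q) := by rw [hf, hs, mul_one]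
      _ = f (⁅s, q⁆ * (q * s)) := by
        simp only [commutatorElement_def, mul_assoc, inv_mul_cancel_left, inv_mul_cancel, mul_one]
      _ = f q := by rw [hf, hC _ hcomm, hCA _ hcomm, mul_one, hf, hs, smul_one, one_mul]
  rw [← Subgroup.mem_bot, ← hker, MonoidHom.mem_ker, smulDivHom_apply, hfix, div_self']

lemma exists_smul_ne_of_isIrreducibleAction [Nontrivial A] (hirr : IsIrreducibleAction Q A)
    (hA : ¬ (Nat.card A).Prime) : ∃ (s : Q) (a : A), s • a ≠ a := by
  by_contra! htriv
  have : IsSimpleGroup A :=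
    ⟨fun X _ ↦ hirr X fun q x hx ↦ by rwa [htriv]⟩
  exact hA IsSimpleGroup.prime_card

lemma isMulCoboundary₁_of_eq_one_on [Finite A] {C : Subgroup Q} [C.Normal]
    (hirr : IsIrreducibleAction Q A) (hQC : commutator Q ≤ C)
    (hprime : (Nat.card A).Prime → C = ⊤) (hf : IsMulCocycle₁ f) (hC : ∀ c ∈ C, f c = 1) :
    IsMulCoboundary₁ f := by
  have eq_one_imp (h : ∀ q, f q = 1) : IsMulCoboundary₁ f := ⟨1, fun q ↦ by simp [h q]⟩
  have hfixC (q : Q) : f q ∈ FixedPoints.subgroup C A := fun c ↦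
    smul_eq_self_of_eq_one_of_normal hf hC q c.2
  have hstable : IsStable Q (FixedPoints.subgroup C A) := fun q a ha c ↦ by
    have h := ha ⟨q⁻¹ * c * q, by simpa using ‹C.Normal›.conj_mem c c.2 q⁻¹⟩
    rw [Subgroup.mk_smul, mul_smul, mul_smul, inv_smul_eq_iff] at h
    exact h
  rcases hirr _ hstable with hbot | htop
  · exact eq_one_imp fun q ↦ by simpa [hbot] using hfixC q
  have hCA : ∀ c ∈ C, ∀ a : A, c • a = a := fun c hc a ↦
    (htop ▸ Subgroup.mem_top a : a ∈ FixedPoints.subgroup C A) ⟨c, hc⟩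
  rcases subsingleton_or_nontrivial A with hA | hA
  · exact eq_one_imp fun q ↦ Subsingleton.elim _ _
  by_cases hA' : (Nat.card A).Prime
  · exact eq_one_imp fun q ↦ hC q (hprime hA' ▸ Subgroup.mem_top q)
  obtain ⟨s, a₀, hs⟩ := exists_smul_ne_of_isIrreducibleAction hirr hA'
  have hker := ker_smulDivHom_eq_bot hirr hQC hCA hs
  obtain ⟨x, hx⟩ := Finite.surjective_of_injective ((MonoidHom.ker_eq_bot_iff _).1 hker) (f s)
  refine isMulCoboundary₁_of_div_smul_div (x := x) ⟨1, fun q ↦ ?_⟩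
  beta_reduce
  rw [eq_one_of_eq_one_of_ker_smulDivHom hQC hCA (isMulCocycle₁_div_smul_div hf x)
    (fun c hc ↦ by rw [hC c hc, hCA c hc, div_self', div_one]) hker
    (by rw [← smulDivHom_apply, hx, div_self']) q, smul_one, div_one]

theorem isMulCoboundary₁_of_isIrreducibleAction [Finite Q] [Finite A] {C : Subgroup Q} [C.Normal]
    (hirr : IsIrreducibleAction Q A) (hQC : commutator Q ≤ C)
    (hcop : (Nat.card A).Coprime (Nat.card C)) (hprime : (Nat.card A).Prime → C = ⊤)
    (hf : IsMulCocycle₁ f) : IsMulCoboundary₁ f := by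
  obtain ⟨x, hx⟩ := isMulCoboundary₁_of_coprime (f := fun c : C ↦ f c) hcop fun c d ↦ hf c d
  refine isMulCoboundary₁_of_div_smul_div (x := x) (isMulCoboundary₁_of_eq_one_on hirr hQC hprime
    (isMulCocycle₁_div_smul_div hf x) fun c hc ↦ ?_)
  rw [div_eq_one]
  exact (hx ⟨c, hc⟩).symm

end Cohomology

section Clifford

open scoped Pointwise

lemma pow_card_smul_of_forall_smul_eq {B X : Type*} [Group B] [MulAction B X] [Finite X]
    (h : ∀ (b : B) (x y : X), b • x = x → b • y = y) (b : B) (x : X) :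
    b ^ Nat.card X • x = x := by
  set N : Subgroup B := (MulAction.toPermHom B X).ker with hN
  have hstab (y : X) : MulAction.stabilizer B y = N := by
    ext c
    rw [MulAction.mem_stabilizer_iff, hN, MonoidHom.mem_ker, Equiv.Perm.ext_iff]
    exact ⟨fun hc z ↦ h c y z hc, fun hc ↦ hc y⟩
  have hcard : N.index ∣ Nat.card X := by
    rw [Nat.card_congr (MulAction.selfEquivSigmaOrbits B X)]
    have := Fintype.ofFinite (MulAction.orbitRel.Quotient B X)
    rw [Nat.card_sigma]
    refine Finset.dvd_sum fun ω _ ↦ ?_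
    rw [← hstab ω.out, MulAction.index_stabilizer, Nat.card_coe_set_eq]
  have hmem : b ^ Nat.card X ∈ N := by
    obtain ⟨k, hk⟩ := hcard
    rw [hk, pow_mul]
    exact N.pow_mem (N.pow_index_mem b) k
  rwa [← hstab x, MulAction.mem_stabilizer_iff] at hmem

lemma pow_card_sub_one_smul_of_minimal {B A : Type*} [Group B] [Group A] [Finite A]
    [MulDistribMulAction B A] {W : Subgroup A} (hcomm : ∀ (b c : B) (a : A), b • c • a = c • b • a)
    (hW : Minimal (fun X : Subgroup A ↦ X ≠ ⊥ ∧ IsStable B X) W) (b : B) {w : A} (hw : w ∈ W) :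
    b ^ (Nat.card W - 1) • w = w := by
  have fixed_of_fixed {c : B} {x y : A} (hx : x ∈ W) (hx1 : x ≠ 1) (hy : y ∈ W)
      (hcx : c • x = x) : c • y = y := by
    let F : Subgroup A :=
      W ⊓ (MulDistribMulAction.toMonoidHom A c).eqLocus (MonoidHom.id A)
    have hF : F ≠ ⊥ := fun h ↦ hx1 (Subgroup.mem_bot.1 (h ▸ ⟨hx, hcx⟩))
    have hFB : IsStable B F := fun d z hz ↦ ⟨hW.1.2 d z hz.1,
      (hcomm c d z).trans (congrArg (d • ·) hz.2)⟩
    exact (hW.2 ⟨hF, hFB⟩ inf_le_left hy).2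
  let X : SubMulAction B A :=
    { carrier := (W : Set A) \ {1}
      smul_mem' := fun c x hx ↦ ⟨hW.1.2 c x hx.1, fun h ↦ hx.2 ((smul_eq_iff_eq_inv_smul c).1 h
        |>.trans (smul_one _))⟩ }
  have hX : Nat.card X = Nat.card W - 1 :=
    (Set.ncard_sdiff_singleton_of_mem W.one_mem : ((W : Set A) \ {1}).ncard = _)
  by_cases hw1 : w = 1
  · rw [hw1, smul_one]
  · have := pow_card_smul_of_forall_smul_eq (X := X)
      (fun c x y h ↦ Subtype.ext (fixed_of_fixed x.2.1 x.2.2 y.2.1 (congrArg Subtype.val h)))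
      b ⟨w, hw, hw1⟩
    rw [hX] at this
    exact congrArg Subtype.val this

lemma card_sup_of_inf_eq_bot {A : Type*} [CommGroup A] {U W : Subgroup A} (h : U ⊓ W = ⊥) :
    Nat.card ↥(U ⊔ W) = Nat.card U * Nat.card W := by
  rw [← Subgroup.relIndex_bot_left, ← Subgroup.relIndex_mul_relIndex ⊥ U _ bot_le le_sup_left,
    Subgroup.relIndex_sup_left, Subgroup.relIndex_bot_left, ← Subgroup.inf_relIndex_right, h,
    Subgroup.relIndex_bot_left]

section

variable {Q A : Type*} [Group Q] [Group A] [MulDistribMulAction Q A]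

lemma isStable_pointwise_smul {B : Subgroup Q} [B.Normal] {X : Subgroup A} (hX : IsStable B X)
    (q : Q) : IsStable B (q • X) := by
  intro b x hx
  rw [Subgroup.mem_pointwise_smul_iff_inv_smul_mem] at hx ⊢
  simpa [Subgroup.smul_def, ← mul_smul, mul_assoc] using hX (MulAut.conjNormal q⁻¹ b) _ hx

lemma eq_top_of_forall_smul_le (hirr : IsIrreducibleAction Q A) {W U : Subgroup A} (hW : W ≠ ⊥)
    (h : ∀ q : Q, q • W ≤ U) : U = ⊤ := by
  have hW_le : W ≤ ⨅ q : Q, q • U := le_iInf fun q ↦ by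
    simpa [Subgroup.subset_pointwise_smul_iff] using h q⁻¹
  have hstable : IsStable Q (⨅ q : Q, q • U) := fun q x hx ↦ by
    simp only [Subgroup.mem_iInf, Subgroup.mem_pointwise_smul_iff_inv_smul_mem] at hx ⊢
    exact fun r ↦ by simpa [← mul_smul] using hx (q⁻¹ * r)
  have htop := (hirr _ hstable).resolve_left fun hbot ↦ hW (le_bot_iff.1 (hbot ▸ hW_le))
  exact top_le_iff.1 (htop ▸ (iInf_le _ 1).trans (one_smul Q U).le)

-- By minimality a conjugate `q • W` not contained in `U` meets `U` trivially.
lemma smul_le_or_inf_smul_eq_bot {B : Subgroup Q} [B.Normal] {W U : Subgroup A}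
    (hW : Minimal (fun X : Subgroup A ↦ X ≠ ⊥ ∧ IsStable B X) W) (hU : IsStable B U) (q : Q) :
    q • W ≤ U ∨ U ⊓ q • W = ⊥ := by
  refine or_iff_not_imp_right.2 fun hne ↦ ?_
  have hstable : IsStable B (U ⊓ q • W) := fun b x hx ↦
    ⟨hU b x hx.1, isStable_pointwise_smul hW.1.2 q b x hx.2⟩
  have hle : W ≤ q⁻¹ • (U ⊓ q • W) := hW.2
    ⟨fun h ↦ hne (by rw [← smul_inv_smul q (U ⊓ q • W), h, Subgroup.smul_bot]),
      isStable_pointwise_smul hstable q⁻¹⟩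
    (by rw [← Subgroup.subset_pointwise_smul_iff]; exact inf_le_right)
  rw [Subgroup.subset_pointwise_smul_iff, inv_inv] at hle
  exact hle.trans inf_le_left

end

variable {Q A : Type*} [Group Q] [CommGroup A] [Finite A] [MulDistribMulAction Q A]
  {B : Subgroup Q} [B.Normal]

-- `A` is a direct product of conjugates of `W`.
lemma exists_card_eq_pow_of_minimal (hirr : IsIrreducibleAction Q A) {W : Subgroup A}
    (hW : Minimal (fun X : Subgroup A ↦ X ≠ ⊥ ∧ IsStable B X) W) :
    ∃ k, Nat.card A = Nat.card W ^ k := by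
  obtain ⟨U, -, ⟨hUB, k, hk⟩, hmax⟩ := Finite.exists_le_maximal (p := fun X : Subgroup A ↦
    IsStable B X ∧ ∃ k, Nat.card X = Nat.card W ^ k) (a := ⊥)
    ⟨fun q x hx ↦ by simp_all, 0, by simp⟩
  have conj_le (q : Q) : q • W ≤ U := by
    refine (smul_le_or_inf_smul_eq_bot hW hUB q).elim id fun hinf ↦ ?_
    have hstable : IsStable B (U ⊔ q • W) := fun b x hx ↦ by
      obtain ⟨u, hu, w, hw, rfl⟩ := Subgroup.mem_sup.1 hx
      rw [smul_mul']
      exact Subgroup.mul_mem_sup (hUB b u hu) (isStable_pointwise_smul hW.1.2 q b w hw)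
    have hcard : Nat.card ↥(U ⊔ q • W) = Nat.card W ^ (k + 1) := by
      rw [card_sup_of_inf_eq_bot hinf, hk, ← Nat.card_congr (Subgroup.equivSMul q W).toEquiv,
        pow_succ]
    exact le_sup_right.trans (hmax ⟨hstable, k + 1, hcard⟩ le_sup_left)
  rw [eq_top_of_forall_smul_le hirr hW.1.1 conj_le, Subgroup.card_top] at hk
  exact ⟨k, hk⟩

theorem pow_card_sub_one_smul_of_isIrreducibleAction (hirr : IsIrreducibleAction Q A)
    (hcomm : ∀ (b c : B) (a : A), b • c • a = c • b • a) (b : B) (a : A) :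
    b ^ (Nat.card A - 1) • a = a := by
  rcases subsingleton_or_nontrivial A with hA | hA
  · exact Subsingleton.elim _ _
  obtain ⟨W, -, hW⟩ := Finite.exists_le_minimal (p := fun X : Subgroup A ↦ X ≠ ⊥ ∧ IsStable B X)
    (a := ⊤) ⟨top_ne_bot, fun _ _ _ ↦ Subgroup.mem_top _⟩
  obtain ⟨k, hk⟩ := exists_card_eq_pow_of_minimal hirr hW
  have hdvd : Nat.card W - 1 ∣ Nat.card A - 1 := by
    simpa [hk] using Nat.sub_dvd_pow_sub_pow (Nat.card W) 1 k
  have fix_W (c : B) {w : A} (hw : w ∈ W) : c ^ (Nat.card A - 1) • w = w := by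
    obtain ⟨m, hm⟩ := hdvd
    rw [hm, mul_comm, pow_mul]
    exact pow_card_sub_one_smul_of_minimal hcomm hW (c ^ m) hw
  let U : Subgroup A :=
    (MulDistribMulAction.toMonoidHom A (b ^ (Nat.card A - 1))).eqLocus (MonoidHom.id A)
  have hU : U = ⊤ := eq_top_of_forall_smul_le hirr hW.1.1 fun q x hx ↦ by
    rw [Subgroup.mem_pointwise_smul_iff_inv_smul_mem] at hx
    have hconj := fix_W (MulAut.conjNormal q⁻¹ b) hx
    rw [← map_pow, Subgroup.smul_def, MulAut.conjNormal_apply, inv_inv, mul_smul, mul_smul,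
      smul_inv_smul, inv_smul_eq_iff, smul_inv_smul] at hconj
    exact hconj
  exact (hU.ge (Subgroup.mem_top a) : a ∈ U)

end Clifford

section PrimitiveGroups

open Subgroup

/-- The subgroup generated by the `e`-th powers of the elements of `H`. -/
def powerSubgroup {G : Type*} [Group G] (e : ℕ) (H : Subgroup G) : Subgroup G :=
  closure ((· ^ e) '' (H : Set G))

/-- The smallest subgroup `X` of `H` such that `H / X` is abelian of exponent dividing `e`: the
Galois group of the maximal Kummer extension of exponent `e` when `H` is a Galois group. -/
def kummerSubgroup {G : Type*} [Group G] (e : ℕ) (H : Subgroup G) : Subgroup G :=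
  ⁅H, H⁆ ⊔ powerSubgroup e H

/-- The data of ramification theory for a Galois group of `p`-adic fields with wild inertia subgroup
`P`, inertia subgroup `I` and a subgroup `C` fixing the `e`-th roots of unity: `P` is a `p`-group,
`I / P` is abelian, `G / I` is cyclic, and `C` centralizes `I / P` modulo `e`-th powers. -/
structure IsTameFiltration {G : Type*} [Group G] (p e : ℕ) (P I C : Subgroup G) [I.Normal] :
    Prop where
  isPGroup : IsPGroup p P
  commutator_le : ⁅I, I⁆ ≤ P
  isCyclic : IsCyclic (G ⧸ I)
  commutator_le_sup : ⁅C, I⁆ ≤ P ⊔ powerSubgroup e I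

variable {G : Type*} [Group G]

lemma powerSubgroup_le_iff {e : ℕ} {H K : Subgroup G} :
    powerSubgroup e H ≤ K ↔ ∀ x ∈ H, x ^ e ∈ K := by
  simp [powerSubgroup, closure_le, Set.subset_def]

lemma pow_mem_kummerSubgroup {e : ℕ} {H : Subgroup G} {x : G} (hx : x ∈ H) :
    x ^ e ∈ kummerSubgroup e H :=
  powerSubgroup_le_iff.1 le_sup_right x hx

lemma map_powerSubgroup {G' : Type*} [Group G'] (f : G →* G') (e : ℕ) (H : Subgroup G) :
    (powerSubgroup e H).map f = powerSubgroup e (H.map f) := by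
  simp only [powerSubgroup, MonoidHom.map_closure, Subgroup.coe_map, Set.image_image, map_pow]

lemma map_kummerSubgroup {G' : Type*} [Group G'] (f : G →* G') (e : ℕ) (H : Subgroup G) :
    (kummerSubgroup e H).map f = kummerSubgroup e (H.map f) := by
  rw [kummerSubgroup, Subgroup.map_sup, map_commutator, map_powerSubgroup, kummerSubgroup]

instance kummerSubgroup_normal (e : ℕ) (H : Subgroup G) [H.Normal] :
    (kummerSubgroup e H).Normal := by
  refine ⟨fun x hx g ↦ ?_⟩
  have hH : H.map (MulAut.conj g).toMonoidHom = H := Normal.conj_smul_eq_self g H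
  rw [← hH, ← map_kummerSubgroup]
  exact mem_map_of_mem _ hx

lemma IsTameFiltration.map {G' : Type*} [Group G'] {p e : ℕ} {P I C : Subgroup G} [I.Normal]
    (h : IsTameFiltration p e P I C) {f : G →* G'} (hf : Function.Surjective f)
    [(I.map f).Normal] : IsTameFiltration p e (P.map f) (I.map f) (C.map f) where
  isPGroup := h.isPGroup.map f
  commutator_le := by rw [← map_commutator]; exact map_mono h.commutator_le
  isCyclic :=
    have := h.isCyclic
    isCyclic_of_surjective (QuotientGroup.map I (I.map f) f (le_comap_map f I))
      (QuotientGroup.map_surjective_of_surjective _ _ _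
        ((QuotientGroup.mk'_surjective _).comp hf) _)
  commutator_le_sup := by
    rw [← map_commutator, ← map_powerSubgroup, ← Subgroup.map_sup]
    exact map_mono h.commutator_le_sup

lemma isSolvable_of_commutator_le {H K : Subgroup G} [Group.IsSolvable K] (h : ⁅H, H⁆ ≤ K) :
    Group.IsSolvable H := by
  have hle : _root_.commutator H ≤ K.subgroupOf H := by
    rwa [subgroupOf, ← map_le_iff_le_comap, map_subtype_commutator]
  have := Subgroup.Normal.of_commutator_le _ hle
  have : Group.IsSolvable (K.subgroupOf H) := Group.isSolvable_of_isSolvable_injective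
    (f := H.subtype.subgroupComap K) fun _ _ hxy ↦
      Subtype.ext (Subtype.ext (congrArg (fun z : K ↦ (z : G)) hxy))
  have := Normal.quotient_commutative_iff_commutator_le.2 hle
  have : Group.IsSolvable (H ⧸ K.subgroupOf H) := Group.isSolvable_of_comm mul_comm'
  exact (Group.isSolvable_iff_subgroup_quotient (K.subgroupOf H)).2 ⟨‹_›, ‹_›⟩

lemma IsTameFiltration.isSolvable [Finite G] {p e : ℕ} [Fact p.Prime] {P I C : Subgroup G}
    [I.Normal] (h : IsTameFiltration p e P I C) : Group.IsSolvable G := by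
  have := h.isPGroup.isNilpotent
  have : Group.IsSolvable I := isSolvable_of_commutator_le h.commutator_le
  have := h.isCyclic
  have : IsMulCommutative (G ⧸ I) := IsCyclic.isMulCommutative
  have : Group.IsSolvable (G ⧸ I) := Group.isSolvable_of_comm mul_comm'
  exact (Group.isSolvable_iff_subgroup_quotient I).2 ⟨‹_›, ‹_›⟩

lemma relIndex_sup_eq_of_normal [Finite G] (H K : Subgroup G) [K.Normal] :
    H.relIndex (H ⊔ K) = H.relIndex K := by
  have hmul (X Y : Subgroup G) (hXY : X ≤ Y) : X.relIndex Y * Nat.card X = Nat.card Y := by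
    rw [mul_comm, ← relIndex_bot_left, relIndex_mul_relIndex ⊥ X Y bot_le hXY, relIndex_bot_left]
  have h₁ := hmul _ _ (le_sup_left : H ≤ H ⊔ K)
  have h₂ := hmul _ _ (le_sup_right : K ≤ H ⊔ K)
  have h₃ := hmul _ _ (inf_le_left : H ⊓ K ≤ H)
  have h₄ := hmul _ _ (inf_le_right : H ⊓ K ≤ K)
  rw [relIndex_sup_right] at h₂
  rw [inf_relIndex_left] at h₃
  rw [inf_relIndex_right] at h₄
  refine Nat.eq_of_mul_eq_mul_right (Nat.card_pos (α := H)) ?_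
  rw [h₁, ← h₂, ← h₄, ← h₃]
  ring

lemma index_eq_card_of_inf_eq_bot [Finite G] {V S : Subgroup G} [V.Normal] (hinf : V ⊓ S = ⊥)
    (hsup : V ⊔ S = ⊤) : S.index = Nat.card V := by
  rw [← relIndex_top_right, ← hsup, sup_comm, relIndex_sup_eq_of_normal, ← inf_relIndex_right,
    inf_comm, hinf, relIndex_bot_left]

lemma eq_of_le_of_inf_eq_bot {X Y S : Subgroup G} [X.Normal] (hXY : X ≤ Y) (hY : Y ⊓ S = ⊥)
    (hX : X ⊔ S = ⊤) : X = Y := by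
  refine le_antisymm hXY fun y hy ↦ ?_
  obtain ⟨x, hx, s, hs, rfl⟩ := mem_sup_of_normal_left.1 (hX.ge (mem_top y))
  have hs' : s ∈ Y ⊓ S := ⟨(Y.mul_mem_cancel_left (hXY hx)).1 hy, hs⟩
  rw [hY, mem_bot] at hs'
  rwa [hs', mul_one]

lemma normal_of_le_normalizer_of_le_centralizer {X W S : Subgroup G} (hS : S ≤ normalizer X)
    (hW : X ≤ centralizer W) (hsup : W ⊔ S = ⊤) : X.Normal := by
  rw [← normalizer_eq_top_iff, eq_top_iff, ← hsup]
  exact sup_le ((le_centralizer_iff.1 hW).trans (centralizer_le_normalizer _)) hS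

/-- The action of `G` on a normal subgroup by conjugation. -/
abbrev conjAction (V : Subgroup G) [V.Normal] : MulDistribMulAction G V :=
  MulDistribMulAction.compHom V (MulAut.conjNormal (H := V))

attribute [local instance] conjAction

lemma coe_conjAction_smul {V : Subgroup G} [V.Normal] (g : G) (v : V) :
    ((g • v : V) : G) = g * v * g⁻¹ :=
  rfl

lemma isIrreducibleAction_of_isCoatom {V S : Subgroup G} [V.Normal] [IsMulCommutative V]
    (hS : IsCoatom S) (hinf : V ⊓ S = ⊥) : IsIrreducibleAction S V := by
  intro X hX
  rcases eq_or_ne V ⊥ with rfl | hV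
  · exact Or.inl (Subsingleton.elim _ _)
  have hVS : V ⊔ S = ⊤ := hS.2 _ (right_lt_sup.2 fun h ↦ hV (by rw [← hinf, inf_eq_left.2 h]))
  have hXV : X.map V.subtype ≤ V := map_subtype_le X
  have hnorm : S ≤ normalizer (X.map V.subtype) := by
    rw [le_normalizer_iff]
    rintro s hs _ ⟨x, hx, rfl⟩
    exact mem_map_of_mem V.subtype (hX ⟨s, hs⟩ x hx)
  have hnormal : (X.map V.subtype).Normal :=
    normal_of_le_normalizer_of_le_centralizer hnorm (hXV.trans V.le_centralizer) hVS
  by_cases hXS : X.map V.subtype ≤ S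
  · left
    rw [← map_eq_bot_iff_of_injective X V.subtype_injective, ← le_bot_iff, ← hinf]
    exact le_inf hXV hXS
  · right
    rw [← map_subtype_inj, ← MonoidHom.range_eq_map, range_subtype]
    exact eq_of_le_of_inf_eq_bot hXV hinf (hS.2 _ (right_lt_sup.2 hXS))

lemma powerSubgroup_le_of_isIrreducibleAction [Finite G] {V B : Subgroup G} [V.Normal]
    [IsMulCommutative V] [B.Normal] (hirr : IsIrreducibleAction G V) (hV : centralizer V = V)
    (hB : ⁅B, B⁆ ≤ V) : powerSubgroup (Nat.card V - 1) B ≤ V := by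
  have hcomm (b c : B) (v : V) : b • c • v = c • b • v := by
    have hbc : ⁅(b : G), (c : G)⁆ ∈ V := hB (commutator_mem_commutator b.2 c.2)
    have htriv (w : V) : ⁅(b : G), (c : G)⁆ • w = w :=
      Subtype.ext (mul_inv_eq_iff_eq_mul.2 (setLike_mul_comm hbc w.2))
    calc b • c • v = ⁅(b : G), (c : G)⁆ • c • b • v := by
          simp only [Subgroup.smul_def, smul_smul, commutatorElement_def]
          group
      _ = c • b • v := htriv _
  refine powerSubgroup_le_iff.2 fun x hx ↦ ?_
  refine hV.le (mem_centralizer_iff.2 fun v hv ↦ ?_)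
  have := pow_card_sub_one_smul_of_isIrreducibleAction hirr hcomm ⟨x, hx⟩ ⟨v, hv⟩
  have := congrArg (fun v : V ↦ (v : G)) this
  exact (mul_inv_eq_iff_eq_mul.1 this).symm

lemma commutator_le_of_isCyclic_quotient {C I V : Subgroup G} [I.Normal] [V.Normal]
    [IsCyclic (G ⧸ I)] (h : ⁅C, I⁆ ≤ V) : ⁅C, C⁆ ≤ V := by
  let f : C ⧸ (V ⊓ I).subgroupOf C →* G ⧸ I :=
    QuotientGroup.map _ I C.subtype (comap_mono inf_le_right)
  have hf : f.ker ≤ center _ := by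
    intro x hx
    obtain ⟨d, rfl⟩ := QuotientGroup.mk_surjective x
    have hdI : (d : G) ∈ I := (QuotientGroup.eq_one_iff _).1 hx
    refine mem_center_iff.2 fun y ↦ ?_
    obtain ⟨c, rfl⟩ := QuotientGroup.mk_surjective y
    rw [← commutatorElement_eq_one_iff_mul_comm]
    exact (QuotientGroup.eq_one_iff ⁅c, d⁆).2 ⟨h (commutator_mem_commutator c.2 hdI),
      commutator_le_right ⊤ I (commutator_mem_commutator (mem_top _) hdI)⟩
  have := f.isMulCommutative_of_isCyclic_of_ker_le_center hf
  rw [← map_subtype_commutator, map_le_iff_le_comap]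
  exact (Normal.quotient_commutative_iff_commutator_le.1 this).trans (comap_mono inf_le_left)

lemma exists_normal_isMulCommutative_ne_bot [Nontrivial G] [Group.IsSolvable G] :
    ∃ V : Subgroup G, V.Normal ∧ IsMulCommutative V ∧ V ≠ ⊥ := by
  classical
  have hex : ∃ k, derivedSeries G k = ⊥ := ‹Group.IsSolvable G›.1
  obtain ⟨k, hk⟩ := Nat.exists_eq_succ_of_ne_zero (n := Nat.find hex) fun h ↦
    top_ne_bot ((Nat.find_eq_zero hex).1 h)
  refine ⟨derivedSeries G k, inferInstance, ?_, Nat.find_min hex (by omega)⟩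
  rw [← commutator_self_eq_bot_iff, ← derivedSeries_succ, ← Nat.succ_eq_add_one, ← hk]
  exact Nat.find_spec hex

section Primitive

variable {S : Subgroup G} (hS : IsCoatom S) (hcore : S.normalCore = ⊥)

include hS hcore

lemma sup_eq_top_of_normalCore_eq_bot {W : Subgroup G} [W.Normal] (hW : W ≠ ⊥) : W ⊔ S = ⊤ :=
  hS.2 _ (right_lt_sup.2 fun h ↦ hW (le_bot_iff.1 (hcore ▸ normal_le_normalCore.2 h)))

lemma inf_eq_bot_of_le_centralizer {W Z : Subgroup G} [W.Normal] [Z.Normal] (hW : W ≠ ⊥)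
    (hZ : Z ≤ centralizer W) : Z ⊓ S = ⊥ := by
  have hnorm : S ≤ normalizer (Z ⊓ S : Subgroup G) := by
    rw [le_normalizer_iff]
    exact fun s hs z hz ↦ ⟨‹Z.Normal›.conj_mem z hz.1 s,
      S.mul_mem (S.mul_mem hs hz.2) (S.inv_mem hs)⟩
  have : (Z ⊓ S).Normal := normal_of_le_normalizer_of_le_centralizer hnorm (inf_le_left.trans hZ)
    (sup_eq_top_of_normalCore_eq_bot hS hcore hW)
  exact le_bot_iff.1 (hcore ▸ normal_le_normalCore.2 inf_le_right)

lemma centralizer_eq_self_of_normalCore_eq_bot {V : Subgroup G} [V.Normal] [IsMulCommutative V]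
    (hV : V ≠ ⊥) : centralizer V = V :=
  (eq_of_le_of_inf_eq_bot V.le_centralizer (inf_eq_bot_of_le_centralizer hS hcore hV le_rfl)
    (sup_eq_top_of_normalCore_eq_bot hS hcore hV)).symm

lemma le_of_normal_of_isMulCommutative {V W : Subgroup G} [V.Normal] [IsMulCommutative V]
    [W.Normal] (hV : V ≠ ⊥) (hW : W ≠ ⊥) : V ≤ W := by
  by_cases hVW : V ⊓ W = ⊥
  · refine absurd ?_ hW
    have hWV : W ≤ V := by
      rw [← centralizer_eq_self_of_normalCore_eq_bot hS hcore hV,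
        ← commutator_eq_bot_iff_le_centralizer, ← le_bot_iff, ← hVW, inf_comm]
      exact commutator_le_inf W V
    rw [← hVW, inf_eq_right.2 hWV]
  · exact inf_eq_left.1 (eq_of_le_of_inf_eq_bot inf_le_left
      (inf_eq_bot_of_le_centralizer hS hcore hV V.le_centralizer)
      (sup_eq_top_of_normalCore_eq_bot hS hcore hVW))

lemma le_of_isPGroup [Finite G] {p : ℕ} [Fact p.Prime] {V P : Subgroup G} [V.Normal]
    [IsMulCommutative V] [P.Normal] (hV : V ≠ ⊥) (hP : IsPGroup p P) : P ≤ V := by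
  rcases eq_or_ne P ⊥ with rfl | hP'
  · exact bot_le
  have := P.nontrivial_iff_ne_bot.2 hP'
  have hZ : (center P).map P.subtype ≠ ⊥ := by
    rw [Ne, map_eq_bot_iff_of_injective _ P.subtype_injective]
    exact hP.bot_lt_center.ne'
  have hVZ := le_of_normal_of_isMulCommutative hS hcore hV hZ
  rw [← centralizer_eq_self_of_normalCore_eq_bot hS hcore hV, le_centralizer_iff]
  refine hVZ.trans ?_
  rintro _ ⟨z, hz, rfl⟩
  exact mem_centralizer_iff.2 fun x hx ↦ congrArg P.subtype (mem_center_iff.1 hz ⟨x, hx⟩)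

theorem exists_kummerSubgroup_le [Finite G] {p n : ℕ} [Fact p.Prime] (hindex : S.index = p ^ n)
    {P I C : Subgroup G} [P.Normal] [I.Normal] [C.Normal]
    (h : IsTameFiltration p (p ^ n - 1) P I C) :
    ∃ V : Subgroup G, IsMulCommutative V ∧ V ⊓ S = ⊥ ∧ kummerSubgroup (p ^ n - 1) C ≤ V := by
  have := h.isSolvable
  have : Nontrivial G := by
    by_contra hG
    have := not_nontrivial_iff_subsingleton.1 hG
    exact hS.1 (Subsingleton.elim _ _)
  obtain ⟨V, hVn, hVc, hV⟩ := exists_normal_isMulCommutative_ne_bot (G := G)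
  have hVS := inf_eq_bot_of_le_centralizer hS hcore hV V.le_centralizer
  have hcard : Nat.card V = p ^ n := by
    rw [← hindex, index_eq_card_of_inf_eq_bot hVS (sup_eq_top_of_normalCore_eq_bot hS hcore hV)]
  have hcent := centralizer_eq_self_of_normalCore_eq_bot hS hcore hV
  have hirr : IsIrreducibleAction G V := fun X hX ↦
    isIrreducibleAction_of_isCoatom hS hVS X fun s ↦ hX s
  have hPV : P ≤ V := le_of_isPGroup hS hcore hV h.isPGroup
  have hpow {B : Subgroup G} [B.Normal] (hB : ⁅B, B⁆ ≤ V) : powerSubgroup (p ^ n - 1) B ≤ V :=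
    hcard ▸ powerSubgroup_le_of_isIrreducibleAction hirr hcent hB
  have hCI : ⁅C, I⁆ ≤ V :=
    h.commutator_le_sup.trans (sup_le hPV (hpow (h.commutator_le.trans hPV)))
  have := h.isCyclic
  have hCC : ⁅C, C⁆ ≤ V := commutator_le_of_isCyclic_quotient hCI
  exact ⟨V, hVc, hVS, sup_le hCC (hpow hCC)⟩

end Primitive

lemma isCoatom_map_of_ker_le {G' : Type*} [Group G'] {f : G →* G'} (hf : Function.Surjective f)
    {S : Subgroup G} (hS : IsCoatom S) (hker : f.ker ≤ S) : IsCoatom (S.map f) := by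
  have hcomap : (S.map f).comap f = S := comap_map_eq_self hker
  refine ⟨fun htop ↦ hS.1 (by rw [← hcomap, htop, comap_top]), fun X hX ↦ ?_⟩
  have hX' : X.comap f = ⊤ :=
    hS.2 _ (hcomap.symm.trans_lt ((comap_lt_comap_of_surjective hf).2 hX))
  rw [← map_comap_eq_self_of_surjective hf X, hX', map_top_of_surjective f hf]

lemma map_inf_map_eq_bot {G' : Type*} [Group G'] {f : G →* G'} {H K : Subgroup G}
    (hinf : H ⊓ K ≤ f.ker) (hker : f.ker ≤ K) : H.map f ⊓ K.map f = ⊥ := by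
  rw [eq_bot_iff]
  rintro _ ⟨⟨x, hx, rfl⟩, hfx⟩
  have hxK : x ∈ (K.map f).comap f := hfx
  rw [comap_map_eq_self hker] at hxK
  exact hinf ⟨hx, hxK⟩

theorem kummerSubgroup_inf_le_normalCore_and_commutator_le [Finite G] {p n : ℕ} [Fact p.Prime]
    {S : Subgroup G} (hS : IsCoatom S) (hindex : S.index = p ^ n) {P I C : Subgroup G} [P.Normal]
    [I.Normal] [C.Normal] (h : IsTameFiltration p (p ^ n - 1) P I C) :
    kummerSubgroup (p ^ n - 1) C ⊓ S ≤ S.normalCore ∧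
      ⁅kummerSubgroup (p ^ n - 1) C, kummerSubgroup (p ^ n - 1) C⁆ ≤ S.normalCore := by
  let π := QuotientGroup.mk' S.normalCore
  have hπ : Function.Surjective π := QuotientGroup.mk'_surjective _
  have hker : π.ker = S.normalCore := QuotientGroup.ker_mk' _
  have hcomap : (S.map π).comap π = S := comap_map_eq_self (hker.trans_le S.normalCore_le)
  have hcoatom := isCoatom_map_of_ker_le hπ hS (hker.trans_le S.normalCore_le)
  have hcore : (S.map π).normalCore = ⊥ := by
    rw [← map_comap_eq_self_of_surjective hπ (S.map π).normalCore, Subgroup.map_eq_bot_iff, hker]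
    exact normal_le_normalCore.2 ((comap_mono (normalCore_le _)).trans_eq hcomap)
  have hindex' : (S.map π).index = p ^ n := by
    rw [index_map_eq S hπ (hker.trans_le S.normalCore_le), hindex]
  have : (P.map π).Normal := ‹P.Normal›.map π hπ
  have : (I.map π).Normal := ‹I.Normal›.map π hπ
  have : (C.map π).Normal := ‹C.Normal›.map π hπ
  obtain ⟨V, hV, hVS, hle⟩ := exists_kummerSubgroup_le hcoatom hcore hindex' (h.map hπ)
  rw [← map_kummerSubgroup] at hle
  constructor
  · rw [← hker, ← Subgroup.map_eq_bot_iff, ← le_bot_iff, ← hVS]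
    exact (map_inf_le _ _ _).trans (inf_le_inf_right _ hle)
  · rw [← hker, ← Subgroup.map_eq_bot_iff, map_commutator, ← le_bot_iff,
      ← commutator_self_eq_bot_iff.2 hV]
    exact commutator_mono hle hle

open groupCohomology in
-- Every `x ∈ S` is `f x * y` with `f x ∈ V` and `y ∈ S'`, and `f` is a cocycle.
lemma exists_conj_mem_of_isMulCoboundary₁ {V S S' : Subgroup G} [V.Normal] [IsMulCommutative V]
    (hinf : V ⊓ S' = ⊥) (hsup : V ⊔ S' = ⊤)
    (hcob : ∀ f : S → V, IsMulCocycle₁ f → IsMulCoboundary₁ f) :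
    ∃ g : G, ∀ x ∈ S, g * x * g⁻¹ ∈ S' := by
  have hdec (x : G) : ∃ v : V, (v : G)⁻¹ * x ∈ S' := by
    obtain ⟨v, hv, y, hy, rfl⟩ := mem_sup_of_normal_left.1 (hsup.ge (mem_top x))
    exact ⟨⟨v, hv⟩, by simpa using hy⟩
  have huniq {x : G} {v w : V} (hv : (v : G)⁻¹ * x ∈ S') (hw : (w : G)⁻¹ * x ∈ S') : v = w := by
    have hvw : (v : G)⁻¹ * w ∈ V ⊓ S' :=
      ⟨V.mul_mem (V.inv_mem v.2) w.2, by simpa [mul_assoc] using S'.mul_mem hv (S'.inv_mem hw)⟩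
    rw [hinf, mem_bot, inv_mul_eq_one] at hvw
    exact Subtype.ext hvw
  choose f hf using hdec
  have hcocycle : IsMulCocycle₁ fun x : S ↦ f x := by
    refine fun x y ↦ huniq (hf (x * y : G)) ?_
    convert S'.mul_mem (hf x) (hf y) using 1
    simp only [Subgroup.smul_def, coe_mul, coe_conjAction_smul]
    group
  obtain ⟨v, hv⟩ := hcob _ hcocycle
  refine ⟨v, fun x hx ↦ ?_⟩
  have hfx : ((f x : V) : G) = x * v * x⁻¹ / v := congrArg Subtype.val (hv ⟨x, hx⟩).symm
  convert hf x using 1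
  rw [hfx, div_eq_mul_inv]
  group

lemma isSimpleGroup_quotient_of_isCoatom {S : Subgroup G} [S.Normal] (hS : IsCoatom S) :
    IsSimpleGroup (G ⧸ S) := by
  have hbot := isCoatom_map_of_ker_le (QuotientGroup.mk'_surjective S) hS
    (QuotientGroup.ker_mk' S).le
  rw [QuotientGroup.map_mk'_self, ← isSimpleOrder_iff_isCoatom_bot] at hbot
  have : Nontrivial (G ⧸ S) := Subgroup.nontrivial_iff.1 inferInstance
  exact ⟨fun X _ ↦ eq_bot_or_eq_top X⟩

lemma not_dvd_card_of_pow_eq_one [Finite G] {p n : ℕ} [Fact p.Prime] (hn : 1 ≤ n)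
    (h : ∀ x : G, x ^ (p ^ n - 1) = 1) : ¬ p ∣ Nat.card G := by
  intro hp
  obtain ⟨x, hx⟩ := exists_prime_orderOf_dvd_card' p hp
  have hdvd := Nat.dvd_sub (dvd_pow_self p (by lia : n ≠ 0)) (hx ▸ orderOf_dvd_of_pow_eq_one (h x))
  rw [Nat.sub_sub_self (Nat.one_le_pow _ _ (Nat.Prime.pos Fact.out))] at hdvd
  exact (Nat.Prime.one_lt Fact.out).ne' (Nat.dvd_one.1 hdvd)

lemma kummerSubgroup_ne_bot [Finite G] {p n : ℕ} [Fact p.Prime] (hn : 1 ≤ n) {S C : Subgroup G}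
    (hS : IsCoatom S) (hindex : S.index = p ^ n) (hGC : _root_.commutator G ≤ C)
    (hn1 : n = 1 → C = ⊤) : kummerSubgroup (p ^ n - 1) C ≠ ⊥ := by
  have := Subgroup.Normal.of_commutator_le _ hGC
  intro hbot
  have hp : p ∣ S.index := hindex ▸ dvd_pow_self p (by lia)
  by_cases hCS : C ≤ S
  · have hGS := hGC.trans hCS
    have := Subgroup.Normal.of_commutator_le _ hGS
    have := Normal.quotient_commutative_iff_commutator_le.2 hGS
    have : IsSimpleGroup (G ⧸ S) := isSimpleGroup_quotient_of_isCoatom hS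
    have hprime : (p ^ n).Prime := hindex ▸ IsSimpleGroup.prime_card
    exact hS.1 (top_unique ((hn1 hprime.eq_one_of_pow).ge.trans hCS))
  · have hsup : S ⊔ C = ⊤ := hS.2 _ (left_lt_sup.2 hCS)
    have hpC : p ∣ Nat.card C := by
      refine hp.trans ?_
      rw [← relIndex_top_right, ← hsup, relIndex_sup_eq_of_normal]
      exact relIndex_dvd_card _ _
    refine not_dvd_card_of_pow_eq_one hn (fun x : C ↦ ?_) hpC
    have hx : (x : G) ^ (p ^ n - 1) ∈ kummerSubgroup (p ^ n - 1) C := pow_mem_kummerSubgroup x.2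
    rw [hbot, mem_bot] at hx
    exact Subtype.ext hx

theorem exists_conj_mem_of_inf_eq_bot [Finite G] {p n : ℕ} [Fact p.Prime] (hn : 1 ≤ n)
    {S S' C : Subgroup G} (hS : IsCoatom S) (hindex : S.index = p ^ n)
    (hindex' : S'.index = p ^ n) (hGC : _root_.commutator G ≤ C) (hn1 : n = 1 → C = ⊤)
    [IsMulCommutative (kummerSubgroup (p ^ n - 1) C)]
    (hinf : kummerSubgroup (p ^ n - 1) C ⊓ S = ⊥) (hinf' : kummerSubgroup (p ^ n - 1) C ⊓ S' = ⊥) :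
    ∃ g : G, ∀ x ∈ S, g * x * g⁻¹ ∈ S' := by
  have := Subgroup.Normal.of_commutator_le _ hGC
  set V := kummerSubgroup (p ^ n - 1) C with hV_def
  have hsup : V ⊔ S = ⊤ := hS.2 _ (right_lt_sup.2 fun h ↦
    kummerSubgroup_ne_bot hn hS hindex hGC hn1 (by rw [← hV_def, ← hinf, inf_eq_left.2 h]))
  have hcard : Nat.card V = p ^ n := (index_eq_card_of_inf_eq_bot hinf hsup).symm.trans hindex
  have hsup' : V ⊔ S' = ⊤ := by
    have hrel : S'.relIndex (S' ⊔ V) = S'.index := by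
      rw [relIndex_sup_eq_of_normal, ← inf_relIndex_right, inf_comm, hinf', relIndex_bot_left,
        hcard, hindex']
    have hmul := relIndex_mul_index (le_sup_left : S' ≤ S' ⊔ V)
    rw [hrel, Nat.mul_eq_left index_ne_zero_of_finite, index_eq_one] at hmul
    rw [sup_comm, hmul]
  have hpow (c : C.subgroupOf S) : c ^ (p ^ n - 1) = 1 := by
    have hc : ((c : S) : G) ^ (p ^ n - 1) ∈ V ⊓ S :=
      ⟨pow_mem_kummerSubgroup c.2, S.pow_mem c.1.2 _⟩
    rw [hinf, mem_bot] at hc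
    exact Subtype.ext (Subtype.ext hc)
  refine exists_conj_mem_of_isMulCoboundary₁ hinf' hsup' fun f hf ↦
    isMulCoboundary₁_of_isIrreducibleAction (C := C.subgroupOf S)
      (isIrreducibleAction_of_isCoatom hS hinf) ?_ ?_ ?_ hf
  · rw [subgroupOf, ← map_le_iff_le_comap, map_subtype_commutator]
    exact (commutator_mono le_top le_top).trans hGC
  · rw [hcard]
    exact Nat.Coprime.pow_left n
      ((Nat.Prime.coprime_iff_not_dvd Fact.out).2 (not_dvd_card_of_pow_eq_one hn hpow))
  · rw [hcard]
    exact fun h ↦ by rw [hn1 h.eq_one_of_pow, top_subgroupOf]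

theorem exists_conj_mem_of_kummerSubgroup_inf_eq [Finite G] {p n : ℕ} [Fact p.Prime] (hn : 1 ≤ n)
    {S S' : Subgroup G} (hS : IsCoatom S) (hindex : S.index = p ^ n) (hindex' : S'.index = p ^ n)
    {P I C : Subgroup G} [P.Normal] [I.Normal] (h : IsTameFiltration p (p ^ n - 1) P I C)
    (hGC : _root_.commutator G ≤ C) (hn1 : n = 1 → C = ⊤)
    (hSS' : kummerSubgroup (p ^ n - 1) C ⊓ S = kummerSubgroup (p ^ n - 1) C ⊓ S') :
    ∃ g : G, ∀ x ∈ S, g * x * g⁻¹ ∈ S' := by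
  have := Subgroup.Normal.of_commutator_le _ hGC
  set V := kummerSubgroup (p ^ n - 1) C
  obtain ⟨hVS, hVV⟩ := kummerSubgroup_inf_le_normalCore_and_commutator_le hS hindex h
  have hVS_eq : V ⊓ S = V ⊓ S.normalCore :=
    le_antisymm (le_inf inf_le_left hVS) (inf_le_inf_left V S.normalCore_le)
  have : (V ⊓ S).Normal := by rw [hVS_eq]; infer_instance
  let π := QuotientGroup.mk' (V ⊓ S)
  have hπ : Function.Surjective π := QuotientGroup.mk'_surjective _
  have hker : π.ker = V ⊓ S := QuotientGroup.ker_mk' _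
  have hkS : π.ker ≤ S := hker.trans_le inf_le_right
  have hkS' : π.ker ≤ S' := hker.trans_le (hSS'.trans_le inf_le_right)
  have hmap : kummerSubgroup (p ^ n - 1) (C.map π) = V.map π := (map_kummerSubgroup π _ C).symm
  have hcomm : IsMulCommutative (kummerSubgroup (p ^ n - 1) (C.map π)) := by
    rw [hmap, ← commutator_self_eq_bot_iff, ← map_commutator, Subgroup.map_eq_bot_iff, hker,
      hVS_eq]
    exact le_inf V.commutator_le_self hVV
  have hcommutator : _root_.commutator (G ⧸ V ⊓ S) ≤ C.map π := by
    rw [_root_.commutator_def, ← map_top_of_surjective π hπ, ← map_commutator]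
    exact map_mono hGC
  have hinf : V.map π ⊓ S.map π = ⊥ := map_inf_map_eq_bot hker.ge hkS
  have hinf' : V.map π ⊓ S'.map π = ⊥ := map_inf_map_eq_bot (hSS'.symm.trans hker.symm).le hkS'
  obtain ⟨g, hg⟩ := exists_conj_mem_of_inf_eq_bot (S := S.map π) (S' := S'.map π) (C := C.map π)
    hn (isCoatom_map_of_ker_le hπ hS hkS) ((index_map_eq S hπ hkS).trans hindex)
    ((index_map_eq S' hπ hkS').trans hindex') hcommutator
    (fun h ↦ by rw [hn1 h, map_top_of_surjective π hπ]) (hmap ▸ hinf) (hmap ▸ hinf')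
  obtain ⟨g, rfl⟩ := hπ g
  refine ⟨g, fun x hx ↦ ?_⟩
  have := hg (π x) (mem_map_of_mem π hx)
  rw [← map_mul, ← map_inv, ← map_mul] at this
  rw [← comap_map_eq_self hkS']
  exact this

end PrimitiveGroups

section FiniteFieldAction

variable {G k : Type*} [Group G] [Field k] [MulSemiringAction G k]

lemma smulCommClass_zmod (p : ℕ) [Algebra (ZMod p) k] : SMulCommClass G (ZMod p) k where
  smul_comm g c x := by
    have hc : g • algebraMap (ZMod p) k c = algebraMap (ZMod p) k c :=
      RingHom.congr_fun (RingHom.ext_zmod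
        ((MulSemiringAction.toRingHom G k g).comp (algebraMap (ZMod p) k)) (algebraMap _ k)) c
    rw [Algebra.smul_def, Algebra.smul_def, smul_mul', hc]

variable [Finite k]

lemma exists_forall_smul_eq_pow_pow (p : ℕ) [Fact p.Prime] [CharP k p] (g : G) :
    ∃ m : ℕ, ∀ y : k, g • y = y ^ p ^ m := by
  let _ : Algebra (ZMod p) k := ZMod.algebra k p
  have := smulCommClass_zmod (G := G) (k := k) p
  obtain ⟨m, hm⟩ := (FiniteField.bijective_frobeniusAlgEquivOfAlgebraic_pow (ZMod p) k).2
    (MulSemiringAction.toAlgEquiv (ZMod p) k g)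
  refine ⟨m, fun y ↦ (DFunLike.congr_fun hm y).symm.trans ?_⟩
  dsimp only
  rw [AlgEquiv.coe_pow, FiniteField.coe_frobeniusAlgEquivOfAlgebraic_iterate, ZMod.card]

lemma isCyclic_quotient_of_mem_iff {N : Subgroup G} [N.Normal]
    (hN : ∀ g, g ∈ N ↔ ∀ y : k, g • y = y) : IsCyclic (G ⧸ N) := by
  obtain ⟨p, _⟩ := CharP.exists k
  have : Fact p.Prime := ⟨CharP.char_is_prime k p⟩
  let _ : Algebra (ZMod p) k := ZMod.algebra k p
  have := smulCommClass_zmod (G := G) (k := k) p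
  obtain rfl : N = (MulSemiringAction.toAlgAut G (ZMod p) k).ker := by
    ext g
    rw [hN, MonoidHom.mem_ker, AlgEquiv.ext_iff]
    rfl
  exact isCyclic_of_injective _ (QuotientGroup.kerLift_injective _)

end FiniteFieldAction

section RootsOfUnity

open IsLocalRing

variable {A : Type*} [CommRing A] [IsLocalRing A] {e : ℕ}

lemma eq_one_of_pow_eq_one_of_residue_eq_one (he : IsUnit (e : A)) {x : A} (hx : x ^ e = 1)
    (hres : residue A x = 1) : x = 1 := by
  have hsum : IsUnit (∑ i ∈ Finset.range e, x ^ i) := by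
    rw [← residue_ne_zero_iff_isUnit] at he ⊢
    simpa [hres] using he
  rw [← sub_eq_zero, ← hsum.mul_right_eq_zero, geom_sum_mul, hx, sub_self]

lemma isPrimitiveRoot_residue (he : IsUnit (e : A)) {ζ : A} (hζ : IsPrimitiveRoot ζ e) :
    IsPrimitiveRoot (residue A ζ) e where
  pow_eq_one := by rw [← map_pow, hζ.pow_eq_one, map_one]
  dvd_of_pow_eq_one l hl := hζ.dvd_of_pow_eq_one l <|
    eq_one_of_pow_eq_one_of_residue_eq_one he (by rw [pow_right_comm, hζ.pow_eq_one, one_pow])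
      (by rw [map_pow, hl])

end RootsOfUnity

section Inertia

open IsLocalRing

variable {A G : Type*} [CommRing A] [IsLocalRing A] [Group G] [MulSemiringAction G A]

lemma smul_mem_maximalIdeal (g : G) {x : A} (hx : x ∈ maximalIdeal A) :
    g • x ∈ maximalIdeal A := by
  rw [← residue_eq_zero_iff] at hx ⊢
  rw [ResidueField.residue_smul, hx, smul_zero]

instance inertia_maximalIdeal_normal : ((maximalIdeal A).inertia G).Normal where
  conj_mem σ hσ g x := by
    have h := smul_mem_maximalIdeal g (hσ (g⁻¹ • x))
    rwa [smul_sub, smul_inv_smul, ← mul_smul, ← mul_smul] at h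

lemma mem_inertia_maximalIdeal_iff {g : G} :
    g ∈ (maximalIdeal A).inertia G ↔ ∀ y : ResidueField A, g • y = y := by
  rw [residue_surjective.forall]
  refine forall_congr' fun x ↦ ?_
  rw [← ResidueField.residue_smul, ← sub_eq_zero, ← map_sub, residue_eq_zero_iff]
  rfl

lemma isCyclic_quotient_inertia [Finite (ResidueField A)] :
    IsCyclic (G ⧸ (maximalIdeal A).inertia G) :=
  isCyclic_quotient_of_mem_iff (k := ResidueField A) fun _ ↦ mem_inertia_maximalIdeal_iff

end Inertia

section WildInertia

open IsLocalRing

variable {A G : Type*} [CommRing A] [IsDomain A] [IsDiscreteValuationRing A] [Group G]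
  [MulSemiringAction G A] {ϖ : A}

/-- The unit `u` such that `g • ϖ = ϖ * u`, for a uniformizer `ϖ`. -/
noncomputable def uniformizerUnit (hϖ : Irreducible ϖ) (g : G) : Aˣ :=
  (IsDiscreteValuationRing.associated_of_irreducible A hϖ
    ((MulEquiv.irreducible_iff (MulSemiringAction.toRingEquiv G A g)).2 hϖ)).choose

lemma mul_uniformizerUnit (hϖ : Irreducible ϖ) (g : G) : ϖ * uniformizerUnit hϖ g = g • ϖ :=
  (IsDiscreteValuationRing.associated_of_irreducible A hϖ
    ((MulEquiv.irreducible_iff (MulSemiringAction.toRingEquiv G A g)).2 hϖ)).choose_spec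

lemma uniformizerUnit_mul (hϖ : Irreducible ϖ) (g h : G) :
    (uniformizerUnit hϖ (g * h) : A) = uniformizerUnit hϖ g * g • (uniformizerUnit hϖ h : A) := by
  apply mul_left_cancel₀ hϖ.ne_zero
  rw [mul_uniformizerUnit, mul_smul, ← mul_uniformizerUnit hϖ h, smul_mul', ← mul_assoc,
    mul_uniformizerUnit]

/-- The tame character `σ ↦ σ(ϖ) / ϖ` of the inertia group, with values in the units of the
residue field. Its kernel is the wild inertia group. -/
noncomputable def tameCharacter (hϖ : Irreducible ϖ) :
    (maximalIdeal A).inertia G →* (ResidueField A)ˣ :=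
  MonoidHom.mk' (fun σ ↦ Units.map (residue A) (uniformizerUnit hϖ σ.1)) fun σ τ ↦ by
    ext
    simp [uniformizerUnit_mul, mem_inertia_maximalIdeal_iff.1 σ.2]

/-- The wild inertia group, as a subgroup of the whole group. -/
noncomputable def wildInertia (G : Type*) [Group G] [MulSemiringAction G A]
    (hϖ : Irreducible ϖ) : Subgroup G :=
  (tameCharacter (G := G) hϖ).ker.map (Subgroup.subtype _)

lemma tameCharacter_conj (hϖ : Irreducible ϖ) (g : G) (σ : (maximalIdeal A).inertia G) :
    (tameCharacter hϖ (MulAut.conjNormal g σ) : ResidueField A) =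
      g • (tameCharacter hϖ σ : ResidueField A) := by
  have hcocycle : residue A (uniformizerUnit hϖ ((MulAut.conjNormal g σ : _) * g)) =
      residue A (uniformizerUnit hϖ (g * σ)) := by
    rw [MulAut.conjNormal_apply, inv_mul_cancel_right]
  rw [uniformizerUnit_mul, uniformizerUnit_mul, map_mul, map_mul, ResidueField.residue_smul,
    ResidueField.residue_smul, mem_inertia_maximalIdeal_iff.1 (MulAut.conjNormal g σ).2,
    mul_comm] at hcocycle
  exact mul_left_cancel₀ ((residue_ne_zero_iff_isUnit _).2 (Units.isUnit _)) hcocycle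

lemma mem_wildInertia_iff {hϖ : Irreducible ϖ} {g : G} : g ∈ wildInertia G hϖ ↔
    g ∈ (maximalIdeal A).inertia G ∧ residue A (uniformizerUnit hϖ g) = 1 := by
  simp [wildInertia, MonoidHom.mem_ker, tameCharacter, Units.ext_iff, and_comm]

instance wildInertia_normal (hϖ : Irreducible ϖ) : (wildInertia G hϖ).Normal where
  conj_mem := by
    rintro _ ⟨σ, hσ, rfl⟩ g
    refine ⟨MulAut.conjNormal g σ, ?_, MulAut.conjNormal_apply g σ⟩
    rw [SetLike.mem_coe, MonoidHom.mem_ker] at hσ ⊢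
    rw [Units.ext_iff, tameCharacter_conj, hσ, Units.val_one, smul_one]

lemma commutator_inertia_le_wildInertia (hϖ : Irreducible ϖ) :
    ⁅(maximalIdeal A).inertia G, (maximalIdeal A).inertia G⁆ ≤ wildInertia G hϖ := by
  rw [← Subgroup.map_subtype_commutator]
  exact Subgroup.map_mono (Abelianization.commutator_subset_ker _)

lemma smul_sub_mem_pow_succ {hϖ : Irreducible ϖ} {σ : G} (hσ : σ ∈ wildInertia G hϖ) {N : ℕ} {x : A}
    (hx : x ∈ maximalIdeal A ^ N) : σ • x - x ∈ maximalIdeal A ^ (N + 1) := by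
  obtain ⟨hσI, hu⟩ := mem_wildInertia_iff.1 hσ
  rw [hϖ.maximalIdeal_eq, Ideal.span_singleton_pow, Ideal.mem_span_singleton'] at hx
  obtain ⟨a, rfl⟩ := hx
  have hfactor : σ • (a * ϖ ^ N) - a * ϖ ^ N =
      (σ • a * uniformizerUnit hϖ σ ^ N - a) * ϖ ^ N := by
    rw [smul_mul', smul_pow', ← mul_uniformizerUnit hϖ]
    ring
  rw [hfactor, pow_succ']
  refine Ideal.mul_mem_mul ?_ (Ideal.pow_mem_pow
    (hϖ.maximalIdeal_eq ▸ Ideal.mem_span_singleton_self ϖ) N)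
  rw [← residue_eq_zero_iff, map_sub, map_mul, map_pow, hu, ResidueField.residue_smul,
    mem_inertia_maximalIdeal_iff.1 hσI, one_pow, mul_one, sub_self]

-- The sum of the `m` conjugates of `x` is fixed by `σ`, and it is congruent to `m * x`.
lemma mem_inertia_pow_succ {hϖ : Irreducible ϖ} {σ : G} (hσ : σ ∈ wildInertia G hϖ) {m N : ℕ}
    (hm : IsUnit (m : A)) (hσm : σ ^ m = 1) (hN : σ ∈ (maximalIdeal A ^ N).inertia G) :
    σ ∈ (maximalIdeal A ^ (N + 1)).inertia G := by
  intro x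
  have hfixed : σ • ∑ i ∈ Finset.range m, σ ^ i • x = ∑ i ∈ Finset.range m, σ ^ i • x := by
    have hshift := Finset.sum_range_succ' (fun i ↦ σ ^ i • x) m
    rw [Finset.sum_range_succ, hσm, pow_zero, add_left_inj] at hshift
    simpa only [Finset.smul_sum, ← mul_smul, ← pow_succ'] using hshift.symm
  have hmem : ∑ i ∈ Finset.range m, σ ^ i • x - m • x ∈ maximalIdeal A ^ N := by
    rw [← Finset.card_range m, ← Finset.sum_const, Finset.card_range, ← Finset.sum_sub_distrib]
    exact Ideal.sum_mem _ fun i _ ↦ pow_mem hN i x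
  have h := smul_sub_mem_pow_succ hσ hmem
  rw [smul_sub, hfixed, sub_sub_sub_cancel_left, smul_comm, ← smul_sub,
    nsmul_eq_mul] at h
  rw [Submodule.mem_toAddSubgroup, ← neg_mem_iff, neg_sub]
  exact (Ideal.unit_mul_mem_iff_mem _ hm).1 h

lemma eq_one_of_mem_wildInertia_of_pow_eq_one [FaithfulSMul G A] {hϖ : Irreducible ϖ} {σ : G}
    (hσ : σ ∈ wildInertia G hϖ) {m : ℕ} (hm : IsUnit (m : A)) (hσm : σ ^ m = 1) : σ = 1 := by
  have hinertia (N : ℕ) : σ ∈ (maximalIdeal A ^ N).inertia G := by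
    induction N with
    | zero => intro x; simp
    | succ N ih => exact mem_inertia_pow_succ hσ hm hσm ih
  refine FaithfulSMul.eq_of_smul_eq_smul (α := A) fun x ↦ ?_
  rw [one_smul, ← sub_eq_zero, ← Ideal.mem_bot,
    ← Ideal.iInf_pow_eq_bot_of_isLocalRing _ (maximalIdeal.isMaximal A).ne_top, Ideal.mem_iInf]
  exact fun N ↦ hinertia N x

variable {p e : ℕ} [CharP (ResidueField A) p]

lemma isUnit_natCast_pow_sub_one [Fact p.Prime] {n : ℕ} (hn : n ≠ 0) :
    IsUnit ((p ^ n - 1 : ℕ) : A) := by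
  rw [← residue_ne_zero_iff_isUnit, map_natCast,
    Nat.cast_sub (Nat.one_le_pow _ _ (Fact.out : p.Prime).pos)]
  simp [hn]

lemma isPGroup_wildInertia [Finite G] [FaithfulSMul G A] [Fact p.Prime] (hϖ : Irreducible ϖ) :
    IsPGroup p (wildInertia G hϖ) := by
  intro σ
  obtain ⟨k, m, hpm, horder⟩ :=
    Nat.exists_eq_pow_mul_and_not_dvd (orderOf_pos σ).ne' p (Fact.out : p.Prime).ne_one
  have hm : IsUnit (m : A) := by
    rwa [← residue_ne_zero_iff_isUnit, map_natCast, Ne, CharP.cast_eq_zero_iff _ p]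
  refine ⟨k, Subtype.ext (eq_one_of_mem_wildInertia_of_pow_eq_one (σ ^ p ^ k).2 hm ?_)⟩
  rw [← Subgroup.coe_pow, ← pow_mul, ← horder, pow_orderOf_eq_one, Subgroup.coe_one]

lemma exists_forall_smul_residueField_eq_pow [Fact p.Prime] [Finite (ResidueField A)]
    (he : IsUnit (e : A)) {ζ : A} (hζ : IsPrimitiveRoot ζ e) {c : G} (hc : c • ζ = ζ) :
    ∃ j : ℕ, ∀ y : ResidueField A, c • y = y ^ (e * j + 1) := by
  obtain ⟨m, hm⟩ := exists_forall_smul_eq_pow_pow (k := ResidueField A) p c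
  have hpm : 1 ≤ p ^ m := Nat.one_le_pow _ _ (Fact.out : p.Prime).pos
  have hres := isPrimitiveRoot_residue he hζ
  have hdvd : e ∣ p ^ m - 1 := by
    have he0 : e ≠ 0 := by
      rintro rfl
      simp at he
    apply hres.dvd_of_pow_eq_one
    apply mul_right_cancel₀ (hres.ne_zero he0)
    rw [one_mul, pow_sub_one_mul (by lia), ← hm, ← ResidueField.residue_smul, hc]
  obtain ⟨j, hj⟩ := hdvd
  exact ⟨j, fun y ↦ by rw [← hj, Nat.sub_add_cancel hpm, hm]⟩

lemma commutator_stabilizer_inertia_le (hϖ : Irreducible ϖ) [Fact p.Prime]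
    [Finite (ResidueField A)] (he : IsUnit (e : A)) {ζ : A} (hζ : IsPrimitiveRoot ζ e) :
    ⁅MulAction.stabilizer G ζ, (maximalIdeal A).inertia G⁆ ≤
      wildInertia G hϖ ⊔ powerSubgroup e ((maximalIdeal A).inertia G) := by
  rw [Subgroup.commutator_le]
  intro c hc σ hσ
  obtain ⟨j, hj⟩ := exists_forall_smul_residueField_eq_pow (p := p) he hζ hc
  lift σ to (maximalIdeal A).inertia G using hσ
  have hker : MulAut.conjNormal c σ * (σ ^ (e * j + 1))⁻¹ ∈ (tameCharacter (G := G) hϖ).ker := by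
    rw [MonoidHom.mem_ker, map_mul, map_inv, mul_inv_eq_one, Units.ext_iff, tameCharacter_conj,
      hj, map_pow, Units.val_pow_eq_pow_val]
  have hsplit : ⁅c, (σ : G)⁆ =
      ↑(MulAut.conjNormal c σ * (σ ^ (e * j + 1))⁻¹) * ((σ : G) ^ e) ^ j := by
    simp only [commutatorElement_def, Subgroup.coe_mul, MulAut.conjNormal_apply, Subgroup.coe_inv,
      Subgroup.coe_pow, ← pow_mul]
    group
  rw [hsplit]
  exact Subgroup.mul_mem_sup ⟨_, hker, rfl⟩
    (pow_mem (powerSubgroup_le_iff.1 le_rfl _ σ.2) j)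

theorem isTameFiltration_wildInertia [Finite G] [FaithfulSMul G A] [Fact p.Prime]
    [Finite (ResidueField A)] (hϖ : Irreducible ϖ) (he : IsUnit (e : A)) {ζ : A}
    (hζ : IsPrimitiveRoot ζ e) :
    IsTameFiltration p e (wildInertia G hϖ) ((maximalIdeal A).inertia G)
      (MulAction.stabilizer G ζ) where
  isPGroup := isPGroup_wildInertia hϖ
  commutator_le := commutator_inertia_le_wildInertia hϖ
  isCyclic := isCyclic_quotient_inertia
  commutator_le_sup := commutator_stabilizer_inertia_le (p := p) hϖ he hζ

lemma smul_eq_self_of_pow_sub_one_eq_one [Fact p.Prime] [Finite (ResidueField A)] (g : G) {ζ : A}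
    (hζ : ζ ^ (p - 1) = 1) : g • ζ = ζ := by
  have hunit : IsUnit ((p - 1 : ℕ) : A) := by
    simpa using isUnit_natCast_pow_sub_one (A := A) (p := p) one_ne_zero
  have hp : p - 1 ≠ 0 := Nat.sub_ne_zero_of_lt (Fact.out : p.Prime).one_lt
  have hres : residue A (g • ζ) = residue A ζ := by
    obtain ⟨m, hm⟩ := exists_forall_smul_eq_pow_pow (k := ResidueField A) p g
    have hfrob : Function.IsFixedPt (· ^ p) (residue A ζ) := by
      change residue A ζ ^ p = _
      rw [← pow_sub_one_mul (Fact.out : p.Prime).ne_zero, ← map_pow, hζ, map_one, one_mul]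
    rw [ResidueField.residue_smul, hm]
    simpa only [pow_iterate] using (hfrob.iterate m).eq
  have hratio : g • ζ * ζ ^ (p - 1 - 1) = 1 := by
    apply eq_one_of_pow_eq_one_of_residue_eq_one hunit
    · rw [mul_pow, ← smul_pow', hζ, smul_one, pow_right_comm, hζ, one_pow, one_mul]
    · rw [map_mul, hres, ← map_mul, mul_pow_sub_one hp, hζ, map_one]
  calc g • ζ = g • ζ * (ζ ^ (p - 1 - 1) * ζ) := by rw [pow_sub_one_mul hp, hζ, mul_one]
    _ = ζ := by rw [← mul_assoc, hratio, one_mul]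

end WildInertia

section LocalField

open IsLocalRing
open scoped NormedField Valued

section Normed

variable {M : Type*} [NontriviallyNormedField M] [IsUltrametricDist M]

open Valued.integer in
variable (M) in
lemma isDiscreteValuationRing_integer_and_finite_residueField [ProperSpace M] :
    IsDiscreteValuationRing 𝒪[M] ∧ Finite 𝓀[M] := by
  have : CompactSpace 𝒪[M] := by
    have hball : (𝒪[M] : Set M) = Metric.closedBall 0 1 := by
      ext x
      simp [Valued.integer.mem_iff]
    exact isCompact_iff_compactSpace.1 (hball ▸ isCompact_closedBall 0 1)
  let _ : (Valued.v : Valuation M NNReal).RankOne :=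
    inferInstanceAs (NormedField.valuation (K := M)).RankOne
  exact (compactSpace_iff_completeSpace_and_isDiscreteValuationRing_and_finite_residueField.1
    this).2

variable (M) in
lemma charP_residueField_integer (p : ℕ) [Fact p.Prime] [NormedAlgebra ℚ_[p] M] :
    CharP 𝓀[M] p := by
  rw [CharP.charP_iff_prime_eq_zero Fact.out, ← map_natCast (residue 𝒪[M]), residue_eq_zero_iff,
    mem_maximalIdeal, mem_nonunits_iff, Valued.integer.isUnit_iff_norm_eq_one]
  have hnorm : ‖(p : 𝒪[M])‖ = ‖algebraMap ℚ_[p] M p‖ := by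
    rw [map_natCast]
    rfl
  rw [hnorm, norm_algebraMap']
  exact Padic.norm_p_lt_one.ne

variable {G : Type*} [Group G] [MulSemiringAction G M]

lemma isInvariantSubring_integer (hG : ∀ (g : G) (x : M), ‖g • x‖ = ‖x‖) :
    IsInvariantSubring G (𝒪[M] : Subring M) where
  smul_mem g x hx := by
    rw [Valued.integer.mem_iff] at hx ⊢
    rwa [hG]

lemma faithfulSMul_integer [IsInvariantSubring G (𝒪[M] : Subring M)] [FaithfulSMul G M] :
    FaithfulSMul G 𝒪[M] where
  eq_of_smul_eq_smul {g h} hgh := by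
    have hinteger {x : M} (hx : ‖x‖ ≤ 1) : g • x = h • x :=
      congrArg Subtype.val (hgh ⟨x, Valued.integer.mem_iff.2 hx⟩)
    refine FaithfulSMul.eq_of_smul_eq_smul (α := M) fun x ↦ ?_
    rcases le_total ‖x‖ 1 with hx | hx
    · exact hinteger hx
    · have hinv := hinteger ((norm_inv x).trans_le (inv_le_one_of_one_le₀ hx))
      rwa [smul_inv'', smul_inv'', inv_inj] at hinv

lemma exists_isTameFiltration_of_norm_smul_eq {p n : ℕ} [Fact p.Prime] (hn : n ≠ 0)
    [ProperSpace M] [NormedAlgebra ℚ_[p] M] [Finite G] [FaithfulSMul G M]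
    (hG : ∀ (g : G) (x : M), ‖g • x‖ = ‖x‖) {ζ : M} (hζ : IsPrimitiveRoot ζ (p ^ n - 1)) :
    ∃ (P I : Subgroup G) (_ : P.Normal) (_ : I.Normal),
      IsTameFiltration p (p ^ n - 1) P I (MulAction.stabilizer G ζ) ∧
      (n = 1 → MulAction.stabilizer G ζ = ⊤) := by
  obtain ⟨_, _⟩ := isDiscreteValuationRing_integer_and_finite_residueField M
  have := charP_residueField_integer M p
  have := isInvariantSubring_integer hG
  have := faithfulSMul_integer (G := G) (M := M)
  obtain ⟨ϖ, hϖ⟩ := IsDiscreteValuationRing.exists_irreducible 𝒪[M]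
  have hpn : p ^ n - 1 ≠ 0 :=
    Nat.sub_ne_zero_of_lt (Nat.one_lt_pow hn (Fact.out : p.Prime).one_lt)
  lift ζ to 𝒪[M] using Valued.integer.mem_iff.2
    (isOfFinOrder_iff_pow_eq_one.2 ⟨_, hpn.bot_lt, hζ.pow_eq_one⟩).norm_eq_one.le
  have hζ' : IsPrimitiveRoot ζ (p ^ n - 1) :=
    .of_map_of_injective (f := 𝒪[M].subtype) hζ Subtype.val_injective
  have hstabilizer : MulAction.stabilizer G (ζ : M) = MulAction.stabilizer G ζ :=
    Subgroup.ext fun g ↦ (Subtype.ext_iff (a1 := g • ζ) (a2 := ζ)).symm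
  rw [hstabilizer]
  refine ⟨wildInertia G hϖ, (maximalIdeal 𝒪[M]).inertia G, inferInstance, inferInstance,
    isTameFiltration_wildInertia hϖ (isUnit_natCast_pow_sub_one hn) hζ', ?_⟩
  rintro rfl
  rw [pow_one] at hζ'
  exact eq_top_iff.2 fun g _ ↦ smul_eq_self_of_pow_sub_one_eq_one (p := p) g hζ'.pow_eq_one

end Normed

theorem exists_isTameFiltration {p n : ℕ} [Fact p.Prime] (hn : n ≠ 0) {M : Type*} [Field M]
    [Algebra ℚ_[p] M] [FiniteDimensional ℚ_[p] M] {G : Type*} [Group G] [Finite G]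
    [MulSemiringAction G M] [SMulCommClass G ℚ_[p] M] [FaithfulSMul G M] {ζ : M}
    (hζ : IsPrimitiveRoot ζ (p ^ n - 1)) :
    ∃ (P I : Subgroup G) (_ : P.Normal) (_ : I.Normal),
      IsTameFiltration p (p ^ n - 1) P I (MulAction.stabilizer G ζ) ∧
      (n = 1 → MulAction.stabilizer G ζ = ⊤) := by
  let _ : NontriviallyNormedField M := spectralNorm.nontriviallyNormedField ℚ_[p] M
  let _ : NormedAlgebra ℚ_[p] M := spectralNorm.normedAlgebra ℚ_[p] M
  have : IsUltrametricDist M := IsUltrametricDist.of_normedAlgebra ℚ_[p]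
  have : ProperSpace M := FiniteDimensional.proper ℚ_[p] M
  exact exists_isTameFiltration_of_norm_smul_eq hn (fun g x ↦
    (spectralNorm_eq_of_equiv (MulSemiringAction.toAlgEquiv ℚ_[p] M g) x).symm) hζ

end LocalField

section Kummer

open IntermediateField

variable {k M : Type*} [Field k] [Field M] [Algebra k M] {e : ℕ}

lemma apply_eq_self_of_mem_kummerSubgroup_top {ζ : k} (hζ : IsPrimitiveRoot ζ e) (he : e ≠ 0)
    {σ : Gal(M/k)} (hσ : σ ∈ kummerSubgroup e ⊤) {x : M} (hx : x ^ e ∈ (algebraMap k M).range) :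
    σ x = x := by
  have : NeZero e := ⟨he⟩
  obtain rfl | hx₀ := eq_or_ne x 0
  · exact map_zero σ
  have eigen (c : Gal(M/k)) : ∃ a : k, a ^ e = 1 ∧ c x = a • x := by
    obtain ⟨b, hb⟩ := hx
    have hroot : (c x / x) ^ e = 1 := by
      rw [div_pow, ← map_pow, ← hb, c.commutes, hb, div_self (pow_ne_zero e hx₀)]
    obtain ⟨i, -, hi⟩ := (hζ.map_of_injective (algebraMap k M).injective).eq_pow_of_pow_eq_one hroot
    refine ⟨ζ ^ i, by rw [pow_right_comm, hζ.pow_eq_one, one_pow], ?_⟩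
    rw [Algebra.smul_def, map_pow, hi, div_mul_cancel₀ _ hx₀]
  have hcomm (c d : Gal(M/k)) : (c * d) • x = (d * c) • x := by
    obtain ⟨a, -, hc⟩ := eigen c
    obtain ⟨b, -, hd⟩ := eigen d
    simp only [mul_smul, AlgEquiv.smul_def, hc, hd, map_smul, smul_comm a b]
  suffices kummerSubgroup e ⊤ ≤ MulAction.stabilizer Gal(M/k) x from this hσ
  refine sup_le (Subgroup.commutator_le.2 fun c _ d _ ↦ ?_) (powerSubgroup_le_iff.2 fun c _ ↦ ?_)
  · rw [MulAction.mem_stabilizer_iff, commutatorElement_def, mul_assoc, mul_smul,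
      hcomm c⁻¹ d⁻¹, ← mul_smul]
    simp only [mul_assoc, mul_inv_cancel_left, mul_inv_cancel, one_smul]
  · obtain ⟨a, ha, hc⟩ := eigen c
    have hpow (m : ℕ) : (c ^ m) • x = a ^ m • x := by
      induction m with
      | zero => simp
      | succ m ih =>
        rw [pow_succ', mul_smul, ih, smul_comm, AlgEquiv.smul_def, hc, pow_succ, mul_smul]
    rw [MulAction.mem_stabilizer_iff, hpow, ha, one_smul]

lemma mem_kummerSubgroup_top_iff [FiniteDimensional k M] [IsGalois k M] {ζ : k}
    (hζ : IsPrimitiveRoot ζ e) (he : e ≠ 0) {σ : Gal(M/k)} :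
    σ ∈ kummerSubgroup e ⊤ ↔ ∀ x : M, x ^ e ∈ (algebraMap k M).range → σ x = x := by
  refine ⟨fun hσ x ↦ apply_eq_self_of_mem_kummerSubgroup_top hζ he hσ, fun h ↦ ?_⟩
  have : NeZero e := ⟨he⟩
  have : HasEnoughRootsOfUnity k e := ⟨⟨ζ, hζ⟩, inferInstance⟩
  let A := Gal(M/k) ⧸ kummerSubgroup e (⊤ : Subgroup Gal(M/k))
  have : IsMulCommutative A :=
    Subgroup.Normal.quotient_commutative_iff_commutator_le.2 le_sup_left
  have hpow (a : A) : a ^ e = 1 :=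
    a.inductionOn' fun c ↦ (QuotientGroup.eq_one_iff _).2 (pow_mem_kummerSubgroup trivial)
  have := HasEnoughRootsOfUnity.of_dvd k (Monoid.exponent_dvd_of_forall_pow_eq_one hpow)
  by_contra hσ
  obtain ⟨χ, hχ⟩ := CommGroup.exists_apply_ne_one_of_hasEnoughRootsOfUnity A k
    (mt (QuotientGroup.eq_one_iff σ).1 hσ)
  let f (c : Gal(M/k)) : Mˣ := Units.map (algebraMap k M).toMonoidHom (χ c)
  have hf : groupCohomology.IsMulCocycle₁ f := fun c d ↦ Units.ext <| by
    simp [f, AlgEquiv.smul_units_def, mul_comm]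
  obtain ⟨y, hy⟩ := groupCohomology.isMulCoboundary₁_of_isMulCocycle₁_of_aut_to_units f hf
  have hy' (c : Gal(M/k)) : c y = algebraMap k M (χ c) * y :=
    congrArg Units.val (div_eq_iff_eq_mul.1 (hy c))
  have hye : (y : M) ^ e ∈ (algebraMap k M).range := by
    refine (IsGalois.mem_range_algebraMap_iff_fixed _).2 fun c ↦ ?_
    rw [map_pow, hy', mul_pow, ← map_pow, ← Units.val_pow_eq_pow_val, ← map_pow, hpow, map_one,
      Units.val_one, map_one, one_mul]
  refine hχ (Units.ext ((algebraMap k M).injective ?_))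
  rw [Units.val_one, map_one, ← mul_eq_right₀ y.ne_zero, ← hy', h y hye]

/-- The subfield of `M` generated by the `e`-th roots of the elements of `F`, that is, the maximal
Kummer extension of `F` of exponent `e` inside `M` when `F` contains the `e`-th roots of unity. It
contains `F` because `x ^ e ∈ F` for `x ∈ F`. -/
def kummerField (F : IntermediateField k M) (e : ℕ) : IntermediateField k M :=
  adjoin k {x | x ^ e ∈ F}

lemma le_kummerField (F : IntermediateField k M) (e : ℕ) : F ≤ kummerField F e :=
  fun _ hx ↦ subset_adjoin k _ (pow_mem hx e)

lemma mem_fixingSubgroup_adjoin_iff {S : Set M} {σ : Gal(M/k)} :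
    σ ∈ (adjoin k S).fixingSubgroup ↔ ∀ x ∈ S, σ x = x :=
  (mem_fixingSubgroup_iff _ _).trans (forall_mem_adjoin_smul_eq_self_iff k σ)

theorem fixingSubgroup_kummerField [FiniteDimensional k M] [IsGalois k M]
    {F : IntermediateField k M} {ζ : F} (hζ : IsPrimitiveRoot ζ e) (he : e ≠ 0) :
    (kummerField F e).fixingSubgroup = kummerSubgroup e F.fixingSubgroup := by
  let f : Gal(M/F) →* Gal(M/k) := F.fixingSubgroup.subtype.comp (fixingSubgroupEquiv F).symm
  have hf (τ : Gal(M/F)) : f τ ∈ (kummerField F e).fixingSubgroup ↔ τ ∈ kummerSubgroup e ⊤ := by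
    rw [kummerField, mem_fixingSubgroup_adjoin_iff, mem_kummerSubgroup_top_iff hζ he]
    simp [f, fixingSubgroupEquiv]
  have hF : (⊤ : Subgroup Gal(M/F)).map f = F.fixingSubgroup := by
    rw [← MonoidHom.range_eq_map, MonoidHom.range_comp,
      MonoidHom.range_eq_top.2 (fixingSubgroupEquiv F).symm.surjective, ← MonoidHom.range_eq_map,
      Subgroup.range_subtype]
  rw [← hF, ← map_kummerSubgroup]
  refine le_antisymm (fun σ hσ ↦ ?_) ?_
  · obtain ⟨τ, -, rfl⟩ : σ ∈ Subgroup.map f ⊤ := hF ▸ fixingSubgroup_le (le_kummerField F e) hσ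
    exact Subgroup.mem_map_of_mem f ((hf τ).1 hσ)
  · rintro _ ⟨τ, hτ, rfl⟩
    exact (hf τ).2 hτ

lemma fixingSubgroup_adjoin_simple (ζ : M) :
    k⟮ζ⟯.fixingSubgroup = MulAction.stabilizer Gal(M/k) ζ :=
  Subgroup.ext fun _ ↦ mem_fixingSubgroup_adjoin_iff.trans forall_eq

lemma commutator_le_stabilizer {ζ : M} (hζ : IsPrimitiveRoot ζ e) (he : e ≠ 0) :
    _root_.commutator Gal(M/k) ≤ MulAction.stabilizer Gal(M/k) ζ := by
  have : NeZero e := ⟨he⟩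
  refine (Abelianization.commutator_subset_ker (hζ.autToPow k)).trans fun σ hσ ↦ ?_
  rw [MulAction.mem_stabilizer_iff, AlgEquiv.smul_def, ← hζ.autToPow_spec k,
    MonoidHom.mem_ker.1 hσ, ← map_one (hζ.autToPow k), hζ.autToPow_spec k, AlgEquiv.one_apply]

end Kummer

section Galois

open IntermediateField Module

lemma isCoatom_fixingSubgroup {k M : Type*} [Field k] [Field M] [Algebra k M]
    [FiniteDimensional k M] [IsGalois k M] {E : IntermediateField k M} (hE : IsAtom E) :
    IsCoatom E.fixingSubgroup :=
  (OrderIso.isAtom_iff (IsGalois.intermediateFieldEquivSubgroup (F := k) (E := M)) E).2 hE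

lemma nonempty_algEquiv_of_conj_mem {k M : Type*} [Field k] [Field M] [Algebra k M]
    [FiniteDimensional k M] [IsGalois k M] {E E' : IntermediateField k M}
    (hEE' : finrank k E = finrank k E') {g : Gal(M/k)}
    (hg : ∀ σ ∈ E.fixingSubgroup, g * σ * g⁻¹ ∈ E'.fixingSubgroup) : Nonempty (E ≃ₐ[k] E') := by
  have hle : E' ≤ E.map (g : M →ₐ[k] M) := by
    rw [← IsGalois.fixedField_fixingSubgroup (E.map (g : M →ₐ[k] M)), le_iff_le,
      IsGalois.map_fixingSubgroup]
    rintro _ ⟨σ, hσ, rfl⟩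
    exact hg σ hσ
  have heq : E' = E.map (g : M →ₐ[k] M) := eq_of_le_of_finrank_eq hle <|
    hEE'.symm.trans (equivMap E (g : M →ₐ[k] M)).toLinearEquiv.finrank_eq
  exact ⟨(equivMap E (g : M →ₐ[k] M)).trans (equivOfEq heq.symm)⟩

theorem nonempty_algEquiv_of_sup_kummerField_eq_of_isGalois {p n : ℕ} [Fact p.Prime] (hn : 1 ≤ n)
    {k M : Type*} [Field k] [Algebra ℚ_[p] k] [Field M] [Algebra ℚ_[p] M]
    [FiniteDimensional ℚ_[p] M] [Algebra k M] [IsScalarTower ℚ_[p] k M] [IsGalois k M]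
    {ζ : M} (hζ : IsPrimitiveRoot ζ (p ^ n - 1)) {E E' : IntermediateField k M}
    (hE : IsAtom E) (hdeg : finrank k E = p ^ n) (hdeg' : finrank k E' = p ^ n)
    (hcomp : E ⊔ kummerField k⟮ζ⟯ (p ^ n - 1) = E' ⊔ kummerField k⟮ζ⟯ (p ^ n - 1)) :
    Nonempty (E ≃ₐ[k] E') := by
  have : FiniteDimensional k M := .right ℚ_[p] k M
  have : SMulCommClass Gal(M/k) ℚ_[p] M :=
    ⟨fun g q x ↦ (g.restrictScalars ℚ_[p]).toLinearMap.map_smul q x⟩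
  have he : p ^ n - 1 ≠ 0 := Nat.sub_ne_zero_of_lt
    (Nat.one_lt_pow (Nat.one_le_iff_ne_zero.1 hn) (Fact.out : p.Prime).one_lt)
  have hζ' : IsPrimitiveRoot (AdjoinSimple.gen k ζ) (p ^ n - 1) :=
    .of_map_of_injective (f := algebraMap k⟮ζ⟯ M) hζ (algebraMap k⟮ζ⟯ M).injective
  obtain ⟨P, I, _, _, hP, hn1⟩ :=
    exists_isTameFiltration (Nat.one_le_iff_ne_zero.1 hn) (G := Gal(M/k)) hζ
  have hinf : kummerSubgroup (p ^ n - 1) (MulAction.stabilizer Gal(M/k) ζ) ⊓ E.fixingSubgroup =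
      kummerSubgroup (p ^ n - 1) (MulAction.stabilizer Gal(M/k) ζ) ⊓ E'.fixingSubgroup := by
    rw [← fixingSubgroup_adjoin_simple, ← fixingSubgroup_kummerField hζ' he, inf_comm,
      ← fixingSubgroup_sup, hcomp, fixingSubgroup_sup, inf_comm]
  obtain ⟨g, hg⟩ := exists_conj_mem_of_kummerSubgroup_inf_eq hn (isCoatom_fixingSubgroup hE)
    (by rw [← finrank_eq_fixingSubgroup_index, hdeg])
    (by rw [← finrank_eq_fixingSubgroup_index, hdeg']) hP (commutator_le_stabilizer hζ he) hn1 hinf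
  exact nonempty_algEquiv_of_conj_mem (hdeg.trans hdeg'.symm) hg

end Galois

section Descent

open IntermediateField Module

variable {k Ω : Type*} [Field k] [Field Ω] [Algebra k Ω]

lemma exists_finite_subset_le_sup_adjoin {E E' : IntermediateField k Ω} [FiniteDimensional k E]
    {S : Set Ω} (h : E ≤ E' ⊔ adjoin k S) : ∃ T ⊆ S, T.Finite ∧ E ≤ E' ⊔ adjoin k T := by
  have hE : IsCompactElement E := by
    obtain ⟨t, rfl⟩ : E.FG := essFiniteType_iff.1 inferInstance
    exact adjoin_finset_isCompactElement t
  rw [← adjoin_self k E', ← adjoin_union, ← biSup_adjoin_simple, ← iSup_subtype''] at h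
  obtain ⟨s, hs⟩ := CompleteLattice.IsCompactElement.exists_finset_of_le_iSup _ hE _ h
  refine ⟨Subtype.val '' (s : Set ↥((E' : Set Ω) ∪ S)) ∩ S, Set.inter_subset_right,
    (s.finite_toSet.image Subtype.val).inter_of_left S, hs.trans (iSup₂_le fun x hx ↦ ?_)⟩
  rw [adjoin_simple_le_iff]
  obtain hxE | hxS := x.2
  · exact le_sup_left (α := IntermediateField k Ω) hxE
  · exact le_sup_right (α := IntermediateField k Ω)
      (subset_adjoin k _ ⟨Set.mem_image_of_mem _ hx, hxS⟩)

lemma exists_finite_subset_sup_adjoin_eq {E E' : IntermediateField k Ω} [FiniteDimensional k E]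
    [FiniteDimensional k E'] {S : Set Ω} (h : E ⊔ adjoin k S = E' ⊔ adjoin k S) :
    ∃ T ⊆ S, T.Finite ∧ E ⊔ adjoin k T = E' ⊔ adjoin k T := by
  obtain ⟨T, hTS, hT, hET⟩ := exists_finite_subset_le_sup_adjoin (le_sup_left.trans h.le)
  obtain ⟨T', hTS', hT', hET'⟩ := exists_finite_subset_le_sup_adjoin (le_sup_left.trans h.ge)
  refine ⟨T ∪ T', Set.union_subset hTS hTS', hT.union hT', le_antisymm ?_ ?_⟩
  · exact sup_le (hET.trans (sup_le_sup_left (adjoin.mono k _ _ Set.subset_union_left) E'))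
      le_sup_right
  · exact sup_le (hET'.trans (sup_le_sup_left (adjoin.mono k _ _ Set.subset_union_right) E))
      le_sup_right

lemma isAtom_of_isAtom_lift {M : IntermediateField k Ω} {E : IntermediateField k M}
    (hE : IsAtom (lift E)) : IsAtom E := by
  have hlift : StrictMono (lift : IntermediateField k M → IntermediateField k Ω) :=
    Monotone.strictMono_of_injective (fun _ _ ↦ map_mono M.val) (lift_injective M)
  refine ⟨fun hbot ↦ hE.1 (by rw [hbot, lift_bot]), fun F hF ↦ lift_injective M ?_⟩
  rw [lift_bot, hE.2 _ (hlift hF)]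

lemma exists_lift_sup_kummerField_eq [IsGalois k Ω] {E E' F : IntermediateField k Ω}
    [FiniteDimensional k E] [FiniteDimensional k E'] [FiniteDimensional k F] {e : ℕ}
    (h : E ⊔ kummerField F e = E' ⊔ kummerField F e) :
    ∃ (M : IntermediateField k Ω) (_ : FiniteDimensional k M) (_ : IsGalois k M)
      (E₀ E₀' F₀ : IntermediateField k M), lift E₀ = E ∧ lift E₀' = E' ∧ lift F₀ = F ∧
        E₀ ⊔ kummerField F₀ e = E₀' ⊔ kummerField F₀ e := by
  obtain ⟨T, hTF, hT, hsup⟩ := exists_finite_subset_sup_adjoin_eq h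
  have := hT.to_subtype
  have : FiniteDimensional k (adjoin k T) :=
    finiteDimensional_adjoin fun x _ ↦ Algebra.IsIntegral.isIntegral x
  let M := normalClosure k ↥(E ⊔ E' ⊔ F ⊔ adjoin k T) Ω
  have hM : E ⊔ E' ⊔ F ⊔ adjoin k T ≤ M := le_normalClosure _
  simp only [sup_le_iff] at hM
  obtain ⟨⟨⟨hEM, hEM'⟩, hFM⟩, hTM⟩ := hM
  have hTL : adjoin k T ≤ lift (kummerField (restrict hFM) e) :=
    adjoin_le_iff.2 fun x hx ↦ (mem_lift ⟨x, adjoin_le_iff.1 hTM hx⟩).2 <|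
      subset_adjoin k _ <| (mem_restrict hFM _).2 (hTF hx)
  refine ⟨M, inferInstance, ⟨⟩, restrict hEM, restrict hEM', restrict hFM, lift_restrict _,
    lift_restrict _, lift_restrict _, lift_injective M ?_⟩
  rw [lift_sup, lift_sup, lift_restrict, lift_restrict, ← sup_eq_right.2 hTL, ← sup_assoc, hsup,
    sup_assoc]

end Descent

section Main

open IntermediateField Module

lemma isAtom_of_forall_le_eq_bot_or_eq {k Ω : Type*} [Field k] [Field Ω] [Algebra k Ω]
    {E : IntermediateField k Ω} (hE : finrank k E ≠ 1)
    (h : ∀ F : IntermediateField k Ω, F ≤ E → F = ⊥ ∨ F = E) : IsAtom E :=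
  ⟨by rintro rfl; exact hE IntermediateField.finrank_bot,
    fun F hF ↦ (h F hF.le).resolve_right hF.ne⟩

theorem stmt_13_general {p n : ℕ} [Fact p.Prime] (hn : 1 ≤ n) {K Ω : Type*} [Field K]
    [Algebra ℚ_[p] K] [FiniteDimensional ℚ_[p] K] [Field Ω] [Algebra K Ω] [IsGalois K Ω] {ζ : Ω}
    (hζ : IsPrimitiveRoot ζ (p ^ n - 1)) {E E' : IntermediateField K Ω} (hE : IsAtom E)
    (hdeg : finrank K E = p ^ n) (hdeg' : finrank K E' = p ^ n)
    (hcomp : E ⊔ kummerField K⟮ζ⟯ (p ^ n - 1) = E' ⊔ kummerField K⟮ζ⟯ (p ^ n - 1)) :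
    Nonempty (E ≃ₐ[K] E') := by
  have hpos : 0 < p ^ n := pow_pos (Fact.out : p.Prime).pos n
  have : FiniteDimensional K E := .of_finrank_pos (hdeg ▸ hpos)
  have : FiniteDimensional K E' := .of_finrank_pos (hdeg' ▸ hpos)
  have : FiniteDimensional K K⟮ζ⟯ := adjoin.finiteDimensional (Algebra.IsIntegral.isIntegral ζ)
  obtain ⟨M, _, _, E₀, E₀', F₀, rfl, rfl, hF₀, hcomp₀⟩ := exists_lift_sup_kummerField_eq hcomp
  have hζM : ζ ∈ M := lift_le F₀ (hF₀ ▸ mem_adjoin_simple_self K ζ)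
  have hF₀' : F₀ = K⟮(⟨ζ, hζM⟩ : M)⟯ :=
    lift_injective M (hF₀.trans (lift_adjoin_simple K M ⟨ζ, hζM⟩).symm)
  let _ : Algebra ℚ_[p] M := ((algebraMap K M).comp (algebraMap ℚ_[p] K)).toAlgebra
  have : IsScalarTower ℚ_[p] K M := .of_algebraMap_eq fun _ ↦ rfl
  have : FiniteDimensional ℚ_[p] M := .trans ℚ_[p] K M
  obtain ⟨φ⟩ := nonempty_algEquiv_of_sup_kummerField_eq_of_isGalois hn
    (hζ.of_map_of_injective (f := M.val) (ζ := ⟨ζ, hζM⟩) M.val.injective)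
    (isAtom_of_isAtom_lift hE) ((liftAlgEquiv E₀).toLinearEquiv.finrank_eq.trans hdeg)
    ((liftAlgEquiv E₀').toLinearEquiv.finrank_eq.trans hdeg') (hF₀' ▸ hcomp₀)
  exact ⟨(liftAlgEquiv E₀).symm.trans (φ.trans (liftAlgEquiv E₀'))⟩

end Main

/-- Two primitive extensions `E`, `E'` of `K` inside `Ω`, each of degree `p ^ n` over `K`
and with the same compositum with `L_n`, are isomorphic as `K`-algebras. -/
theorem stmt_13 (p : ℕ) [hp : Fact p.Prime] (n : ℕ) (hn : 1 ≤ n)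
    (Ω : Type) [Field Ω] [Algebra ℚ_[p] Ω] [IsAlgClosure ℚ_[p] Ω]
    (K : IntermediateField ℚ_[p] Ω) [FiniteDimensional ℚ_[p] ↥K]
    (ζ : Ω) (hζ : IsPrimitiveRoot ζ (p ^ n - 1))
    (Kn : IntermediateField ↥K Ω) (hKn : Kn = IntermediateField.adjoin ↥K {ζ})
    (Ln : IntermediateField ↥K Ω)
    (hLn : Ln = Kn ⊔ IntermediateField.adjoin ↥K {x : Ω | x ^ (p ^ n - 1) ∈ Kn})
    (E E' : IntermediateField ↥K Ω)
    (hE : Module.finrank ↥K ↥E = p ^ n) (hE' : Module.finrank ↥K ↥E' = p ^ n)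
    (hprim : ∀ F : IntermediateField ↥K Ω, F ≤ E → F = ⊥ ∨ F = E)
    (hprim' : ∀ F : IntermediateField ↥K Ω, F ≤ E' → F = ⊥ ∨ F = E')
    (hcomp : E ⊔ Ln = E' ⊔ Ln) :
    Nonempty (↥E ≃ₐ[↥K] ↥E') := by
  have hlt : 1 < p ^ n := Nat.one_lt_pow (Nat.one_le_iff_ne_zero.1 hn) hp.out.one_lt
  have hLn' : Ln = kummerField Kn (p ^ n - 1) := hLn.trans (sup_eq_right.2 (le_kummerField Kn _))
  subst hKn hLn'
  exact stmt_13_general hn hζ (isAtom_of_forall_le_eq_bot_or_eq (hE ▸ hlt.ne') hprim) hE hE' hcomp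
end

section
/- Fix an algebraic closure Ω of the field ℚ_2 of 2-adic numbers. There is exactly one intermediate field E of Ω over ℚ_2 such that E is a finite Galois extension of ℚ_2 whose Galois group Gal(E / ℚ_2) is isomorphic to the alternating group A_4 on four letters. -/
/-!
Let `E / ℚ_2` be Galois with group `A₄` and let `K` be the fixed field of the Klein four-group. Like
any cyclic cubic field, `K` is generated by a root of one of Shanks's simplest cubics, from which
Hensel's lemma produces a root of `X ^ 3 - 3 * X + 1`; so `K` is the unramified cubic extension.
By Kummer theory `E = K(√a, √(σ a))` for some `a ∈ K` whose norm is a square. Since `σ` is the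
Frobenius on the ring of integers of `K`, computing modulo `2` and `4` shows that an element of
square norm is, up to squares, either `1` or `2 * β - 3` for a root `β` of the cubic. Hence `E`
contains square roots `d₁`, `d₂`, `d₃` of the three numbers `2 * β - 3`, with `d₁ * d₂ * d₃ = 1`,
and the four elements `(± d₁ ± d₂ ± d₃ - 1) / 2` with an even number of minus signs are the roots of
the Eisenstein quartic `X ^ 4 + 2 * X ^ 3 + 6 * X ^ 2 + 4 * X + 2`.

Its splitting field therefore lies in `E`. The degree of that field is divisible by `4` because of
the quartic and by `3` because of the cubic, and no automorphism acts as a transposition on the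
roots; so its Galois group is `A₄`, and it equals `E` by comparison of degrees.
-/

namespace DyadicA4

open Polynomial

section PadicInt

variable {p : ℕ} [Fact p.Prime]

@[norm_cast]
theorem padicInt_coe_ofNat (n : ℕ) [n.AtLeastTwo] : ((ofNat(n) : ℤ_[p]) : ℚ_[p]) = ofNat(n) :=
  PadicInt.coe_natCast n

theorem norm_eq_one_of_not_dvd {x : ℤ_[p]} (h : ¬ (p : ℤ_[p]) ∣ x) : ‖x‖ = 1 :=
  (PadicInt.norm_le_one x).eq_of_not_lt (mt (PadicInt.norm_lt_one_iff_dvd x).mp h)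

theorem exists_root_of_dvd_eval (F : ℤ_[p][X]) (a : ℤ_[p]) (ha : (p : ℤ_[p]) ∣ F.eval a)
    (ha' : ¬ (p : ℤ_[p]) ∣ F.derivative.eval a) : ∃ z, F.eval z = 0 := by
  obtain ⟨z, hz, -⟩ := hensels_lemma (F := F) (a := a) (by
    simpa [norm_eq_one_of_not_dvd ha'] using (PadicInt.norm_lt_one_iff_dvd _).mpr ha)
  exact ⟨z, by simpa using hz⟩

theorem aeval_ne_zero_of_eval_map_toZMod_ne_zero {F : ℤ_[p][X]} (hF : F.Monic)
    (h : ∀ y, (F.map PadicInt.toZMod).eval y ≠ 0) (z : ℚ_[p]) : aeval z F ≠ 0 := by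
  intro hz
  obtain ⟨y, rfl⟩ := IsIntegrallyClosed.algebraMap_eq_of_integral (R := ℤ_[p]) ⟨F, hF, hz⟩
  rw [aeval_algebraMap_apply, FaithfulSMul.algebraMap_eq_zero_iff, coe_aeval_eq_eval] at hz
  exact h (PadicInt.toZMod y) (by rw [eval_map_apply, hz, map_zero])

theorem exists_coe_eq_or_exists_dvd_coe_eq_inv (t : ℚ_[p]) :
    (∃ s : ℤ_[p], (s : ℚ_[p]) = t) ∨
      t ≠ 0 ∧ ∃ s : ℤ_[p], (p : ℤ_[p]) ∣ s ∧ (s : ℚ_[p]) = t⁻¹ := by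
  by_cases h : ‖t‖ ≤ 1
  · exact .inl ⟨⟨t, h⟩, rfl⟩
  · rw [not_le] at h
    have h' : ‖t⁻¹‖ < 1 := by simpa using inv_lt_one_of_one_lt₀ h
    exact .inr ⟨norm_pos_iff.mp (one_pos.trans h), ⟨t⁻¹, h'.le⟩,
      (PadicInt.norm_lt_one_iff_dvd _).mp h', rfl⟩

theorem two_dvd_or_two_dvd_sub_one (x : ℤ_[2]) : 2 ∣ x ∨ 2 ∣ x - 1 := by
  have key : ∀ y : ℤ_[2], 2 ∣ y ↔ PadicInt.toZMod y = 0 := fun y => by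
    rw [← RingHom.mem_ker, PadicInt.ker_toZMod, PadicInt.maximalIdeal_eq_span_p,
      Ideal.mem_span_singleton, Nat.cast_ofNat]
  rw [key, key, map_sub, map_one]
  generalize PadicInt.toZMod x = y
  decide +revert

theorem not_two_dvd_one_add {x : ℤ_[2]} (h : 2 ∣ x) : ¬ 2 ∣ 1 + x := by
  rw [dvd_add_left h]
  simpa using PadicInt.prime_p (p := 2) |>.not_dvd_one

theorem sq_sub_self_add_one_ne_zero (z : ℚ_[2]) : z ^ 2 - z + 1 ≠ 0 := by
  have h := aeval_ne_zero_of_eval_map_toZMod_ne_zero (p := 2) (F := X ^ 2 - X + 1)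
    (by monicity!) (by simp) z
  simpa using h

theorem cube_sub_three_mul_add_one_ne_zero (z : ℚ_[2]) : z ^ 3 - 3 * z + 1 ≠ 0 := by
  have h := aeval_ne_zero_of_eval_map_toZMod_ne_zero (p := 2) (F := X ^ 3 - 3 * X + 1)
    (by monicity!) (by simpa using by decide) z
  simpa [map_ofNat (aeval (R := ℤ_[2]) z) 3] using h

end PadicInt

section Shanks

/-- The value at `x` of Shanks's simplest cubic with parameter `t`. Its roots are permuted
cyclically by `x ↦ 1 - 1 / x`, and every cyclic cubic field is generated by a root of one. -/
def shanks {R : Type*} [CommRing R] (t x : R) : R := x ^ 3 - t * x ^ 2 + (t - 3) * x + 1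

theorem map_shanks {R S : Type*} [CommRing R] [CommRing S] (f : R →+* S) (t x : R) :
    f (shanks t x) = shanks (f t) (f x) := by
  simp [shanks, map_ofNat]

variable {F : Type*} [Field F] {t x u ρ : F}

theorem shanks_inv (hx : x ≠ 0) (h : shanks t x = 0) : shanks (3 - t) x⁻¹ = 0 := by
  unfold shanks at h ⊢
  field_simp
  linear_combination h

/- The Möbius transformation below commutes with `x ↦ 1 - 1 / x`, so it carries one simplest cubic
to another; the condition on `u` makes the new parameter `0`. -/
theorem cube_eq_of_shanks_eq_zero (h : shanks t x = 0)
    (hu : 9 * (u ^ 2 - u) = t * (u ^ 3 - 3 * u + 1)) (hxu : x + u - 1 ≠ 0) :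
    ((u * x - 1) / (x + u - 1)) ^ 3 = 3 * ((u * x - 1) / (x + u - 1)) - 1 := by
  unfold shanks at h
  field_simp
  linear_combination (u ^ 3 - 3 * u + 1) * h - (x ^ 2 - x) * hu

theorem eq_or_eq_or_eq_of_shanks_eq_zero (hρ : shanks t ρ = 0) (h : shanks t x = 0) :
    x = ρ ∨ x = (ρ - 1) / ρ ∨ x = -1 / (ρ - 1) := by
  unfold shanks at hρ h
  have hρ0 : ρ ≠ 0 := by rintro rfl; simp at hρ
  have hρ1 : ρ - 1 ≠ 0 := by
    intro h1
    obtain rfl := sub_eq_zero.mp h1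
    exact one_ne_zero (by linear_combination -hρ)
  have hprod : (x - ρ) * ((x * ρ - (ρ - 1)) * (x * (ρ - 1) - -1)) = 0 := by
    linear_combination (ρ ^ 2 - ρ) * h - (x ^ 2 - x) * hρ
  rw [eq_div_iff hρ0, eq_div_iff hρ1]
  simpa only [mul_eq_zero, sub_eq_zero] using hprod

theorem exists_padic_eq_of_even (t : ℤ_[2]) (ht : 2 ∣ t) :
    ∃ u : ℚ_[2], 9 * (u ^ 2 - u) = t * (u ^ 3 - 3 * u + 1) := by
  obtain ⟨u, hu⟩ := exists_root_of_dvd_eval (p := 2)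
    (C 9 * (X ^ 2 - X) - C t * (X ^ 3 - C 3 * X + 1)) 0 (by simpa using ht) (by
      have h := not_two_dvd_one_add (x := -10 + 3 * t)
        (dvd_add ⟨-5, by norm_num⟩ (ht.mul_left 3))
      convert h using 2
      · norm_num
      · simp only [derivative_sub, derivative_mul, derivative_add, derivative_C, derivative_X,
          derivative_one, derivative_X_pow, eval_sub, eval_mul, eval_add, eval_pow, eval_C, eval_X,
          eval_zero, eval_one, Nat.cast_ofNat, zero_pow two_ne_zero, pow_one, Nat.add_one_sub_one]
        ring)
  have hu' : 9 * (u ^ 2 - u) = t * (u ^ 3 - 3 * u + 1) := by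
    simpa [sub_eq_zero] using hu
  exact ⟨u, by exact_mod_cast congrArg ((↑) : ℤ_[2] → ℚ_[2]) hu'⟩

theorem exists_padic_shanks_eq_zero_of_even_inv {t : ℚ_[2]} (ht0 : t ≠ 0) {s : ℤ_[2]}
    (hs : 2 ∣ s) (hst : (s : ℚ_[2]) = t⁻¹) : ∃ ρ, shanks t ρ = 0 := by
  obtain ⟨ρ, hρ⟩ := exists_root_of_dvd_eval (p := 2)
    (C s * X ^ 3 - X ^ 2 + C (1 - 3 * s) * X + C s) 0 (by simpa using hs) (by
      have h := not_two_dvd_one_add (x := -3 * s) (hs.mul_left _)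
      convert h using 2
      · norm_num
      · simp only [derivative_sub, derivative_mul, derivative_add, derivative_C, derivative_X,
          derivative_X_pow, eval_sub, eval_mul, eval_add, eval_pow, eval_C, eval_X, eval_zero,
          eval_one, Nat.cast_ofNat, zero_pow two_ne_zero, pow_one, Nat.add_one_sub_one]
        ring)
  refine ⟨ρ, ?_⟩
  have h : s * ρ ^ 3 - ρ ^ 2 + (1 - 3 * s) * ρ + s = 0 := by simpa using hρ
  have h' : (s : ℚ_[2]) * ρ ^ 3 - ρ ^ 2 + (1 - 3 * s) * ρ + s = 0 := by
    exact_mod_cast congrArg ((↑) : ℤ_[2] → ℚ_[2]) h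
  rw [hst] at h'
  unfold shanks
  field_simp at h'
  linear_combination h'

variable [Algebra ℚ_[2] F]

theorem exists_cube_eq_of_shanks_even {t : ℤ_[2]} (ht : 2 ∣ t)
    (hx : x ∉ Set.range (algebraMap ℚ_[2] F)) (h : shanks (algebraMap ℚ_[2] F t) x = 0) :
    ∃ α : F, α ^ 3 = 3 * α - 1 := by
  obtain ⟨u, hu⟩ := exists_padic_eq_of_even t ht
  refine ⟨_, cube_eq_of_shanks_eq_zero h (u := algebraMap ℚ_[2] F u) ?_ fun h0 => hx ⟨1 - u, ?_⟩⟩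
  · simpa [map_ofNat] using congrArg (algebraMap ℚ_[2] F) hu
  · rw [map_sub, map_one]
    linear_combination -h0

theorem exists_cube_eq_of_shanks_eq_zero {t : ℚ_[2]}
    (hx : x ∉ Set.range (algebraMap ℚ_[2] F)) (h : shanks (algebraMap ℚ_[2] F t) x = 0) :
    ∃ α : F, α ^ 3 = 3 * α - 1 := by
  rcases exists_coe_eq_or_exists_dvd_coe_eq_inv t with ⟨t, rfl⟩ | ⟨ht0, s, hs, hst⟩
  · rcases two_dvd_or_two_dvd_sub_one t with ht | ht
    · exact exists_cube_eq_of_shanks_even ht hx h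
    · have hx0 : x ≠ 0 := fun h0 => hx ⟨0, by rw [h0, map_zero]⟩
      refine exists_cube_eq_of_shanks_even (x := x⁻¹) (t := 3 - t) ?_ ?_ ?_
      · rw [show 3 - t = 2 - (t - 1) by ring]
        exact dvd_sub_self_left.mpr ht
      · rintro ⟨y, hy⟩
        exact hx ⟨y⁻¹, by rw [map_inv₀, hy, inv_inv]⟩
      · simpa [map_ofNat, padicInt_coe_ofNat] using shanks_inv hx0 h
  · obtain ⟨ρ, hρ⟩ := exists_padic_shanks_eq_zero_of_even_inv ht0 (by exact_mod_cast hs) hst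
    have hρ' : shanks (algebraMap ℚ_[2] F t) (algebraMap ℚ_[2] F ρ) = 0 := by
      rw [← map_shanks, hρ, map_zero]
    rcases eq_or_eq_or_eq_of_shanks_eq_zero hρ' h with rfl | rfl | rfl
    · exact (hx ⟨ρ, rfl⟩).elim
    · exact (hx ⟨(ρ - 1) / ρ, by simp⟩).elim
    · exact (hx ⟨-1 / (ρ - 1), by simp⟩).elim

end Shanks

section CubicGenerator

/-- `σ` generates the Galois group of a Galois cubic extension `K / F`. (The trivial extension with
`σ = 1` is not excluded.) -/
structure IsCubicGenerator {F K : Type*} [Field F] [Field K] [Algebra F K] (σ : K ≃ₐ[F] K) :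
    Prop where
  apply_three : ∀ x, σ (σ (σ x)) = x
  mem_range_of_fixed : ∀ x, σ x = x → x ∈ Set.range (algebraMap F K)

variable {F K : Type*} [Field F] [Field K] [Algebra F K]

theorem isCubicGenerator_of_finrank_eq_three [FiniteDimensional F K] [IsGalois F K]
    (h : Module.finrank F K = 3) {σ : K ≃ₐ[F] K} (hσ : σ ≠ 1) : IsCubicGenerator σ := by
  have hcard : Nat.card (K ≃ₐ[F] K) = 3 := by rw [IsGalois.card_aut_eq_finrank, h]
  have : Fact (Nat.Prime 3) := ⟨Nat.prime_three⟩
  have hpow : σ ^ 3 = 1 := hcard ▸ pow_card_eq_one'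
  refine ⟨fun x => DFunLike.congr_fun hpow x, fun x hx => ?_⟩
  refine (IsGalois.mem_range_algebraMap_iff_fixed x).mpr fun τ => ?_
  have hτ : τ ∈ Subgroup.zpowers σ := mem_zpowers_of_prime_card hcard hσ
  have hstab : σ ∈ MulAction.stabilizer (K ≃ₐ[F] K) x := hx
  exact (Subgroup.zpowers_le.mpr hstab) hτ

theorem IsCubicGenerator.exists_shanks_eq_zero {σ : K ≃ₐ[F] K} (hσ : IsCubicGenerator σ)
    (hσ1 : σ ≠ 1) : ∃ (t : F) (x : K), σ x = 1 - 1 / x ∧ shanks (algebraMap F K t) x = 0 := by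
  obtain ⟨a, ha⟩ : ∃ a, σ a ≠ a := by
    by_contra! h
    exact hσ1 (AlgEquiv.ext h)
  set y := a - σ a with hy
  have hy0 : y ≠ 0 := sub_ne_zero.mpr ha.symm
  have htr : σ (σ y) = -y - σ y := by simp only [hy, map_sub, hσ.apply_three]; ring
  have hσy : σ y ≠ 0 := by simpa
  set x := -σ y / y with hx
  have hx0 : x ≠ 0 := div_ne_zero (neg_ne_zero.mpr hσy) hy0
  have hσx : σ x = 1 - 1 / x := by
    rw [hx, map_div₀, map_neg, htr]
    field_simp
    ring
  have hσx0 : 1 - 1 / x ≠ 0 := by rw [← hσx]; simpa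
  have hσσx : σ (σ x) = 1 - 1 / (1 - 1 / x) := by simp [hσx]
  obtain ⟨t, ht⟩ := hσ.mem_range_of_fixed (x + σ x + σ (σ x)) (by
    simp only [map_add, hσ.apply_three]; ring)
  refine ⟨t, x, hσx, ?_⟩
  rw [ht, hσσx, hσx, shanks]
  have : x - 1 ≠ 0 := by
    intro h
    exact hσx0 (by rw [sub_eq_zero.mp h]; simp)
  field_simp
  ring

theorem IsCubicGenerator.exists_cube_eq {K : Type*} [Field K] [Algebra ℚ_[2] K]
    {σ : K ≃ₐ[ℚ_[2]] K} (hσ : IsCubicGenerator σ) (hσ1 : σ ≠ 1) :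
    ∃ α : K, α ^ 3 = 3 * α - 1 := by
  obtain ⟨t, x, hx, h⟩ := hσ.exists_shanks_eq_zero hσ1
  refine exists_cube_eq_of_shanks_eq_zero ?_ h
  rintro ⟨z, rfl⟩
  rw [AlgEquiv.commutes] at hx
  have hz0 : algebraMap ℚ_[2] K z ≠ 0 := by
    intro h0
    simp [h0, shanks] at h
  apply sq_sub_self_add_one_ne_zero z
  apply (algebraMap ℚ_[2] K).injective
  field_simp at hx
  simp only [map_add, map_sub, map_pow, map_one, map_zero]
  linear_combination hx

end CubicGenerator

section UnramifiedCubic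

theorem eq_or_eq_or_eq_of_cube_eq {R : Type*} [CommRing R] [NoZeroDivisors R] {α β : R}
    (hα : α ^ 3 = 3 * α - 1) (hβ : β ^ 3 = 3 * β - 1) :
    β = α ∨ β = α ^ 2 - 2 ∨ β = 2 - α - α ^ 2 := by
  have hroots : (β - α) * ((β - (α ^ 2 - 2)) * (β - (2 - α - α ^ 2))) = 0 := by
    linear_combination hβ + ((-α - 1) * β + α ^ 2 + α - 1) * hα
  simpa only [mul_eq_zero, sub_eq_zero] using hroots

theorem apply_eq_of_cube_eq {R : Type*} [CommRing R] [NoZeroDivisors R] (φ : R →+* R) {α β : R}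
    (hα : α ^ 3 = 3 * α - 1) (hβ : β ^ 3 = 3 * β - 1) (h : φ α = α) : φ β = β := by
  rcases eq_or_eq_or_eq_of_cube_eq hα hβ with rfl | rfl | rfl
  · exact h
  · rw [map_sub, map_pow, map_ofNat, h]
  · rw [map_sub, map_sub, map_pow, map_ofNat, h]

variable {O : Type*} [CommRing O]

/-- `σ` acts on `O` like the Frobenius on the ring of integers of the unramified cubic extension of
`ℚ_2`, which is generated by the root `α` of `X ^ 3 - 3 * X + 1`. Having residue field `𝔽₂` is
required of the ring of `σ`-fixed elements in the form of `dvd_or_dvd_of_fixed`. -/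
structure IsUnramifiedCubic (σ : O ≃+* O) (α : O) : Prop where
  apply_three : ∀ x, σ (σ (σ x)) = x
  dvd_or_dvd_of_fixed : ∀ c, σ c = c → 2 ∣ c ∨ 2 ∣ c - 1
  cube_eq : α ^ 3 = 3 * α - 1
  apply_eq : σ α = α ^ 2 - 2

/-- The norm to the ring of fixed elements of an automorphism of order three. -/
def cubicNorm (σ : O ≃+* O) (x : O) : O := x * σ x * σ (σ x)

/-- The trace to the ring of fixed elements of an automorphism of order three. -/
def cubicTrace (σ : O ≃+* O) (x : O) : O := x + σ x + σ (σ x)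

theorem cubicNorm_mul (σ : O ≃+* O) (x y : O) :
    cubicNorm σ (x * y) = cubicNorm σ x * cubicNorm σ y := by
  simp only [cubicNorm, map_mul]
  ring

local notation "π" => Ideal.Quotient.mk (Ideal.span {(2 : O)})

theorem mk_eq_zero_iff {x : O} : π x = 0 ↔ 2 ∣ x :=
  Ideal.Quotient.eq_zero_iff_dvd 2 x

variable (O) in
theorem two_eq_zero_mod_two : (2 : O ⧸ Ideal.span {(2 : O)}) = 0 :=
  mk_eq_zero_iff.mpr dvd_rfl

theorem isUnit_one_add_of_two_dvd [HenselianRing O (Ideal.span {(2 : O)})] {x : O}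
    (hx : 2 ∣ x) : IsUnit (1 + x) := by
  have hmem := HenselianRing.jac (I := Ideal.span {(2 : O)}) (Ideal.mem_span_singleton.mpr hx)
  simpa [add_comm] using Ideal.mem_jacobson_bot.mp hmem 1

theorem not_isUnit_two [Nontrivial O] [HenselianRing O (Ideal.span {(2 : O)})] :
    ¬ IsUnit (2 : O) := by
  intro h
  simpa using isUnit_one_add_of_two_dvd (h.dvd : (2 : O) ∣ -1)

theorem eq_and_eq_of_pow_mul_eq_pow_mul {M : Type*} [CommMonoidWithZero M] [IsCancelMulZero M]
    {p u v : M} {m n : ℕ} (hp0 : p ≠ 0) (hp : ¬ IsUnit p) (hu : IsUnit u) (hv : IsUnit v)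
    (h : p ^ m * u = p ^ n * v) : m = n ∧ u = v := by
  have hmn : m = n := by
    apply le_antisymm
    · rw [← pow_dvd_pow_iff hp0 hp, ← hv.dvd_mul_right, ← h]
      exact dvd_mul_right _ _
    · rw [← pow_dvd_pow_iff hp0 hp, ← hu.dvd_mul_right, h]
      exact dvd_mul_right _ _
  subst hmn
  exact ⟨rfl, mul_left_cancel₀ (pow_ne_zero m hp0) h⟩

variable {σ : O ≃+* O} {α : O}

namespace IsUnramifiedCubic

theorem apply_cubicTrace (h : IsUnramifiedCubic σ α) (x : O) :
    σ (cubicTrace σ x) = cubicTrace σ x := by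
  simp only [cubicTrace, map_add, h.apply_three]
  ring

theorem apply_cubicNorm (h : IsUnramifiedCubic σ α) (x : O) :
    σ (cubicNorm σ x) = cubicNorm σ x := by
  simp only [cubicNorm, map_mul, h.apply_three]
  ring

theorem apply_apply_eq (h : IsUnramifiedCubic σ α) : σ (σ α) = 2 - α - α ^ 2 := by
  rw [h.apply_eq, map_sub, map_pow, h.apply_eq, map_ofNat]
  linear_combination α * h.cube_eq

/- Up to the factor `9`, this expands `x` along the basis `1, α, α ^ 2` by means of its dual basis
for the trace form. -/
theorem nine_mul_eq (h : IsUnramifiedCubic σ α) (x : O) :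
    9 * x = cubicTrace σ ((11 - 2 * α - 4 * α ^ 2) * x) +
      α * cubicTrace σ ((α ^ 2 + 2 * α - 2) * x) +
      α ^ 2 * cubicTrace σ ((2 * α ^ 2 + α - 4) * x) := by
  simp only [cubicTrace, map_add, map_sub, map_mul, map_pow, map_ofNat]
  rw [h.apply_apply_eq, h.apply_eq]
  linear_combination ((-2 - 2 * α) * x + (1 + 5 * α - α ^ 2 - 2 * α ^ 3) * σ x +
    (9 + 3 * α - 5 * α ^ 2 - 2 * α ^ 3) * σ (σ x)) * h.cube_eq

theorem mk_apply_of_fixed (h : IsUnramifiedCubic σ α) {c : O} (hc : σ c = c) :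
    π (σ c) = π c ^ 2 := by
  rw [hc]
  rcases h.dvd_or_dvd_of_fixed c hc with h0 | h1
  · simp [mk_eq_zero_iff.mpr h0]
  · have : π c = 1 := by simpa [sub_eq_zero] using mk_eq_zero_iff.mpr h1
    simp [this]

theorem mk_apply (h : IsUnramifiedCubic σ α) (x : O) : π (σ x) = π x ^ 2 := by
  have htr (y : O) : π (σ (cubicTrace σ y)) = π (cubicTrace σ y) ^ 2 :=
    h.mk_apply_of_fixed (h.apply_cubicTrace y)
  have hα : π (σ α) = π α ^ 2 := by
    rw [h.apply_eq, map_sub, map_pow, map_ofNat, two_eq_zero_mod_two O, sub_zero]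
  have hx := h.nine_mul_eq x
  set p := cubicTrace σ ((11 - 2 * α - 4 * α ^ 2) * x)
  set q := cubicTrace σ ((α ^ 2 + 2 * α - 2) * x)
  set r := cubicTrace σ ((2 * α ^ 2 + α - 4) * x)
  have hσx := congrArg π (congrArg σ hx)
  have hx9 := congrArg π hx
  simp only [map_add, map_mul, map_pow, map_ofNat] at hx9 hσx
  rw [htr, htr, htr, hα] at hσx
  linear_combination hσx - (9 * π x + (π p + π α * π q + π α ^ 2 * π r)) * hx9 +
    (40 * π x ^ 2 - 4 * π (σ x) - π α * π p * π q - π α ^ 2 * π p * π r - π α ^ 3 * π q * π r) *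
      two_eq_zero_mod_two O

theorem mk_pow_eight (h : IsUnramifiedCubic σ α) (x : O) : π x ^ 8 = π x := by
  conv_rhs => rw [← h.apply_three x, h.mk_apply, h.mk_apply, h.mk_apply]
  ring

theorem apply_self (h : IsUnramifiedCubic σ α) : IsUnramifiedCubic σ (σ α) where
  apply_three := h.apply_three
  dvd_or_dvd_of_fixed := h.dvd_or_dvd_of_fixed
  cube_eq := by simpa [map_ofNat] using congrArg σ h.cube_eq
  apply_eq := by simpa [map_ofNat] using congrArg σ h.apply_eq

theorem cubicNorm_apply (h : IsUnramifiedCubic σ α) (x : O) :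
    cubicNorm σ (σ x) = cubicNorm σ x := by
  rw [cubicNorm, cubicNorm, h.apply_three]
  ring

theorem mk_cubicTrace (h : IsUnramifiedCubic σ α) (x : O) :
    π (cubicTrace σ x) = π x + π x ^ 2 + π x ^ 4 := by
  rw [cubicTrace, map_add, map_add, h.mk_apply, h.mk_apply, h.mk_apply]
  ring

theorem mk_cubicNorm (h : IsUnramifiedCubic σ α) (x : O) : π (cubicNorm σ x) = π x ^ 7 := by
  rw [cubicNorm, map_mul, map_mul, h.mk_apply, h.mk_apply, h.mk_apply]
  ring

theorem cubicNorm_two_mul_sub_three (h : IsUnramifiedCubic σ α) :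
    cubicNorm σ (2 * α - 3) = 1 := by
  simp only [cubicNorm, map_sub, map_mul, map_ofNat]
  rw [h.apply_apply_eq, h.apply_eq]
  linear_combination (-8 * α ^ 2 + 4 * α + 20) * h.cube_eq

section Domain

variable [IsDomain O] [CharZero O]

theorem exists_eq_one_add_two_mul (h : IsUnramifiedCubic σ α) {m : O} (hm : σ m = m)
    (hm2 : 2 ∣ m ^ 2 - 1) : ∃ j, σ j = j ∧ m = 1 + 2 * j := by
  have hdvd : 2 ∣ m - 1 := by
    rcases h.dvd_or_dvd_of_fixed m hm with h0 | h1
    · have h1 : (2 : O) ∣ 1 := (dvd_sub_right (h0.trans (dvd_pow_self m two_ne_zero))).mp hm2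
      exact h1.trans (one_dvd _)
    · exact h1
  obtain ⟨j, hj⟩ := hdvd
  obtain rfl : m = 1 + 2 * j := by linear_combination hj
  refine ⟨j, mul_left_cancel₀ (two_ne_zero (α := O)) ?_, rfl⟩
  simpa [map_ofNat] using hm

theorem two_dvd_cubicTrace_of_cubicNorm_one_add_two_mul (h : IsUnramifiedCubic σ α) {v m : O}
    (hm : σ m = m) (hv : cubicNorm σ (1 + 2 * v) = m ^ 2) : 2 ∣ cubicTrace σ v := by
  simp only [cubicNorm, map_add, map_mul, map_one, map_ofNat] at hv
  obtain ⟨j, -, rfl⟩ := h.exists_eq_one_add_two_mul hm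
    ⟨v + σ v + σ (σ v) + 2 * (v * σ v + v * σ (σ v) + σ v * σ (σ v)) + 4 * (v * σ v * σ (σ v)), by
      linear_combination -hv⟩
  refine ⟨j + j ^ 2 - (v * σ v + v * σ (σ v) + σ v * σ (σ v)) - 2 * (v * σ v * σ (σ v)), ?_⟩
  apply mul_left_cancel₀ (two_ne_zero (α := O))
  rw [cubicTrace]
  linear_combination hv

theorem two_dvd_cubicTrace_of_cubicNorm_one_add_four_mul (h : IsUnramifiedCubic σ α) {w m : O}
    (hm : σ m = m) (hw : cubicNorm σ (1 + 4 * w) = m ^ 2) : 2 ∣ cubicTrace σ w := by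
  simp only [cubicNorm, map_add, map_mul, map_one, map_ofNat] at hw
  obtain ⟨j, hj, rfl⟩ := h.exists_eq_one_add_two_mul hm
    ⟨2 * (w + σ w + σ (σ w)) + 8 * (w * σ w + w * σ (σ w) + σ w * σ (σ w)) +
      32 * (w * σ w * σ (σ w)), by linear_combination -hw⟩
  have heven : 2 ∣ j * (j - -1) := by
    rcases h.dvd_or_dvd_of_fixed j hj with h0 | h1
    · exact h0.mul_right _
    · exact (by simpa [show j - -1 = j - 1 + 2 by ring] using h1 : 2 ∣ j - -1).mul_left _
  have htr : cubicTrace σ w = j * (j - -1) -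
      2 * (2 * (w * σ w + w * σ (σ w) + σ w * σ (σ w)) + 8 * (w * σ w * σ (σ w))) := by
    apply mul_left_cancel₀ (OfNat.ofNat_ne_zero 4 : (4 : O) ≠ 0)
    rw [cubicTrace]
    linear_combination hw
  rw [htr]
  exact dvd_sub heven (dvd_mul_right _ _)

end Domain

section Henselian

variable [HenselianRing O (Ideal.span {(2 : O)})]

theorem isUnit_of_not_two_dvd (h : IsUnramifiedCubic σ α) {x : O} (hx : ¬ 2 ∣ x) : IsUnit x := by
  rcases h.dvd_or_dvd_of_fixed _ (h.apply_cubicNorm x) with h0 | h1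
  · rw [← mk_eq_zero_iff, h.mk_cubicNorm] at h0
    refine absurd (mk_eq_zero_iff.mp ?_) hx
    rw [← h.mk_pow_eight, pow_succ, h0, zero_mul]
  · have hN : IsUnit (cubicNorm σ x) := by simpa using isUnit_one_add_of_two_dvd h1
    exact isUnit_of_mul_isUnit_left (isUnit_of_mul_isUnit_left hN)

theorem two_dvd_or_two_dvd_of_mul (h : IsUnramifiedCubic σ α) {x y : O} (hxy : 2 ∣ x * y) :
    2 ∣ x ∨ 2 ∣ y :=
  or_iff_not_imp_left.mpr fun hx => (h.isUnit_of_not_two_dvd hx).dvd_mul_left.mp hxy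

theorem two_dvd_or_exists_of_two_dvd_cubicTrace (h : IsUnramifiedCubic σ α) {v : O}
    (hv : 2 ∣ cubicTrace σ v) : 2 ∣ v ∨ ∃ β, IsUnramifiedCubic σ β ∧ 2 ∣ v - β := by
  have hprod : 2 ∣ v * ((v - α) * ((v - σ α) * (v - σ (σ α)))) := by
    rw [← mk_eq_zero_iff, h.mk_cubicTrace] at hv
    have hα := congrArg π h.cube_eq
    simp only [map_sub, map_mul, map_pow, map_ofNat, map_one] at hα
    rw [← mk_eq_zero_iff]
    simp only [map_sub, map_mul, h.mk_apply]
    linear_combination hv +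
      (-π α * π v ^ 3 + (π α ^ 3 + π α ^ 2 + 3 * π α + 3) * π v ^ 2 -
        (π α ^ 4 + 3 * π α ^ 2 - π α + 9) * π v) * hα +
      (-2 * π α ^ 2 * π v ^ 3 + (4 * π α ^ 2 + 3 * π α - 2) * π v ^ 2 +
        (4 - 14 * π α + 3 * π α ^ 2) * π v) * two_eq_zero_mod_two O
  rcases h.two_dvd_or_two_dvd_of_mul hprod with h0 | hprod
  · exact .inl h0
  rcases h.two_dvd_or_two_dvd_of_mul hprod with h1 | hprod
  · exact .inr ⟨α, h, h1⟩
  rcases h.two_dvd_or_two_dvd_of_mul hprod with h2 | h3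
  · exact .inr ⟨σ α, h.apply_self, h2⟩
  · exact .inr ⟨σ (σ α), h.apply_self.apply_self, h3⟩

theorem exists_sq_add_self_eq (h : IsUnramifiedCubic σ α) {w : O} (hw : 2 ∣ cubicTrace σ w) :
    ∃ z, z ^ 2 + z = w := by
  have hmod : (X ^ 2 + X - C w).eval (w + w ^ 4) ∈ Ideal.span {(2 : O)} := by
    rw [← mk_eq_zero_iff, h.mk_cubicTrace] at hw
    rw [Ideal.mem_span_singleton, ← mk_eq_zero_iff]
    simp only [eval_sub, eval_add, eval_pow, eval_X, eval_C, map_sub, map_add, map_pow]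
    linear_combination hw + h.mk_pow_eight w + π w ^ 5 * two_eq_zero_mod_two O
  obtain ⟨z, hz, -⟩ := HenselianRing.is_henselian (X ^ 2 + X - C w) (by monicity!) _ hmod (by
    simp [one_add_one_eq_two])
  exact ⟨z, by simpa [sub_eq_zero] using hz⟩

theorem exists_eq_two_pow_mul_unit [WfDvdMonoid O] (h : IsUnramifiedCubic σ α) {a : O}
    (ha : a ≠ 0) : ∃ (i : ℕ) (u : Oˣ), a = 2 ^ i * u := by
  have := nontrivial_of_ne a 0 ha
  obtain ⟨i, x, hx, rfl⟩ := WfDvdMonoid.max_power_factor' ha not_isUnit_two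
  exact ⟨i, (h.isUnit_of_not_two_dvd hx).unit, rfl⟩

variable [IsDomain O] [CharZero O]

theorem isSquare_one_add_four_mul (h : IsUnramifiedCubic σ α) {w m : O}
    (hm : σ m = m) (hw : cubicNorm σ (1 + 4 * w) = m ^ 2) : IsSquare (1 + 4 * w) := by
  obtain ⟨z, rfl⟩ := h.exists_sq_add_self_eq
    (h.two_dvd_cubicTrace_of_cubicNorm_one_add_four_mul hm hw)
  exact ⟨1 + 2 * z, by ring⟩

theorem isSquare_one_add_two_mul_or (h : IsUnramifiedCubic σ α) {v m : O}
    (hm : σ m = m) (hv : cubicNorm σ (1 + 2 * v) = m ^ 2) :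
    IsSquare (1 + 2 * v) ∨
      ∃ β, IsUnramifiedCubic σ β ∧ IsSquare ((1 + 2 * v) * (2 * β - 3)) := by
  rcases h.two_dvd_or_exists_of_two_dvd_cubicTrace
    (h.two_dvd_cubicTrace_of_cubicNorm_one_add_two_mul hm hv) with ⟨w, rfl⟩ | ⟨β, hβ, w, hw⟩
  · have h4 : 1 + 2 * (2 * w) = 1 + 4 * w := by ring
    rw [h4] at hv ⊢
    exact .inl (h.isSquare_one_add_four_mul hm hv)
  · have h4 : (1 + 2 * v) * (2 * β - 3) = 1 + 4 * (β + w - 1 + v * (β - 2)) := by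
      linear_combination 2 * hw
    refine .inr ⟨β, hβ, ?_⟩
    rw [h4]
    refine h.isSquare_one_add_four_mul hm ?_
    rw [← h4, cubicNorm_mul, hv, hβ.cubicNorm_two_mul_sub_three, mul_one]

/- Writing `u = σ s` with `s = σ (σ u)`, the congruence `σ s ≡ s ^ 2` shows that `u` is a square
times a unit `1 + 2 * v`. -/
theorem isSquare_unit_or_exists_isSquare_mul (h : IsUnramifiedCubic σ α) {u n : O} (hu : IsUnit u)
    (hn : σ n = n) (hun : cubicNorm σ u = n ^ 2) :
    IsSquare u ∨ ∃ β, IsUnramifiedCubic σ β ∧ IsSquare (u * (2 * β - 3)) := by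
  obtain ⟨s, rfl⟩ : ∃ s : Oˣ, σ s = u := ⟨((hu.map σ).map σ).unit, h.apply_three u⟩
  rw [h.cubicNorm_apply] at hun
  obtain ⟨w, hw⟩ : 2 ∣ σ (s : O) - s ^ 2 := by
    rw [← mk_eq_zero_iff, map_sub, map_pow, h.mk_apply, sub_self]
  obtain ⟨v, rfl⟩ : ∃ v, (s : O) ^ 2 * v = w := ⟨↑(s⁻¹ ^ 2) * w, by
    rw [← mul_assoc, ← Units.val_pow_eq_pow_val, ← Units.val_mul, ← mul_pow, mul_inv_cancel]; simp⟩
  have hσs : σ (s : O) = s ^ 2 * (1 + 2 * v) := by linear_combination hw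
  obtain ⟨n, rfl⟩ : IsUnit n := by
    have hN : IsUnit (cubicNorm σ (s : O)) :=
      (s.isUnit.mul (s.isUnit.map σ)).mul ((s.isUnit.map σ).map σ)
    exact isUnit_pow_iff two_ne_zero |>.mp (hun ▸ hN)
  have hm : σ ((n⁻¹ : Oˣ) : O) = (n⁻¹ : Oˣ) := by
    rw [← Units.mul_right_inj n, Units.mul_inv]
    have := congrArg σ n.mul_inv
    rwa [map_mul, hn, map_one] at this
  have hnorm : cubicNorm σ (1 + 2 * v) = ((n⁻¹ : Oˣ) : O) ^ 2 := by
    have hsq := h.cubicNorm_apply (s : O)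
    rw [hσs, cubicNorm_mul, pow_two (s : O), cubicNorm_mul, hun] at hsq
    have hinv : (n : O) * (n⁻¹ : Oˣ) = 1 := n.mul_inv
    apply (n.isUnit.pow 4).mul_left_cancel
    linear_combination hsq - (n : O) ^ 2 * (n * (n⁻¹ : Oˣ) + 1) * hinv
  rw [hσs]
  rcases h.isSquare_one_add_two_mul_or hm hnorm with h1 | ⟨β, hβ, h1⟩
  · exact .inl ((IsSquare.sq (s : O)).mul h1)
  · refine .inr ⟨β, hβ, ?_⟩
    rw [mul_assoc]
    exact (IsSquare.sq (s : O)).mul h1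

theorem isSquare_or_exists_isSquare_mul [WfDvdMonoid O] (h : IsUnramifiedCubic σ α)
    {a b : O} (hb : σ b = b) (hab : cubicNorm σ a = b ^ 2) :
    IsSquare a ∨ ∃ β, IsUnramifiedCubic σ β ∧ IsSquare (a * (2 * β - 3)) := by
  rcases eq_or_ne a 0 with rfl | ha
  · exact .inl (IsSquare.zero)
  have hb0 : b ≠ 0 := by
    rintro rfl
    simp [cubicNorm, ha] at hab
  obtain ⟨i, u, rfl⟩ := h.exists_eq_two_pow_mul_unit ha
  obtain ⟨j, c, rfl⟩ := h.exists_eq_two_pow_mul_unit hb0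
  have hNu : IsUnit (cubicNorm σ (u : O)) :=
    (u.isUnit.mul (u.isUnit.map σ)).mul ((u.isUnit.map σ).map σ)
  obtain ⟨hij, hu⟩ : 3 * i = 2 * j ∧ cubicNorm σ (u : O) = (c : O) ^ 2 := by
    apply eq_and_eq_of_pow_mul_eq_pow_mul two_ne_zero not_isUnit_two hNu (c.isUnit.pow 2)
    simp only [cubicNorm, map_mul, map_pow, map_ofNat] at hab ⊢
    linear_combination hab
  have hc : σ (c : O) = c :=
    mul_left_cancel₀ (pow_ne_zero j (two_ne_zero (α := O))) (by simpa [map_ofNat] using hb)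
  obtain ⟨m, rfl⟩ : ∃ m, i = 2 * m := ⟨i / 2, by omega⟩
  have hsq : IsSquare ((2 : O) ^ (2 * m)) := ⟨2 ^ m, by ring⟩
  rcases h.isSquare_unit_or_exists_isSquare_mul u.isUnit hc hu with h1 | ⟨β, hβ, h1⟩
  · exact .inl (hsq.mul h1)
  · exact .inr ⟨β, hβ, by simpa only [mul_assoc] using hsq.mul h1⟩

end Henselian

end IsUnramifiedCubic
end UnramifiedCubic

section IntegralClosure

theorem IsCubicGenerator.apply_root_eq_or {K : Type*} [Field K] [Algebra ℚ_[2] K]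
    {σ : K ≃ₐ[ℚ_[2]] K} (hσ : IsCubicGenerator σ) {α : K} (hα : α ^ 3 = 3 * α - 1) :
    σ α = α ^ 2 - 2 ∨ σ (σ α) = α ^ 2 - 2 := by
  have hσα : σ α ≠ α := by
    intro h
    obtain ⟨z, rfl⟩ := hσ.mem_range_of_fixed α h
    apply cube_sub_three_mul_add_one_ne_zero z
    apply (algebraMap ℚ_[2] K).injective
    simp only [map_add, map_sub, map_mul, map_pow, map_ofNat, map_one, map_zero]
    linear_combination hα
  have hσα3 : σ α ^ 3 = 3 * σ α - 1 := by simpa [map_ofNat] using congrArg σ hα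
  rcases eq_or_eq_or_eq_of_cube_eq hα hσα3 with h | h | h
  · exact absurd h hσα
  · exact .inl h
  · refine .inr ?_
    rw [h, map_sub, map_sub, map_pow, map_ofNat, h]
    linear_combination (-α - 2) * hα

theorem IsCubicGenerator.add_apply_root_and_mul_apply_root {K : Type*} [Field K] [Algebra ℚ_[2] K]
    {σ : K ≃ₐ[ℚ_[2]] K} (hσ : IsCubicGenerator σ) {α : K} (hα : α ^ 3 = 3 * α - 1) :
    σ α + σ (σ α) = -α ∧ σ α * σ (σ α) = α ^ 2 - 3 := by
  rcases hσ.apply_root_eq_or hα with h | h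
  · have hσσα : σ (σ α) = (α ^ 2 - 2) ^ 2 - 2 := by rw [h, map_sub, map_pow, map_ofNat, h]
    rw [hσσα, h]
    exact ⟨by linear_combination α * hα, by linear_combination (α ^ 3 - 3 * α - 1) * hα⟩
  · have hσα : σ α = (α ^ 2 - 2) ^ 2 - 2 := by
      rw [← hσ.apply_three (σ α), h, map_sub, map_sub, map_pow, map_pow, map_ofNat, map_ofNat, h]
    rw [h, hσα]
    exact ⟨by linear_combination α * hα, by linear_combination (α ^ 3 - 3 * α - 1) * hα⟩

theorem IsCubicGenerator.sq {F K : Type*} [Field F] [Field K] [Algebra F K] {σ : K ≃ₐ[F] K}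
    (hσ : IsCubicGenerator σ) : IsCubicGenerator (σ ^ 2) where
  apply_three x := by simp only [pow_two, AlgEquiv.mul_apply, hσ.apply_three]
  mem_range_of_fixed x hx := hσ.mem_range_of_fixed x <| by
    have := congrArg σ hx
    rwa [pow_two, AlgEquiv.mul_apply, hσ.apply_three, eq_comm] at this

theorem isAdicComplete_of_finite {R : Type*} [CommRing R] [IsNoetherianRing R] (I : Ideal R)
    [IsAdicComplete I R] (M : Type*) [AddCommGroup M] [Module R M] [Module.Finite R M] :
    IsAdicComplete I M := by
  have : IsHausdorff I M := .of_le_jacobson I M (IsAdicComplete.le_jacobson_bot I)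
  have : IsPrecomplete I M := by
    rw [← AdicCompletion.of_surjective_iff]
    intro y
    obtain ⟨x, rfl⟩ := AdicCompletion.ofTensorProduct_surjective_of_finite I M y
    induction x with
    | zero => exact ⟨0, by simp only [map_zero]⟩
    | add x y hx hy =>
      obtain ⟨a, ha⟩ := hx
      obtain ⟨b, hb⟩ := hy
      exact ⟨a + b, by rw [map_add, map_add, ha, hb]⟩
    | tmul r m =>
      obtain ⟨r, rfl⟩ := AdicCompletion.of_surjective I R r
      refine ⟨r • m, ?_⟩
      rw [AdicCompletion.ofTensorProduct_tmul, map_smul]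
      ext n
      rfl
  constructor

variable {K : Type*} [Field K] [Algebra ℤ_[2] K] [Algebra ℚ_[2] K] [IsScalarTower ℤ_[2] ℚ_[2] K]

instance [FiniteDimensional ℚ_[2] K] :
    HenselianRing (integralClosure ℤ_[2] K) (Ideal.span {(2 : integralClosure ℤ_[2] K)}) := by
  have : Module.Finite ℤ_[2] (integralClosure ℤ_[2] K) :=
    IsIntegralClosure.finite ℤ_[2] ℚ_[2] K _
  have h2 : (IsLocalRing.maximalIdeal ℤ_[2]).map (algebraMap ℤ_[2] (integralClosure ℤ_[2] K)) =
      Ideal.span {(2 : integralClosure ℤ_[2] K)} := by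
    rw [PadicInt.maximalIdeal_eq_span_p, Ideal.map_span, Set.image_singleton, map_natCast,
      Nat.cast_ofNat]
  have : IsAdicComplete (Ideal.span {(2 : integralClosure ℤ_[2] K)}) (integralClosure ℤ_[2] K) := by
    rw [← h2, IsAdicComplete.map_algebraMap_iff]
    exact isAdicComplete_of_finite _ _
  infer_instance

variable {σ : K ≃ₐ[ℚ_[2]] K}

local notation "𝒪" => integralClosure ℤ_[2] K

theorem two_dvd_or_two_dvd_sub_one_of_apply_eq (hσ : IsCubicGenerator σ) {c : 𝒪}
    (hc : σ (algebraMap 𝒪 K c) = algebraMap 𝒪 K c) : 2 ∣ c ∨ 2 ∣ c - 1 := by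
  obtain ⟨z, hz⟩ := hσ.mem_range_of_fixed _ hc
  obtain ⟨y, rfl⟩ := IsIntegrallyClosed.algebraMap_eq_of_integral (R := ℤ_[2]) (x := z) <|
    (isIntegral_algebraMap_iff (algebraMap ℚ_[2] K).injective).mp (hz ▸ c.2)
  obtain rfl : algebraMap ℤ_[2] 𝒪 y = c :=
    Subtype.ext <| (IsScalarTower.algebraMap_apply ℤ_[2] ℚ_[2] K y).trans hz
  have hdvd {x : ℤ_[2]} (h : 2 ∣ x) : 2 ∣ algebraMap ℤ_[2] 𝒪 x := by
    simpa only [map_ofNat] using _root_.map_dvd (algebraMap ℤ_[2] 𝒪) h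
  exact (two_dvd_or_two_dvd_sub_one y).imp hdvd fun h => by simpa using hdvd h

variable [FiniteDimensional ℚ_[2] K]

/-- The action of `σ` on the ring of integers of `K`. -/
noncomputable def ringOfIntegersAut (σ : K ≃ₐ[ℚ_[2]] K) : 𝒪 ≃+* 𝒪 :=
  (galRestrict ℤ_[2] ℚ_[2] K 𝒪 σ).toRingEquiv

theorem algebraMap_ringOfIntegersAut (σ : K ≃ₐ[ℚ_[2]] K) (x : 𝒪) :
    algebraMap 𝒪 K (ringOfIntegersAut σ x) = σ (algebraMap 𝒪 K x) :=
  algebraMap_galRestrict_apply ℤ_[2] σ x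

theorem algebraMap_cubicNorm_ringOfIntegersAut (σ : K ≃ₐ[ℚ_[2]] K) (x : 𝒪) :
    algebraMap 𝒪 K (cubicNorm (ringOfIntegersAut σ) x) =
      algebraMap 𝒪 K x * σ (algebraMap 𝒪 K x) * σ (σ (algebraMap 𝒪 K x)) := by
  simp only [cubicNorm, map_mul, algebraMap_ringOfIntegersAut]

theorem isUnramifiedCubic_ringOfIntegersAut (hσ : IsCubicGenerator σ) {α : 𝒪}
    (hα : algebraMap 𝒪 K α ^ 3 = 3 * algebraMap 𝒪 K α - 1)
    (hσα : σ (algebraMap 𝒪 K α) = algebraMap 𝒪 K α ^ 2 - 2) :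
    IsUnramifiedCubic (ringOfIntegersAut σ) α := by
  have hinj := FaithfulSMul.algebraMap_injective 𝒪 K
  constructor
  · intro x
    apply hinj
    simp only [algebraMap_ringOfIntegersAut, hσ.apply_three]
  · intro c hc
    apply two_dvd_or_two_dvd_sub_one_of_apply_eq hσ
    rw [← algebraMap_ringOfIntegersAut, hc]
  · apply hinj
    simp only [map_pow, map_sub, map_mul, map_ofNat, map_one, hα]
  · apply hinj
    simp only [algebraMap_ringOfIntegersAut, hσα, map_pow, map_sub, map_ofNat]

theorem isSquare_or_exists_isSquare_mul_of_mem_ringOfIntegers {α : 𝒪}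
    (h : IsUnramifiedCubic (ringOfIntegersAut σ) α) {a : 𝒪} {b : K} (hb : σ b = b)
    (hab : algebraMap 𝒪 K (cubicNorm (ringOfIntegersAut σ) a) = b ^ 2) :
    IsSquare (algebraMap 𝒪 K a) ∨
      ∃ β : K, β ^ 3 = 3 * β - 1 ∧ IsSquare (algebraMap 𝒪 K a * (2 * β - 3)) := by
  have : CharZero K := charZero_of_injective_algebraMap (algebraMap ℚ_[2] K).injective
  have : CharZero 𝒪 := (algebraMap 𝒪 K).charZero
  have : IsNoetherianRing 𝒪 := IsIntegralClosure.isNoetherianRing ℤ_[2] ℚ_[2] K 𝒪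
  have hinj := FaithfulSMul.algebraMap_injective 𝒪 K
  obtain ⟨b, rfl⟩ : ∃ b', algebraMap 𝒪 K b' = b :=
    ⟨⟨b, .of_pow two_pos (hab ▸ (cubicNorm (ringOfIntegersAut σ) a).2)⟩, rfl⟩
  rw [← map_pow] at hab
  rw [← algebraMap_ringOfIntegersAut] at hb
  rcases h.isSquare_or_exists_isSquare_mul (hinj hb) (hinj hab) with hs | ⟨β, hβ, hs⟩
  · exact .inl (hs.map (algebraMap 𝒪 K))
  · refine .inr ⟨algebraMap 𝒪 K β, ?_, ?_⟩
    · simpa only [map_pow, map_sub, map_mul, map_ofNat, map_one] using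
        congrArg (algebraMap 𝒪 K) hβ.cube_eq
    · simpa only [map_sub, map_mul, map_ofNat] using hs.map (algebraMap 𝒪 K)

theorem exists_ringOfIntegers_mul_sq (a : K) :
    ∃ (c : 𝒪) (s : K), s ≠ 0 ∧ a = algebraMap 𝒪 K c * s ^ 2 := by
  have : IsFractionRing 𝒪 K := integralClosure.isFractionRing_of_finite_extension ℚ_[2] K
  obtain ⟨x, y, hy, rfl⟩ := IsFractionRing.div_surjective (A := 𝒪) a
  have hy0 : algebraMap 𝒪 K y ≠ 0 := IsFractionRing.to_map_ne_zero_of_mem_nonZeroDivisors hy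
  refine ⟨x * y, (algebraMap 𝒪 K y)⁻¹, inv_ne_zero hy0, ?_⟩
  rw [map_mul]
  field_simp

theorem isSquare_or_of_apply_root (hσ : IsCubicGenerator σ) {α : K} (hα : α ^ 3 = 3 * α - 1)
    (hσα : σ α = α ^ 2 - 2) {a b : K} (hb : σ b = b) (hab : a * σ a * σ (σ a) = b ^ 2) :
    IsSquare a ∨ ∃ β : K, β ^ 3 = 3 * β - 1 ∧ IsSquare (a * (2 * β - 3)) := by
  obtain ⟨α, rfl⟩ : ∃ α', algebraMap 𝒪 K α' = α :=
    ⟨⟨α, X ^ 3 - 3 * X + 1, by monicity!, by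
      simp only [eval₂_add, eval₂_sub, eval₂_mul, eval₂_pow, eval₂_X, eval₂_one, eval₂_ofNat]
      linear_combination hα⟩, rfl⟩
  have h := isUnramifiedCubic_ringOfIntegersAut hσ hα hσα
  obtain ⟨c, s, hs, rfl⟩ := exists_ringOfIntegers_mul_sq a
  have hNs : σ (s * σ s * σ (σ s)) = s * σ s * σ (σ s) := by
    simp only [map_mul, hσ.apply_three]
    ring
  have hc := isSquare_or_exists_isSquare_mul_of_mem_ringOfIntegers h (a := c)
    (b := b / (s * σ s * σ (σ s))) (by rw [map_div₀, hb, hNs]) (by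
      have hσs : σ s ≠ 0 := by simpa
      have hσσs : σ (σ s) ≠ 0 := by simpa
      simp only [algebraMap_cubicNorm_ringOfIntegersAut, div_pow, ← hab, map_mul, map_pow]
      field_simp)
  have hs2 : IsSquare (s ^ 2) := .sq s
  refine hc.imp (·.mul hs2) fun ⟨β, hβ, hsq⟩ => ⟨β, hβ, ?_⟩
  simpa only [mul_right_comm] using hsq.mul hs2

end IntegralClosure

theorem IsCubicGenerator.isSquare_or_exists_isSquare_mul {K : Type*} [Field K] [Algebra ℚ_[2] K]
    [FiniteDimensional ℚ_[2] K] {σ : K ≃ₐ[ℚ_[2]] K} (hσ : IsCubicGenerator σ) (hσ1 : σ ≠ 1)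
    {a b : K} (hb : σ b = b) (hab : a * σ a * σ (σ a) = b ^ 2) :
    IsSquare a ∨ ∃ β : K, β ^ 3 = 3 * β - 1 ∧ IsSquare (a * (2 * β - 3)) := by
  let _ : Algebra ℤ_[2] K := ((algebraMap ℚ_[2] K).comp (algebraMap ℤ_[2] ℚ_[2])).toAlgebra
  have : IsScalarTower ℤ_[2] ℚ_[2] K := .of_algebraMap_eq' rfl
  obtain ⟨α, hα⟩ := hσ.exists_cube_eq hσ1
  rcases hσ.apply_root_eq_or hα with hσα | hσα
  · exact isSquare_or_of_apply_root hσ hα hσα hb hab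
  · refine isSquare_or_of_apply_root (σ := σ ^ 2) hσ.sq hα hσα (congrArg σ hb |>.trans hb) ?_
    simp only [pow_two, AlgEquiv.mul_apply, hσ.apply_three] at hab ⊢
    rw [← hab, mul_right_comm]

section AlternatingFour

open Equiv

/-- `V` is a normal Klein four-group `{1, v, w, v * w}` of index three, and conjugation by `s`, an
element of order three, sends `v` to `w` and `w` to `v * w`. The groups with such elements are those
isomorphic to `A₄`. -/
structure IsKleinFourTriple {G : Type*} [Group G] (V : Subgroup G) (v w s : G) : Prop where
  normal : V.Normal
  index_eq : V.index = 3
  mem_iff : ∀ g, g ∈ V ↔ g = 1 ∨ g = v ∨ g = w ∨ g = v * w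
  left_sq : v * v = 1
  right_sq : w * w = 1
  comm : v * w = w * v
  right_ne_one : w ≠ 1
  right_ne_left : w ≠ v
  notMem : s ∉ V
  cube : s * s * s = 1
  mul_left : s * v = w * s
  mul_right : s * w = v * w * s

theorem exists_isKleinFourTriple_alternatingGroup :
    ∃ (V : Subgroup (alternatingGroup (Fin 4))) (v w s : alternatingGroup (Fin 4)),
      IsKleinFourTriple V v w s := by
  have hcard : Nat.card (Fin 4) = 4 := Nat.card_fin 4
  have hV := alternatingGroup.kleinFour_card_of_card_eq_four hcard
  set V := alternatingGroup.kleinFour (Fin 4)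
  set v : alternatingGroup (Fin 4) :=
    ⟨swap 0 1 * swap 2 3, Perm.mem_alternatingGroup.mpr (by decide)⟩
  set w : alternatingGroup (Fin 4) :=
    ⟨swap 0 2 * swap 1 3, Perm.mem_alternatingGroup.mpr (by decide)⟩
  set s : alternatingGroup (Fin 4) :=
    ⟨swap 1 2 * swap 2 3, Perm.mem_alternatingGroup.mpr (by decide)⟩
  have hvV : v ∈ V := Subgroup.subset_closure (by decide : (v : Perm (Fin 4)).cycleType = {2, 2})
  have hwV : w ∈ V := Subgroup.subset_closure (by decide : (w : Perm (Fin 4)).cycleType = {2, 2})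
  have hset : (({1, v, w, v * w} : Finset _) : Set (alternatingGroup (Fin 4))) = V := by
    apply Set.eq_of_subset_of_ncard_le
    · simp [Set.insert_subset_iff, hvV, hwV, V.one_mem, V.mul_mem]
    · rw [Set.ncard_coe_finset]
      exact hV.trans_le (by decide)
    · exact Set.toFinite _
  have hmem (g) : g ∈ V ↔ g = 1 ∨ g = v ∨ g = w ∨ g = v * w := by
    simp [← SetLike.mem_coe, ← hset]
  refine ⟨V, v, w, s, alternatingGroup.normal_kleinFour hcard, ?_, hmem, by decide, by decide,
    by decide, by decide, by decide, ?_, by decide, by decide, by decide⟩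
  · have := V.card_mul_index
    rw [hV, alternatingGroup.card_of_card_eq_four hcard] at this
    omega
  · rw [hmem]
    decide

theorem IsKleinFourTriple.comap {G H : Type*} [Group G] [Group H] {V : Subgroup H} {v w s : H}
    (h : IsKleinFourTriple V v w s) (φ : G ≃* H) :
    IsKleinFourTriple (V.comap φ.toMonoidHom) (φ.symm v) (φ.symm w) (φ.symm s) where
  normal := h.normal.comap _
  index_eq := by rw [V.index_comap_of_surjective φ.surjective, h.index_eq]
  mem_iff g := by simp [h.mem_iff, MulEquiv.eq_symm_apply, ← map_mul]
  left_sq := by simp [← map_mul, h.left_sq]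
  right_sq := by simp [← map_mul, h.right_sq]
  comm := by simp only [← map_mul, h.comm]
  right_ne_one := by simp [h.right_ne_one]
  right_ne_left := by simp [h.right_ne_left]
  notMem := by simp [h.notMem]
  cube := by simp [← map_mul, h.cube]
  mul_left := by simp only [← map_mul, h.mul_left]
  mul_right := by simp only [← map_mul, h.mul_right]

end AlternatingFour

section AlternatingFourExtension

variable {F E : Type*} [Field F] [Field E] [Algebra F E] {V : Subgroup (E ≃ₐ[F] E)}
  {v w s : E ≃ₐ[F] E}

namespace IsKleinFourTriple

theorem mem_fixedField (h : IsKleinFourTriple V v w s) {x : E} (hv : v x = x) (hw : w x = x) :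
    x ∈ IntermediateField.fixedField V := by
  rintro ⟨g, hg⟩
  rcases (h.mem_iff g).mp hg with rfl | rfl | rfl | rfl
  · rfl
  · exact hv
  · exact hw
  · exact (congrArg v hw).trans hv

theorem apply_conjugate (h : IsKleinFourTriple V v w s) {e : E} (hv : v e = e) (hw : w e = -e) :
    v (s e) = -s e ∧ w (s e) = s e ∧ v (s (s e)) = -s (s e) ∧ w (s (s e)) = -s (s e) := by
  have hws (x : E) : w (s x) = s (v x) := (DFunLike.congr_fun h.mul_left x).symm
  have hvs (x : E) : v (s x) = s (v (w x)) := by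
    have : v * s = s * (v * w) := by
      rw [← mul_assoc, h.mul_left, mul_assoc, h.mul_right, ← mul_assoc, ← mul_assoc, ← h.comm,
        mul_assoc v, h.right_sq, mul_one]
    exact DFunLike.congr_fun this x
  simp only [hws, hvs, hv, hw, map_neg, and_self]

theorem notMem_fixedField [CharZero E] (h : IsKleinFourTriple V v w s) {e : E} (he : e ≠ 0)
    (hw : w e = -e) : e ∉ IntermediateField.fixedField V := by
  intro hmem
  have : w e = e := hmem ⟨w, (h.mem_iff w).mpr (.inr (.inr (.inl rfl)))⟩
  exact he (self_eq_neg.mp (this.symm.trans hw))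

variable [FiniteDimensional F E]

theorem exists_apply_eq_neg (h : IsKleinFourTriple V v w s) :
    ∃ e : E, e ≠ 0 ∧ v e = e ∧ w e = -e := by
  have hw : w ∉ Subgroup.zpowers v := by
    rintro ⟨n, rfl⟩
    have hv : v ^ (2 : ℤ) = 1 := by rw [zpow_two, h.left_sq]
    rcases Int.even_or_odd' n with ⟨k, rfl | rfl⟩
    · exact h.right_ne_one (by simp only [zpow_mul, hv, one_zpow])
    · exact h.right_ne_left (by simp only [zpow_add, zpow_mul, hv, one_zpow, zpow_one, one_mul])
  obtain ⟨f, hf, hwf⟩ : ∃ f ∈ IntermediateField.fixedField (Subgroup.zpowers v), w f ≠ f := by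
    by_contra! hall
    rw [← IntermediateField.fixingSubgroup_fixedField (Subgroup.zpowers v)] at hw
    exact hw fun x => hall x x.2
  replace hf : v f = f := hf ⟨v, Subgroup.mem_zpowers v⟩
  have hvw : v (w f) = w (v f) := DFunLike.congr_fun h.comm f
  have hww : w (w f) = f := DFunLike.congr_fun h.right_sq f
  refine ⟨f - w f, sub_ne_zero.mpr hwf.symm, ?_, ?_⟩
  · rw [map_sub, hvw, hf]
  · rw [map_sub, hww, neg_sub]

theorem restrictNormal_ne_one (h : IsKleinFourTriple V v w s)
    [Normal F (IntermediateField.fixedField V)] :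
    s.restrictNormal (IntermediateField.fixedField V) ≠ 1 := by
  intro h1
  apply h.notMem
  rw [← IntermediateField.fixingSubgroup_fixedField V]
  intro x
  have := s.restrictNormal_commutes (IntermediateField.fixedField V) x
  rw [h1] at this
  exact this.symm

theorem isCubicGenerator [IsGalois F E] (h : IsKleinFourTriple V v w s)
    [IsGalois F (IntermediateField.fixedField V)] :
    IsCubicGenerator (s.restrictNormal (IntermediateField.fixedField V)) :=
  isCubicGenerator_of_finrank_eq_three (by
    rw [IntermediateField.finrank_eq_fixingSubgroup_index,
      IntermediateField.fixingSubgroup_fixedField, h.index_eq]) h.restrictNormal_ne_one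

end IsKleinFourTriple

theorem IsKleinFourTriple.exists_sq_eq {E : Type*} [Field E] [Algebra ℚ_[2] E]
    [FiniteDimensional ℚ_[2] E] [IsGalois ℚ_[2] E] {V : Subgroup (E ≃ₐ[ℚ_[2]] E)}
    {v w s : E ≃ₐ[ℚ_[2]] E} (h : IsKleinFourTriple V v w s) :
    ∃ (β : IntermediateField.fixedField V) (d : E), β ^ 3 = 3 * β - 1 ∧ d ^ 2 = 2 * β - 3 := by
  have := h.normal
  have : CharZero E := charZero_of_injective_algebraMap (algebraMap ℚ_[2] E).injective
  set K := IntermediateField.fixedField V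
  set σ := s.restrictNormal K
  have hσ (x : K) : (σ x : E) = s x := s.restrictNormal_commutes K x
  obtain ⟨e, he, hve, hwe⟩ := h.exists_apply_eq_neg
  obtain ⟨hv₁, hw₁, hv₂, hw₂⟩ := h.apply_conjugate hve hwe
  let a : K := ⟨e ^ 2, h.mem_fixedField (by rw [map_pow, hve]) (by rw [map_pow, hwe, neg_sq])⟩
  let b : K := ⟨e * s e * s (s e), h.mem_fixedField (by simp [hve, hv₁, hv₂])
    (by simp [hwe, hw₁, hw₂])⟩
  have hb : σ b = b := Subtype.ext <| by
    have hs : s (s (s e)) = e := DFunLike.congr_fun h.cube e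
    simp only [hσ, b, map_mul, hs]
    ring
  have hab : a * σ a * σ (σ a) = b ^ 2 := Subtype.ext <| by
    simp only [MulMemClass.coe_mul, SubmonoidClass.coe_pow, hσ, a, b, map_pow]
    ring
  rcases h.isCubicGenerator.isSquare_or_exists_isSquare_mul h.restrictNormal_ne_one hb hab with
    ⟨κ, hκ⟩ | ⟨β, hβ, κ, hκ⟩
  · have hκ' : e ^ 2 = (κ : E) ^ 2 := by simpa [a, pow_two] using congrArg (algebraMap K E) hκ
    refine absurd ?_ (h.notMem_fixedField he hwe)
    rcases sq_eq_sq_iff_eq_or_eq_neg.mp hκ' with rfl | rfl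
    · exact κ.2
    · exact K.neg_mem κ.2
  · have hκ' : e ^ 2 * (2 * β - 3) = (κ : E) * κ := congrArg (algebraMap K E) hκ
    refine ⟨β, κ / e, hβ, ?_⟩
    field_simp
    linear_combination -hκ'

end AlternatingFourExtension

section SqrtTriple

variable {L : Type*} [Field L]

/-- `d₁`, `d₂`, `d₃` are square roots with product `1` of `2 * β - 3` for the three roots `β` of
`X ^ 3 - 3 * X + 1`. This is expressed through the elementary symmetric functions. -/
structure IsSqrtTriple (d₁ d₂ d₃ : L) : Prop where
  sum_sq : d₁ ^ 2 + d₂ ^ 2 + d₃ ^ 2 = -9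
  sum_mul_sq : d₁ ^ 2 * d₂ ^ 2 + d₂ ^ 2 * d₃ ^ 2 + d₃ ^ 2 * d₁ ^ 2 = 15
  mul_mul : d₁ * d₂ * d₃ = 1

theorem exists_isSqrtTriple_of_isSquare {β₁ β₂ β₃ : L} (hβ : β₁ ^ 3 = 3 * β₁ - 1)
    (hadd : β₂ + β₃ = -β₁) (hmul : β₂ * β₃ = β₁ ^ 2 - 3) (h₁ : IsSquare (2 * β₁ - 3))
    (h₂ : IsSquare (2 * β₂ - 3)) (h₃ : IsSquare (2 * β₃ - 3)) :
    ∃ d₁ d₂ d₃ : L, IsSqrtTriple d₁ d₂ d₃ := by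
  obtain ⟨d₁, hd₁⟩ := (isSquare_iff_exists_sq _).mp h₁
  obtain ⟨d₂, hd₂⟩ := (isSquare_iff_exists_sq _).mp h₂
  obtain ⟨d₃, hd₃⟩ := (isSquare_iff_exists_sq _).mp h₃
  have hsum : d₁ ^ 2 + d₂ ^ 2 + d₃ ^ 2 = -9 := by
    rw [← hd₁, ← hd₂, ← hd₃]
    linear_combination 2 * hadd
  have hsum' : d₁ ^ 2 * d₂ ^ 2 + d₂ ^ 2 * d₃ ^ 2 + d₃ ^ 2 * d₁ ^ 2 = 15 := by
    rw [← hd₁, ← hd₂, ← hd₃]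
    linear_combination (4 * β₁ - 12) * hadd + 4 * hmul
  have hprod : (d₁ * d₂ * d₃) ^ 2 = 1 := by
    rw [mul_pow, mul_pow, ← hd₁, ← hd₂, ← hd₃]
    linear_combination (18 - 12 * β₁) * hadd + (8 * β₁ - 12) * hmul + 8 * hβ
  rcases sq_eq_one_iff.mp hprod with h | h
  · exact ⟨d₁, d₂, d₃, hsum, hsum', h⟩
  · exact ⟨-d₁, -d₂, -d₃, by simpa only [neg_sq], by simpa only [neg_sq],
      by linear_combination -h⟩

namespace IsSqrtTriple

variable {d₁ d₂ d₃ : L}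

theorem rotate (h : IsSqrtTriple d₁ d₂ d₃) : IsSqrtTriple d₂ d₃ d₁ where
  sum_sq := by linear_combination h.sum_sq
  sum_mul_sq := by linear_combination h.sum_mul_sq
  mul_mul := by linear_combination h.mul_mul

theorem neg_neg (h : IsSqrtTriple d₁ d₂ d₃) : IsSqrtTriple d₁ (-d₂) (-d₃) where
  sum_sq := by linear_combination h.sum_sq
  sum_mul_sq := by linear_combination h.sum_mul_sq
  mul_mul := by linear_combination h.mul_mul

theorem sq_mul_sq_mul_sq (h : IsSqrtTriple d₁ d₂ d₃) : d₁ ^ 2 * d₂ ^ 2 * d₃ ^ 2 = 1 := by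
  rw [← mul_pow, ← mul_pow, h.mul_mul, one_pow]

theorem cube_eq [CharZero L] (h : IsSqrtTriple d₁ d₂ d₃) :
    ((d₁ ^ 2 + 3) / 2) ^ 3 = 3 * ((d₁ ^ 2 + 3) / 2) - 1 := by
  linear_combination d₁ ^ 4 / 8 * h.sum_sq - d₁ ^ 2 / 8 * h.sum_mul_sq + h.sq_mul_sq_mul_sq / 8

theorem sq_ne_sq [CharZero L] (h : IsSqrtTriple d₁ d₂ d₃) : d₁ ^ 2 ≠ d₂ ^ 2 := by
  intro heq
  have hprod := h.sq_mul_sq_mul_sq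
  rw [eq_sub_of_add_eq' h.sum_sq, ← heq] at hprod
  have hmul := h.sum_mul_sq
  rw [eq_sub_of_add_eq' h.sum_sq, ← heq] at hmul
  refine three_ne_zero (α := L) ?_
  linear_combination -(d₁ ^ 2 + 4) / 8 * hprod +
    ((2 * d₁ ^ 2 - 3) * (d₁ ^ 2 + 4) / 24 + 1 / 3) * hmul

end IsSqrtTriple

end SqrtTriple

section Quartic

/-- The Eisenstein quartic whose splitting field over `ℚ_2` has Galois group `A₄`. -/
noncomputable def eisensteinQuartic (R : Type*) [CommRing R] : R[X] :=
  X ^ 4 + C 2 * X ^ 3 + C 6 * X ^ 2 + C 4 * X + C 2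

theorem map_eisensteinQuartic {R S : Type*} [CommRing R] [CommRing S] (f : R →+* S) :
    (eisensteinQuartic R).map f = eisensteinQuartic S := by
  simp [eisensteinQuartic, map_ofNat]

theorem eval_eisensteinQuartic {R : Type*} [CommRing R] (x : R) :
    (eisensteinQuartic R).eval x = x ^ 4 + 2 * x ^ 3 + 6 * x ^ 2 + 4 * x + 2 := by
  simp [eisensteinQuartic]

theorem natDegree_eisensteinQuartic (R : Type*) [CommRing R] [Nontrivial R] :
    (eisensteinQuartic R).natDegree = 4 := by
  unfold eisensteinQuartic
  compute_degree!

theorem monic_eisensteinQuartic (R : Type*) [CommRing R] : (eisensteinQuartic R).Monic := by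
  nontriviality R
  unfold eisensteinQuartic
  monicity!

theorem isEisensteinAt_eisensteinQuartic {R : Type*} [CommRing R] [IsDomain R]
    (h2 : Prime (2 : R)) : (eisensteinQuartic R).IsEisensteinAt (Ideal.span {2}) where
  leading := by
    rw [(monic_eisensteinQuartic R).leadingCoeff, Ideal.mem_span_singleton]
    exact h2.not_dvd_one
  mem {n} hn := by
    rw [natDegree_eisensteinQuartic] at hn
    rw [Ideal.mem_span_singleton]
    interval_cases n
    · exact ⟨1, by simp [eisensteinQuartic, coeff_X_pow, coeff_C]⟩
    · exact ⟨2, by norm_num [eisensteinQuartic, coeff_X_pow, coeff_C]⟩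
    · exact ⟨3, by norm_num [eisensteinQuartic, coeff_X, coeff_X_pow]⟩
    · exact ⟨1, by simp [eisensteinQuartic, coeff_X_pow]⟩
  notMem := by
    rw [Ideal.span_singleton_pow, Ideal.mem_span_singleton, coeff_zero_eq_eval_zero,
      eval_eisensteinQuartic]
    rintro ⟨k, hk⟩
    refine h2.not_dvd_one ⟨k, mul_left_cancel₀ h2.ne_zero ?_⟩
    linear_combination hk

theorem irreducible_eisensteinQuartic : Irreducible (eisensteinQuartic ℚ_[2]) := by
  have h2 : Prime (2 : ℤ_[2]) := by exact_mod_cast PadicInt.prime_p (p := 2)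
  have hmon := monic_eisensteinQuartic ℤ_[2]
  rw [← map_eisensteinQuartic (algebraMap ℤ_[2] ℚ_[2]),
    ← hmon.irreducible_iff_irreducible_map_fraction_map]
  exact (isEisensteinAt_eisensteinQuartic h2).irreducible
    ((Ideal.span_singleton_prime h2.ne_zero).mpr h2) hmon.isPrimitive
    (by rw [natDegree_eisensteinQuartic]; norm_num)

theorem irreducible_cube_sub_three_mul_add_one : Irreducible (X ^ 3 - C 3 * X + 1 : ℚ_[2][X]) := by
  have hdeg : (X ^ 3 - C 3 * X + 1 : ℚ_[2][X]).natDegree = 3 := by compute_degree!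
  have hmon : (X ^ 3 - C 3 * X + 1 : ℚ_[2][X]).Monic := by monicity!
  rw [hmon.irreducible_iff_roots_eq_zero_of_degree_le_three (by omega) (by omega),
    Multiset.eq_zero_iff_forall_notMem]
  intro y hy
  rw [mem_roots hmon.ne_zero, IsRoot] at hy
  exact cube_sub_three_mul_add_one_ne_zero y (by simpa using hy)

theorem natDegree_dvd_finrank {F L : Type*} [Field F] [Field L] [Algebra F L]
    [FiniteDimensional F L] {f : F[X]} (hf : Irreducible f) {x : L} (hx : aeval x f = 0) :
    f.natDegree ∣ Module.finrank F L := by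
  have h := minpoly.degree_dvd (K := F) (IsIntegral.of_finite F x)
  rwa [← minpoly.eq_of_irreducible hf hx,
    natDegree_mul_C (inv_ne_zero (leadingCoeff_ne_zero.mpr hf.ne_zero))] at h

variable {L : Type*} [Field L] {d₁ d₂ d₃ : L}

/-- One of the four roots of `eisensteinQuartic` attached to an `IsSqrtTriple`; the other ones come
from changing two signs. -/
def quarticRoot (d₁ d₂ d₃ : L) : L := (d₁ + d₂ + d₃ - 1) / 2

theorem IsSqrtTriple.eval_eisensteinQuartic_eq [CharZero L] (h : IsSqrtTriple d₁ d₂ d₃) (x : L) :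
    (eisensteinQuartic L).eval x =
      (x - quarticRoot d₁ d₂ d₃) * (x - quarticRoot d₁ (-d₂) (-d₃)) *
        (x - quarticRoot (-d₁) d₂ (-d₃)) * (x - quarticRoot (-d₁) (-d₂) d₃) := by
  rw [eval_eisensteinQuartic]
  unfold quarticRoot
  linear_combination
    ((2 * x + 1) ^ 2 / 8 - (d₁ ^ 2 + d₂ ^ 2 + d₃ ^ 2) / 16 + 9 / 16) * h.sum_sq +
      h.sum_mul_sq / 4 + (2 * x + 1) / 2 * h.mul_mul

end Quartic

theorem IsKleinFourTriple.exists_isSqrtTriple {E : Type*} [Field E] [Algebra ℚ_[2] E]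
    [FiniteDimensional ℚ_[2] E] [IsGalois ℚ_[2] E] {V : Subgroup (E ≃ₐ[ℚ_[2]] E)}
    {v w s : E ≃ₐ[ℚ_[2]] E} (h : IsKleinFourTriple V v w s) :
    ∃ d₁ d₂ d₃ : E, IsSqrtTriple d₁ d₂ d₃ := by
  have := h.normal
  obtain ⟨β, d, hβ, hd⟩ := h.exists_sq_eq
  have hs (x : IntermediateField.fixedField V) :
      (s.restrictNormal (IntermediateField.fixedField V) x : E) = s x :=
    s.restrictNormal_commutes _ x
  obtain ⟨hadd, hmul⟩ := h.isCubicGenerator.add_apply_root_and_mul_apply_root hβ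
  have hd' : s d ^ 2 = 2 * s β - 3 := by simpa [map_ofNat] using congrArg s hd
  have hd'' : s (s d) ^ 2 = 2 * s (s β) - 3 := by simpa [map_ofNat] using congrArg s hd'
  refine exists_isSqrtTriple_of_isSquare (β₁ := (β : E)) (β₂ := s β) (β₃ := s (s β)) ?_ ?_ ?_
    ⟨d, by rw [← hd, sq]⟩ ⟨s d, by rw [← hd', sq]⟩ ⟨s (s d), by rw [← hd'', sq]⟩
  · exact congrArg Subtype.val hβ
  · simpa [hs] using congrArg Subtype.val hadd
  · rw [← hs, ← hs]
    exact congrArg Subtype.val hmul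

section SplittingField

variable {L : Type*} [Field L] {d₁ d₂ d₃ : L}

theorem IsSqrtTriple.eval_quarticRoot [CharZero L] (h : IsSqrtTriple d₁ d₂ d₃) :
    (eisensteinQuartic L).eval (quarticRoot d₁ d₂ d₃) = 0 := by
  rw [h.eval_eisensteinQuartic_eq, sub_self, zero_mul, zero_mul, zero_mul]

theorem IsSqrtTriple.splits [CharZero L] (h : IsSqrtTriple d₁ d₂ d₃) :
    (eisensteinQuartic L).Splits := by
  have : eisensteinQuartic L =
      (X - C (quarticRoot d₁ d₂ d₃)) * (X - C (quarticRoot d₁ (-d₂) (-d₃))) *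
        (X - C (quarticRoot (-d₁) d₂ (-d₃))) * (X - C (quarticRoot (-d₁) (-d₂) d₃)) :=
    funext fun x => by
      simp only [h.eval_eisensteinQuartic_eq, eval_mul, eval_sub, eval_X, eval_C]
  rw [this]
  exact (((Splits.X_sub_C _).mul (.X_sub_C _)).mul (.X_sub_C _)).mul (.X_sub_C _)

theorem exists_isSqrtTriple_of_splits [CharZero L] (h : (eisensteinQuartic L).Splits) :
    ∃ d₁ d₂ d₃ : L, IsSqrtTriple d₁ d₂ d₃ := by
  obtain ⟨a, b, c, d, hroots⟩ := Multiset.card_eq_four.mp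
    (h.natDegree_eq_card_roots.symm.trans (natDegree_eisensteinQuartic L))
  have heval (x : L) :
      x ^ 4 + 2 * x ^ 3 + 6 * x ^ 2 + 4 * x + 2 = (x - a) * (x - b) * (x - c) * (x - d) := by
    rw [← eval_eisensteinQuartic, h.eval_eq_prod_roots_of_monic (monic_eisensteinQuartic L), hroots]
    simp [mul_assoc]
  have e₁ : a + b + c + d = -2 := by
    linear_combination (3 * heval 0 - 3 * heval 1 - heval (-1) + heval 2) / 6
  have e₂ : a * b + a * c + a * d + b * c + b * d + c * d = 6 := by
    linear_combination (2 * heval 0 - heval 1 - heval (-1)) / 2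
  have e₃ : a * b * c + a * b * d + a * c * d + b * c * d = -4 := by
    linear_combination (-3 * heval 0 + 6 * heval 1 - 2 * heval (-1) - heval 2) / 6
  have e₄ : a * b * c * d = 2 := by linear_combination -heval 0
  obtain rfl : d = -2 - a - b - c := by linear_combination e₁
  refine ⟨a + b + 1, a + c + 1, -1 - b - c, ?_, ?_, ?_⟩
  · linear_combination -2 * e₂
  · linear_combination
      (a * b + a * c + b * c + (a + b + c) * (-2 - a - b - c) + 2) * e₂ - 2 * e₃ - 4 * e₄
  · linear_combination e₃ + e₂

theorem IsSqrtTriple.three_dvd_finrank [Algebra ℚ_[2] L] [FiniteDimensional ℚ_[2] L]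
    (h : IsSqrtTriple d₁ d₂ d₃) : 3 ∣ Module.finrank ℚ_[2] L := by
  have : CharZero L := charZero_of_injective_algebraMap (algebraMap ℚ_[2] L).injective
  have hdeg : (X ^ 3 - C 3 * X + 1 : ℚ_[2][X]).natDegree = 3 := by compute_degree!
  rw [← hdeg]
  refine natDegree_dvd_finrank irreducible_cube_sub_three_mul_add_one
    (x := (d₁ ^ 2 + 3) / 2) ?_
  simp only [map_add, map_sub, map_mul, map_pow, aeval_X, map_ofNat, map_one]
  linear_combination h.cube_eq

theorem IsSqrtTriple.four_dvd_finrank [Algebra ℚ_[2] L] [FiniteDimensional ℚ_[2] L]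
    (h : IsSqrtTriple d₁ d₂ d₃) : 4 ∣ Module.finrank ℚ_[2] L := by
  have : CharZero L := charZero_of_injective_algebraMap (algebraMap ℚ_[2] L).injective
  rw [← natDegree_eisensteinQuartic ℚ_[2]]
  refine natDegree_dvd_finrank irreducible_eisensteinQuartic (x := quarticRoot d₁ d₂ d₃) ?_
  rw [← eval_map_algebraMap, map_eisensteinQuartic, h.eval_quarticRoot]

/- The hypotheses say that `φ` acts as a transposition on the roots of the quartic. Such a `φ` fixes
`d₁`, hence `d₂ ^ 2`, which lies in `ℚ_2(d₁ ^ 2)`; but it maps `d₂` to `-d₃`. -/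
theorem IsSqrtTriple.apply_quarticRoot_ne [CharZero L] (h : IsSqrtTriple d₁ d₂ d₃) (φ : L →+* L)
    (h₁ : φ (quarticRoot d₁ d₂ d₃) = quarticRoot d₁ (-d₂) (-d₃))
    (h₂ : φ (quarticRoot d₁ (-d₂) (-d₃)) = quarticRoot d₁ d₂ d₃) :
    φ (quarticRoot (-d₁) d₂ (-d₃)) ≠ quarticRoot (-d₁) d₂ (-d₃) := by
  intro h₃
  simp only [quarticRoot, map_div₀, map_sub, map_add, map_neg, map_one, map_ofNat] at h₁ h₂ h₃
  have hd₁ : φ d₁ = d₁ := by linear_combination h₁ + h₂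
  have hd₂ : φ d₂ = -d₃ := by linear_combination h₁ + h₃
  have hfix := apply_eq_of_cube_eq φ h.cube_eq h.rotate.cube_eq (by
    simp only [map_div₀, map_add, map_pow, map_ofNat, hd₁])
  simp only [map_div₀, map_add, map_pow, map_ofNat, hd₂] at hfix
  exact h.rotate.sq_ne_sq (by linear_combination -2 * hfix)

theorem eq_alternatingGroup_of_ne_top {α : Type*} [Fintype α] [DecidableEq α] [Nontrivial α]
    {H : Subgroup (Equiv.Perm α)} (hH : H ≠ ⊤)
    (hcard : Nat.card (alternatingGroup α) ∣ Nat.card H) : H = alternatingGroup α := by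
  apply Equiv.Perm.eq_alternatingGroup_of_index_eq_two
  obtain ⟨k, hk⟩ := hcard
  have hmul := H.card_mul_index
  rw [hk, ← two_mul_nat_card_alternatingGroup, mul_assoc, mul_comm 2] at hmul
  have hdvd : H.index ∣ 2 := ⟨k, by rw [mul_comm, Nat.eq_of_mul_eq_mul_left Nat.card_pos hmul]⟩
  exact ((Nat.dvd_prime Nat.prime_two).mp hdvd).resolve_left (mt Subgroup.index_eq_one.mp hH)

theorem range_galActionHom_ne_top {Ω : Type*} [Field Ω] [Algebra ℚ_[2] Ω] [Normal ℚ_[2] Ω]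
    [Fact ((eisensteinQuartic ℚ_[2]).map (algebraMap ℚ_[2] Ω)).Splits] :
    (Gal.galActionHom (eisensteinQuartic ℚ_[2]) Ω).range ≠ ⊤ := by
  classical
  have : CharZero Ω := charZero_of_injective_algebraMap (algebraMap ℚ_[2] Ω).injective
  intro htop
  have hsplits : (eisensteinQuartic Ω).Splits :=
    map_eisensteinQuartic (algebraMap ℚ_[2] Ω) ▸ Fact.out
  obtain ⟨d₁, d₂, d₃, h⟩ := exists_isSqrtTriple_of_splits hsplits
  have hroot {d₁ d₂ d₃ : Ω} (h : IsSqrtTriple d₁ d₂ d₃) :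
      quarticRoot d₁ d₂ d₃ ∈ (eisensteinQuartic ℚ_[2]).rootSet Ω := by
    rw [mem_rootSet_of_ne (monic_eisensteinQuartic _).ne_zero, ← eval_map_algebraMap,
      map_eisensteinQuartic, h.eval_quarticRoot]
  let x₁ : (eisensteinQuartic ℚ_[2]).rootSet Ω := ⟨_, hroot h⟩
  let x₂ : (eisensteinQuartic ℚ_[2]).rootSet Ω := ⟨_, hroot h.neg_neg⟩
  let x₃ : (eisensteinQuartic ℚ_[2]).rootSet Ω := ⟨_, hroot h.rotate.neg_neg.rotate.rotate⟩
  obtain ⟨g, hg⟩ : Equiv.swap x₁ x₂ ∈ (Gal.galActionHom (eisensteinQuartic ℚ_[2]) Ω).range :=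
    htop ▸ Subgroup.mem_top _
  obtain ⟨φ, rfl⟩ := Gal.restrict_surjective (eisensteinQuartic ℚ_[2]) Ω g
  have hφ (x : (eisensteinQuartic ℚ_[2]).rootSet Ω) : φ x = (Equiv.swap x₁ x₂ x : Ω) := by
    rw [← hg, Gal.galActionHom_restrict]
  have h₃₁ : x₃ ≠ x₁ := fun heq => h.rotate.rotate.sq_ne_sq <| by
    have := congrArg Subtype.val heq
    simp only [x₁, x₃, quarticRoot] at this
    linear_combination (d₁ - d₃) * this
  have h₃₂ : x₃ ≠ x₂ := fun heq => h.sq_ne_sq <| by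
    have := congrArg Subtype.val heq
    simp only [x₂, x₃, quarticRoot] at this
    linear_combination -(d₁ + d₂) * this
  refine h.apply_quarticRoot_ne φ ?_ ?_ ?_
  · simpa using hφ x₁
  · simpa using hφ x₂
  · exact (hφ x₃).trans (congrArg Subtype.val (Equiv.swap_apply_of_ne_of_ne h₃₁ h₃₂))

theorem twelve_dvd_card_gal : 12 ∣ Nat.card (eisensteinQuartic ℚ_[2]).Gal := by
  rw [Gal.card_of_separable irreducible_eisensteinQuartic.separable]
  obtain ⟨d₁, d₂, d₃, h⟩ := exists_isSqrtTriple_of_splits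
    (L := (eisensteinQuartic ℚ_[2]).SplittingField)
    (map_eisensteinQuartic (algebraMap ℚ_[2] (eisensteinQuartic ℚ_[2]).SplittingField) ▸
      SplittingField.splits _)
  exact Nat.Coprime.mul_dvd_of_dvd_of_dvd (by norm_num) h.three_dvd_finrank h.four_dvd_finrank

theorem nonempty_gal_eisensteinQuartic_mulEquiv :
    Nonempty ((eisensteinQuartic ℚ_[2]).Gal ≃* alternatingGroup (Fin 4)) := by
  classical
  set Ω := AlgebraicClosure ℚ_[2]
  have : Fact ((eisensteinQuartic ℚ_[2]).map (algebraMap ℚ_[2] Ω)).Splits := ⟨IsAlgClosed.splits _⟩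
  have hcard : Fintype.card ((eisensteinQuartic ℚ_[2]).rootSet Ω) = 4 := by
    rw [card_rootSet_eq_natDegree irreducible_eisensteinQuartic.separable Fact.out,
      natDegree_eisensteinQuartic]
  have e := Fintype.equivFinOfCardEq hcard
  have : Nontrivial ((eisensteinQuartic ℚ_[2]).rootSet Ω) := e.nontrivial
  let ψ := MonoidHom.ofInjective (Gal.galActionHom_injective (eisensteinQuartic ℚ_[2]) Ω)
  have hrange := eq_alternatingGroup_of_ne_top
    (range_galActionHom_ne_top (Ω := Ω)) (by
      rw [nat_card_alternatingGroup, Nat.card_eq_fintype_card, hcard, ← Nat.card_congr ψ.toEquiv]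
      exact twelve_dvd_card_gal)
  exact ⟨(ψ.trans (MulEquiv.subgroupCongr hrange)).trans e.altCongrHom⟩

end SplittingField

section Uniqueness

variable (Ω : Type*) [Field Ω] [Algebra ℚ_[2] Ω] [IsAlgClosed Ω]

theorem isSplittingField_adjoin_rootSet :
    (eisensteinQuartic ℚ_[2]).IsSplittingField ℚ_[2]
      (IntermediateField.adjoin ℚ_[2] ((eisensteinQuartic ℚ_[2]).rootSet Ω)) :=
  IntermediateField.adjoin_rootSet_isSplittingField (IsAlgClosed.splits _)

variable {Ω}

theorem adjoin_rootSet_le (E : IntermediateField ℚ_[2] Ω) [FiniteDimensional ℚ_[2] E]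
    [IsGalois ℚ_[2] E] (φ : (E ≃ₐ[ℚ_[2]] E) ≃* alternatingGroup (Fin 4)) :
    IntermediateField.adjoin ℚ_[2] ((eisensteinQuartic ℚ_[2]).rootSet Ω) ≤ E := by
  have : CharZero E := charZero_of_injective_algebraMap (algebraMap ℚ_[2] E).injective
  obtain ⟨V, v, w, s, h⟩ := exists_isKleinFourTriple_alternatingGroup
  obtain ⟨d₁, d₂, d₃, hd⟩ := (h.comap φ).exists_isSqrtTriple
  rw [IntermediateField.adjoin_le_iff]
  refine (IntermediateField.splits_iff_mem (IsAlgClosed.splits _)).mp ?_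
  rw [map_eisensteinQuartic]
  exact hd.splits

end Uniqueness
end DyadicA4

open DyadicA4 Polynomial in
theorem stmt_14_general (Ω : Type*) [Field Ω] [Algebra ℚ_[2] Ω] [IsAlgClosed Ω] :
    ∃! E : IntermediateField ℚ_[2] Ω, FiniteDimensional ℚ_[2] ↥E ∧ IsGalois ℚ_[2] ↥E ∧
      Nonempty ((↥E ≃ₐ[ℚ_[2]] ↥E) ≃* alternatingGroup (Fin 4)) := by
  set f := eisensteinQuartic ℚ_[2]
  set E₀ := IntermediateField.adjoin ℚ_[2] (f.rootSet Ω)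
  have hsplit : f.IsSplittingField ℚ_[2] E₀ := isSplittingField_adjoin_rootSet Ω
  have hfin : FiniteDimensional ℚ_[2] E₀ := IsSplittingField.finiteDimensional E₀ f
  have hgal : IsGalois ℚ_[2] E₀ :=
    .of_separable_splitting_field irreducible_eisensteinQuartic.separable
  obtain ⟨φ⟩ := nonempty_gal_eisensteinQuartic_mulEquiv
  let φ₀ : (E₀ ≃ₐ[ℚ_[2]] E₀) ≃* alternatingGroup (Fin 4) :=
    (AlgEquiv.autCongr (IsSplittingField.algEquiv E₀ f)).trans φ
  refine ⟨E₀, ⟨hfin, hgal, ⟨φ₀⟩⟩, ?_⟩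
  rintro E ⟨_, _, ⟨φ⟩⟩
  refine (IntermediateField.eq_of_le_of_finrank_eq (adjoin_rootSet_le E φ) ?_).symm
  rw [← IsGalois.card_aut_eq_finrank, ← IsGalois.card_aut_eq_finrank,
    Nat.card_congr φ₀.toEquiv, Nat.card_congr φ.toEquiv]

/-- There is exactly one finite Galois extension of `ℚ_2` inside a fixed algebraic
closure `Ω` whose Galois group is isomorphic to the alternating group `A₄`. -/
theorem stmt_14 (Ω : Type) [Field Ω] [Algebra ℚ_[2] Ω] [IsAlgClosure ℚ_[2] Ω] :
    ∃! E : IntermediateField ℚ_[2] Ω, FiniteDimensional ℚ_[2] ↥E ∧ IsGalois ℚ_[2] ↥E ∧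
      Nonempty ((↥E ≃ₐ[ℚ_[2]] ↥E) ≃* alternatingGroup (Fin 4)) := by
  have : IsAlgClosed Ω := IsAlgClosure.isAlgClosed ℚ_[2]
  exact stmt_14_general Ω
end
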